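/- arXiv:math/0605002 — 4 statements merged into one kernel-verified Lean document; each statement's English description precedes it below -/
import Mathlib

section
/- There exist constants c, C > 0 (independent of the dimension) such that for every n ≥ 2, every point p on the unit sphere of ℝⁿ, and every δ ∈ (0,1], the spherical cap A_δ := {y ∈ Y : ‖y − p‖ ≤ δ} satisfies c·δ^{1/3} ≤ ω_∞(A_δ) ≤ C·δ^{1/3}, where ω_∞ denotes the ∞-harmonic measure from the center 0 of the unit ball. -/
open Metric Set

noncomputable section

/-- Euclidean space `ℝⁿ`. -/
abbrev Euc (n : ℕ) := EuclideanSpace ℝ (Fin n)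

/-- The (possibly infinite) Lipschitz constant of `u` on `S`:
`Lip_S u = sup {|u x - u y| / ‖x - y‖ : x, y ∈ S, x ≠ y}`. -/
def lipOn {X : Type*} [MetricSpace X] (u : X → ℝ) (S : Set X) : ENNReal :=
  ⨆ (x : X) (_ : x ∈ S) (y : X) (_ : y ∈ S) (_ : x ≠ y),
    ENNReal.ofReal (|u x - u y| / dist x y)

/-- The `∞`-harmonic measure of `A` from the center `0` of the closed unit ball
`X` of `ℝⁿ` (with `Y = ∂X` the unit sphere): the infimum of `u 0` over nonnegative
functions `u` that are Lipschitz on `X`, absolutely minimal on `X \ Y` (i.e.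
`Lip_V u = Lip_{∂V} u` for every open `V` contained in the open unit ball), and
satisfy `u ≥ 1` on `A`. -/
def omegaInf (n : ℕ) (A : Set (Euc n)) : ℝ :=
  sInf {t : ℝ | ∃ u : Euc n → ℝ,
    (∀ x ∈ closedBall (0 : Euc n) 1, 0 ≤ u x) ∧
    (∃ K : NNReal, LipschitzOnWith K u (closedBall (0 : Euc n) 1)) ∧
    (∀ V : Set (Euc n), IsOpen V → V ⊆ ball (0 : Euc n) 1 →
      lipOn u V = lipOn u (frontier V)) ∧
    (∀ x ∈ A, 1 ≤ u x) ∧ t = u 0}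

/-- Absolutely minimal, in terms of `LipschitzOnWith`. -/
def AMb {n : ℕ} (u : Euc n → ℝ) : Prop :=
  ∀ V : Set (Euc n), IsOpen V → V ⊆ ball (0 : Euc n) 1 → ∀ L : NNReal,
    LipschitzOnWith L u (frontier V) → LipschitzOnWith L u V

lemma lipOn_le_iff {X : Type*} [MetricSpace X] (u : X → ℝ) (S : Set X) (L : NNReal) :
    lipOn u S ≤ L ↔ LipschitzOnWith L u S := by
  rw [lipschitzOnWith_iff_dist_le_mul]
  unfold lipOn
  simp only [iSup_le_iff]
  constructor
  · intro h x hx y hy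
    by_cases hxy : x = y
    · subst hxy; simp
    · have h1 := h x hx y hy hxy
      have h2 : |u x - u y| / dist x y ≤ L := by
        have := ENNReal.toReal_mono (by simp) h1
        rwa [ENNReal.toReal_ofReal (by positivity), ENNReal.coe_toReal] at this
      rw [div_le_iff₀ (dist_pos.2 hxy)] at h2
      rwa [Real.dist_eq]
  · intro h x hx y hy hxy
    have h1 := h x hx y hy
    rw [Real.dist_eq, ← div_le_iff₀ (dist_pos.2 hxy)] at h1
    calc ENNReal.ofReal (|u x - u y| / dist x y) ≤ ENNReal.ofReal (L : ℝ) :=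
          ENNReal.ofReal_le_ofReal h1
      _ = L := ENNReal.ofReal_coe_nnreal

lemma closure_sub_cb {n : ℕ} {V : Set (Euc n)} (h : V ⊆ ball (0 : Euc n) 1) :
    closure V ⊆ closedBall 0 1 :=
  closure_minimal (h.trans ball_subset_closedBall) isClosed_closedBall

lemma AMb_of_lipOn {n : ℕ} {u : Euc n → ℝ}
    (h : ∀ V : Set (Euc n), IsOpen V → V ⊆ ball (0 : Euc n) 1 →
      lipOn u V = lipOn u (frontier V)) : AMb u := by
  intro V hV hVb L hL
  rw [← lipOn_le_iff, h V hV hVb, lipOn_le_iff]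
  exact hL

lemma lipOn_of_AMb {n : ℕ} {u : Euc n → ℝ} (hc : ContinuousOn u (closedBall (0 : Euc n) 1))
    (h : AMb u) (V : Set (Euc n)) (hV : IsOpen V) (hVb : V ⊆ ball (0 : Euc n) 1) :
      lipOn u V = lipOn u (frontier V) := by
  apply le_antisymm
  · by_cases ht : lipOn u (frontier V) = ⊤
    · rw [ht]; exact le_top
    · lift lipOn u (frontier V) to NNReal using ht with L hL
      rw [lipOn_le_iff]
      apply h V hV hVb
      rw [← lipOn_le_iff, hL]
  · by_cases ht : lipOn u V = ⊤
    · rw [ht]; exact le_top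
    · lift lipOn u V to NNReal using ht with L hL
      rw [lipOn_le_iff]
      have h1 : LipschitzOnWith L u V := by rw [← lipOn_le_iff, hL]
      exact (LipschitzOnWith.closure (hc.mono (closure_sub_cb hVb)) h1).mono
        frontier_subset_closure

lemma AMb.congr {n : ℕ} {u v : Euc n → ℝ} (h : AMb u) (huv : EqOn u v (closedBall 0 1)) :
    AMb v := by
  intro V hV hVb L hL
  have hc := closure_sub_cb hVb
  have h1 : LipschitzOnWith L u (frontier V) := by
    intro x hx y hy
    rw [huv (hc (frontier_subset_closure hx)), huv (hc (frontier_subset_closure hy))]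
    exact hL hx hy
  intro x hx y hy
  rw [← huv (hc (subset_closure hx)), ← huv (hc (subset_closure hy))]
  exact h V hV hVb L h1 hx hy

lemma lip_affine {X : Type*} [MetricSpace X] {u : X → ℝ} {S : Set X} {L : NNReal} (c d : ℝ)
    (h : LipschitzOnWith L u S) : LipschitzOnWith (‖c‖₊ * L) (fun x => c * u x + d) S := by
  rw [lipschitzOnWith_iff_dist_le_mul] at *
  intro x hx y hy
  have := h x hx y hy
  rw [Real.dist_eq] at *
  have e : c * u x + d - (c * u y + d) = c * (u x - u y) := by ring
  rw [e, abs_mul]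
  push_cast
  rw [mul_assoc, Real.norm_eq_abs]
  gcongr

lemma AMb.affine {n : ℕ} {u : Euc n → ℝ} (h : AMb u) (c d : ℝ) (hc : c ≠ 0) :
    AMb (fun x => c * u x + d) := by
  intro V hV hVb L hL
  have h1 := lip_affine c⁻¹ (-(c⁻¹ * d)) hL
  have e : (fun x => c⁻¹ * (c * u x + d) + -(c⁻¹ * d)) = u := by
    funext x; field_simp; ring
  rw [e] at h1
  have h2 := lip_affine c d (h V hV hVb _ h1)
  have e2 : ‖c‖₊ * (‖c⁻¹‖₊ * L) = L := by
    rw [← mul_assoc, ← nnnorm_mul, mul_inv_cancel₀ hc]; simp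
  rwa [e2] at h2

lemma AMb.neg {n : ℕ} {u : Euc n → ℝ} (h : AMb u) : AMb (fun x => - u x) := by
  have := h.affine (-1) 0 (by norm_num)
  simpa using this

/-- A path starting in an open set and ending outside meets the frontier. -/
lemma exit_path {X : Type*} [TopologicalSpace X] {V : Set X} (hV : IsOpen V) (γ : ℝ → X)
    (hγ : ContinuousOn γ (Icc 0 1)) (h0 : γ 0 ∈ V) (h1 : γ 1 ∉ V) :
    ∃ t ∈ Icc (0:ℝ) 1, γ t ∈ frontier V := by
  by_contra! hcon
  have hp : IsPreconnected (γ '' Icc 0 1) := isPreconnected_Icc.image _ hγ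
  have h := hp V (closure V)ᶜ hV isClosed_closure.isOpen_compl (by
    rintro _ ⟨t, ht, rfl⟩
    by_cases hh : γ t ∈ V
    · exact Or.inl hh
    · right
      intro hcl
      apply hcon t ht
      rw [hV.frontier_eq]
      exact ⟨hcl, hh⟩) ⟨γ 0, ⟨0, by simp, rfl⟩, h0⟩ ⟨γ 1, ⟨1, by simp, rfl⟩, by
        intro hcl
        apply hcon 1 (by simp)
        rw [hV.frontier_eq]
        exact ⟨hcl, h1⟩⟩
  obtain ⟨x, _, hx1, hx2⟩ := h
  exact hx2 (subset_closure hx1)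

/-- Comparison with cones from below. -/
lemma ccb {n : ℕ} {u : Euc n → ℝ} (hu : Continuous u) (hA : AMb u) {V : Set (Euc n)}
    (hV : IsOpen V) (hVb : V ⊆ ball (0 : Euc n) 1) {z : Euc n} (hz : z ∉ V) {c L : ℝ} (hL : 0 ≤ L)
    (hb : ∀ x ∈ frontier V, c - L * dist x z ≤ u x) : ∀ x ∈ V, c - L * dist x z ≤ u x := by
  by_contra! hcon
  obtain ⟨x0, hx0, hlt⟩ := hcon
  have hcont : Continuous (fun x => c - L * dist x z) := by fun_prop
  set W := V ∩ {x | u x < c - L * dist x z} with hW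
  have hWo : IsOpen W := hV.inter (isOpen_lt hu hcont)
  have hfr : ∀ x ∈ frontier W, u x = c - L * dist x z := by
    intro x hx
    rw [hWo.frontier_eq] at hx
    have hle : u x ≤ c - L * dist x z := by
      have : closure W ⊆ {x | u x ≤ c - L * dist x z} :=
        closure_minimal (fun y hy => le_of_lt (show u y < c - L * dist y z from hy.2)) (isClosed_le hu hcont)
      exact this hx.1
    apply le_antisymm hle
    by_cases hxV : x ∈ V
    · by_contra! h
      exact hx.2 ⟨hxV, h⟩
    · apply hb
      rw [hV.frontier_eq]
      exact ⟨closure_mono inter_subset_left hx.1, hxV⟩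
  have hLip : LipschitzOnWith (Real.toNNReal L) u (frontier W) := by
    rw [lipschitzOnWith_iff_dist_le_mul]
    intro x hx y hy
    rw [hfr x hx, hfr y hy, Real.dist_eq, Real.coe_toNNReal _ hL]
    have e : c - L * dist x z - (c - L * dist y z) = L * (dist y z - dist x z) := by ring
    rw [e, abs_mul, abs_of_nonneg hL]
    gcongr
    have := abs_dist_sub_le y x z
    rwa [dist_comm y x] at this
  have h2 := LipschitzOnWith.closure hu.continuousOn
    (hA W hWo (inter_subset_left.trans hVb) _ hLip)
  have hx0W : x0 ∈ W := ⟨hx0, hlt⟩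
  obtain ⟨t, ht, hw⟩ := exit_path hWo (fun t : ℝ => AffineMap.lineMap x0 z t)
    (by apply Continuous.continuousOn; exact AffineMap.lineMap_continuous)
    (by simpa using hx0W) (by simpa using fun h : z ∈ W => hz h.1)
  have h3 := h2.dist_le_mul x0 (subset_closure hx0W) _ (frontier_subset_closure hw)
  set w : Euc n := AffineMap.lineMap x0 z t with hwdef
  rw [Real.dist_eq, Real.coe_toNNReal _ hL, hfr w hw] at h3
  have h4 : dist x0 w + dist w z = dist x0 z := by
    rw [hwdef, dist_left_lineMap, dist_lineMap_right, Real.norm_eq_abs, Real.norm_eq_abs,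
      abs_of_nonneg ht.1, abs_of_nonneg (by linarith [ht.2])]
    ring
  have h5 := neg_abs_le (u x0 - (c - L * dist w z))
  have : L * dist x0 z = L * dist x0 w + L * dist w z := by rw [← h4]; ring
  linarith

lemma ccb_ball {n : ℕ} {u : Euc n → ℝ} (hu : Continuous u) (hA : AMb u) {x : Euc n} {r m : ℝ}
    (hr : 0 < r) (hb : ball x r ⊆ ball (0 : Euc n) 1) (hm : ∀ y ∈ closedBall x r, m ≤ u y)
    {y : Euc n} (hy : y ∈ closedBall x r) : u x - (u x - m) / r * dist y x ≤ u y := by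
  have hmx : m ≤ u x := hm x (mem_closedBall_self hr.le)
  have hsph : ∀ y, dist y x = r → u x - (u x - m) / r * dist y x ≤ u y := by
    intro y hy
    rw [hy, div_mul_cancel₀ _ hr.ne']
    have := hm y (by rw [mem_closedBall, hy])
    linarith
  rcases eq_or_lt_of_le (mem_closedBall.1 hy) with h | h
  · exact hsph y h
  by_cases hyx : y = x
  · subst hyx; simp
  apply ccb hu hA (V := ball x r \ {x}) (z := x) (isOpen_ball.sdiff isClosed_singleton)
    (sdiff_subset.trans hb) (by simp) (div_nonneg (by linarith) hr.le) _ y ⟨h, hyx⟩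
  intro w hw
  rw [(isOpen_ball.sdiff isClosed_singleton).frontier_eq] at hw
  by_cases hwx : w = x
  · subst hwx; simp
  have h1 : w ∈ closedBall x r := closure_minimal (sdiff_subset.trans ball_subset_closedBall)
    isClosed_closedBall hw.1
  apply hsph
  apply le_antisymm h1
  by_contra! h2
  exact hw.2 ⟨h2, hwx⟩

lemma cca_ball {n : ℕ} {u : Euc n → ℝ} (hu : Continuous u) (hA : AMb u) {x : Euc n} {r m : ℝ}
    (hr : 0 < r) (hb : ball x r ⊆ ball (0 : Euc n) 1) (hm : ∀ y ∈ closedBall x r, u y ≤ m)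
    {y : Euc n} (hy : y ∈ closedBall x r) : u y ≤ u x + (m - u x) / r * dist y x := by
  have := ccb_ball hu.neg hA.neg (m := -m) hr hb (fun y hy => neg_le_neg (hm y hy)) hy
  have e : (-u x - -m) / r * dist y x = (m - u x) / r * dist y x := by ring
  simp only [Pi.neg_apply] at this
  linarith

/-- Maximum over a closed ball. -/
def supB {n : ℕ} (F : Euc n → ℝ) (ε : ℝ) (x : Euc n) : ℝ := sSup (F '' closedBall x ε)

lemma supB_spec {n : ℕ} {F : Euc n → ℝ} (hF : Continuous F) {ε : ℝ} (hε : 0 ≤ ε) (x : Euc n) :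
    (∃ y ∈ closedBall x ε, F y = supB F ε x) ∧ ∀ y ∈ closedBall x ε, F y ≤ supB F ε x := by
  have hc : IsCompact (F '' closedBall x ε) := (isCompact_closedBall x ε).image hF
  have hne : (F '' closedBall x ε).Nonempty := ⟨F x, x, mem_closedBall_self hε, rfl⟩
  constructor
  · obtain ⟨y, hy, hyy⟩ := hc.sSup_mem hne
    exact ⟨y, hy, hyy⟩
  · intro y hy
    exact le_csSup hc.bddAbove ⟨y, hy, rfl⟩

lemma supB_lip {n : ℕ} {F : Euc n → ℝ} {K : NNReal} (hF : LipschitzWith K F) {ε : ℝ}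
    (hε : 0 ≤ ε) : LipschitzWith K (supB F ε) := by
  apply LipschitzWith.of_le_add_mul
  intro x y
  obtain ⟨⟨z, hz, hzz⟩, -⟩ := supB_spec hF.continuous hε x
  rw [← hzz]
  have h1 := (supB_spec hF.continuous hε y).2 (z - x + y) (by
    rw [mem_closedBall, dist_eq_norm] at *
    simpa using hz)
  have h2 := hF.dist_le_mul z (z - x + y)
  have e : dist z (z - x + y) = dist x y := by
    rw [dist_eq_norm, dist_eq_norm]; congr 1; abel
  rw [e, Real.dist_eq] at h2
  have := le_abs_self (F z - F (z - x + y))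
  linarith

lemma supB_sub {n : ℕ} {F : Euc n → ℝ} (hF : Continuous F) (hA : AMb F) {ε : ℝ} (hε : 0 < ε)
    {x : Euc n} (hx : closedBall x (2 * ε) ⊆ ball 0 1) :
    ∃ z ∈ closedBall x ε, ∀ y ∈ closedBall x ε, 2 * supB F ε x ≤ supB F ε z + supB F ε y := by
  obtain ⟨⟨z, hz, hzz⟩, hmax⟩ := supB_spec hF (by positivity : (0:ℝ) ≤ 2 * ε) x
  obtain ⟨⟨w, hw, hww⟩, -⟩ := supB_spec hF hε.le x
  refine ⟨midpoint ℝ x z, ?_, ?_⟩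
  · rw [mem_closedBall] at *
    rw [dist_midpoint_left, dist_comm x z]
    simp
    linarith
  · intro y hy
    have h1 : F z ≤ supB F ε (midpoint ℝ x z) := by
      apply (supB_spec hF hε.le _).2
      rw [mem_closedBall] at *
      rw [dist_comm, dist_midpoint_right, dist_comm x z]
      simp
      linarith
    have h2 : F x ≤ supB F ε y := by
      apply (supB_spec hF hε.le _).2
      rw [mem_closedBall] at *
      rwa [dist_comm]
    have h3 := cca_ball hF hA (by positivity : (0:ℝ) < 2 * ε)
      (ball_subset_closedBall.trans hx) hmax (y := w) (closedBall_subset_closedBall (by linarith) hw)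
    rw [← hzz, hww] at h3
    have h4 : F x ≤ F z := by
      rw [hzz]; exact hmax x (mem_closedBall_self (by positivity))
    have h5 : (F z - F x) / (2 * ε) * dist w x ≤ (F z - F x) / 2 := by
      rw [mem_closedBall] at hw
      calc (F z - F x) / (2 * ε) * dist w x ≤ (F z - F x) / (2 * ε) * ε := by
            apply mul_le_mul_of_nonneg_left hw
            apply div_nonneg (by linarith) (by positivity)
        _ = (F z - F x) / 2 := by field_simp
    linarith

/-- Comparison principle (Armstrong and Smart argument). -/
theorem comparison {n : ℕ} (e : Euc n) (he : ‖e‖ = 1) {F w : Euc n → ℝ} {K : NNReal}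
    (hF : LipschitzWith K F) (hw : LipschitzWith K w) (hAF : AMb F) (hAw : AMb w)
    {Ω : Set (Euc n)} (hΩ : IsOpen Ω) (hΩb : Ω ⊆ ball 0 1)
    (hbd : ∀ x ∈ frontier Ω, F x + w x ≤ 0) : ∀ x ∈ Ω, F x + w x ≤ 0 := by
  by_contra! hcon
  obtain ⟨x1, hx1, hpos⟩ := hcon
  set m := F x1 + w x1 with hm
  obtain ⟨ε, hε, hεm⟩ : ∃ ε : ℝ, 0 < ε ∧ 6 * K * ε < m := by
    refine ⟨m / (6 * K + 1) / 2, by positivity, ?_⟩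
    have : (6 * (K:ℝ)) * (m / (6 * K + 1) / 2) = m * (6 * K / (6 * K + 1)) / 2 := by ring
    rw [this]
    have h1 : 6 * (K:ℝ) / (6 * K + 1) ≤ 1 := by
      rw [div_le_one (by positivity)]; linarith
    nlinarith
  set f := supB F ε
  set h := supB w ε
  have hfl : LipschitzWith K f := supB_lip hF hε.le
  have hhl : LipschitzWith K h := supB_lip hw hε.le
  have hKc : IsCompact (closure Ω) :=
    (isCompact_closedBall (0 : Euc n) 1).of_isClosed_subset isClosed_closure (closure_sub_cb hΩb)
  obtain ⟨x2, hx2, hmax⟩ := hKc.exists_isMaxOn ⟨x1, subset_closure hx1⟩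
    ((hfl.continuous.add hhl.continuous).continuousOn)
  set M := f x2 + h x2 with hM
  have hmax' : ∀ x ∈ closure Ω, f x + h x ≤ M := fun x hx => hmax hx
  have hmM : m ≤ M := by
    have h1 := hmax' x1 (subset_closure hx1)
    have h2 := (supB_spec hF.continuous hε.le x1).2 x1 (mem_closedBall_self hε.le)
    have h3 := (supB_spec hw.continuous hε.le x1).2 x1 (mem_closedBall_self hε.le)
    linarith
  -- maximum points are away from the boundary
  have hin : ∀ x ∈ closure Ω, f x + h x = M → closedBall x (2 * ε) ⊆ Ω := by
    intro x hx hxM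
    by_contra hns
    obtain ⟨y, hyfr, hyx⟩ : ∃ y ∈ frontier Ω, dist y x ≤ 2 * ε := by
      by_cases hxΩ : x ∈ Ω
      · obtain ⟨y', hy', hy'Ω⟩ := not_subset.1 hns
        obtain ⟨t, ht, hyy⟩ := exit_path hΩ (fun t : ℝ => AffineMap.lineMap x y' t)
          (by apply Continuous.continuousOn; exact AffineMap.lineMap_continuous)
          (by simpa using hxΩ) (by simpa using hy'Ω)
        refine ⟨_, hyy, ?_⟩
        rw [dist_lineMap_left, Real.norm_eq_abs, abs_of_nonneg ht.1]
        rw [mem_closedBall, dist_comm] at hy'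
        nlinarith [ht.2, dist_nonneg (x := x) (y := y')]
      · exact ⟨x, by rw [hΩ.frontier_eq]; exact ⟨hx, hxΩ⟩, by simp; positivity⟩
    have key : ∀ {q : Euc n → ℝ}, LipschitzWith K q → supB q ε x ≤ q y + 3 * K * ε := by
      intro q hq
      obtain ⟨⟨z, hz, hzz⟩, -⟩ := supB_spec hq.continuous hε.le x
      rw [← hzz]
      have h1 := hq.dist_le_mul z y
      rw [Real.dist_eq] at h1
      have h2 := le_abs_self (q z - q y)
      have h3 : dist z y ≤ 3 * ε := by
        have := dist_triangle z x y
        rw [dist_comm x y] at this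
        rw [mem_closedBall] at hz
        linarith
      have h4 : (K:ℝ) * dist z y ≤ K * (3 * ε) := by gcongr
      linarith
    have h1 := key hF
    have h2 := key hw
    have h3 := hbd y hyfr
    have h4 : f x + h x ≤ 6 * K * ε := by
      change supB F ε x + supB w ε x ≤ _
      linarith
    linarith
  -- compact set of maximum points
  set E := closure Ω ∩ {x | f x + h x = M} with hE
  have hEc : IsCompact E :=
    hKc.inter_right (isClosed_eq (hfl.continuous.add hhl.continuous) continuous_const)
  obtain ⟨x3, hx3, hmax3⟩ := hEc.exists_isMaxOn ⟨x2, hx2, rfl⟩ hfl.continuous.continuousOn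
  set E' := E ∩ {x | f x = f x3}
  have hE'c : IsCompact E' := hEc.inter_right (isClosed_eq hfl.continuous continuous_const)
  obtain ⟨x0, hx0, hmax0⟩ := hE'c.exists_isMaxOn (f := fun x => inner ℝ e x) ⟨x3, hx3, rfl⟩
    (by fun_prop)
  have hball := hin x0 hx0.1.1 hx0.1.2
  have hfx0 : f x0 = f x3 := hx0.2
  have hsum0 : f x0 + h x0 = M := hx0.1.2
  have hsmall : closedBall x0 ε ⊆ closedBall x0 (2 * ε) := closedBall_subset_closedBall (by linarith)
  have hcl : ∀ y ∈ closedBall x0 ε, f y + h y ≤ M := fun y hy =>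
    hmax' y (subset_closure (hball (hsmall hy)))
  obtain ⟨z1, hz1, hs1⟩ := supB_sub hF.continuous hAF hε (hball.trans hΩb)
  obtain ⟨z2, hz2, hs2⟩ := supB_sub hw.continuous hAw hε (hball.trans hΩb)
  change ∀ y ∈ closedBall x0 ε, 2 * f x0 ≤ f z1 + f y at hs1
  change ∀ y ∈ closedBall x0 ε, 2 * h x0 ≤ h z2 + h y at hs2
  have hx0b : x0 ∈ closedBall x0 ε := mem_closedBall_self hε.le
  have hz1E : f z1 + h z1 = M := by
    have a1 := hs1 z2 hz2
    have a2 := hs2 z1 hz1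
    have a3 := hcl z1 hz1
    have a4 := hcl z2 hz2
    linarith
  have hfz1 : f z1 ≤ f x3 := hmax3 (show z1 ∈ E from
    ⟨subset_closure (hball (hsmall hz1)), hz1E⟩)
  have hfge : ∀ y ∈ closedBall x0 ε, f x3 ≤ f y := by
    intro y hy
    have := hs1 y hy
    linarith
  have hhle : ∀ y ∈ closedBall x0 ε, h y ≤ h x0 := by
    intro y hy
    have a1 := hfge y hy
    have a2 := hcl y hy
    linarith
  have hhge : ∀ y ∈ closedBall x0 ε, h x0 ≤ h y := by
    intro y hy
    have a1 := hs2 y hy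
    have a2 := hhle z2 hz2
    linarith
  set y := x0 + ε • e with hy
  have hyb : y ∈ closedBall x0 ε := by
    rw [mem_closedBall, dist_eq_norm, hy]
    simp [norm_smul, he, abs_of_pos hε]
  have hyE : y ∈ E' := by
    have a1 := hfge y hyb
    have a2 := hhge y hyb
    have a3 := hcl y hyb
    have a4 : f y = f x3 := by linarith
    have a5 : f y + h y = M := by linarith
    exact ⟨⟨subset_closure (hball (hsmall hyb)), a5⟩, a4⟩
  have h6 : inner ℝ e y ≤ inner ℝ e x0 := hmax0 hyE
  rw [hy, inner_add_right, inner_smul_right, real_inner_self_eq_norm_sq, he] at h6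
  norm_num at h6
  linarith

/-- The positive root `a` of `4 a³ + 3 a b² = X`. -/
def rootA (X b : ℝ) : ℝ := by
  classical exact if h : ∃ a : ℝ, 0 < a ∧ 4 * a ^ 3 + 3 * a * b ^ 2 = X then h.choose else 0

lemma rootA_spec {X b : ℝ} (hX : 0 < X) :
    0 < rootA X b ∧ 4 * rootA X b ^ 3 + 3 * rootA X b * b ^ 2 = X := by
  have h : ∃ a : ℝ, 0 < a ∧ 4 * a ^ 3 + 3 * a * b ^ 2 = X := by
    have hc : ContinuousOn (fun a : ℝ => 4 * a ^ 3 + 3 * a * b ^ 2) (Icc 0 (X + 1)) := by fun_prop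
    have := intermediate_value_Icc (by linarith) hc
    obtain ⟨a, ha, hE⟩ := this (show X ∈ _ by
      constructor
      · simp; linarith
      · have h1 : 0 ≤ 3 * (X + 1) * b ^ 2 := by positivity
        have h2 : X ≤ 4 * (X + 1) ^ 3 := by nlinarith [pow_pos hX 3, pow_pos hX 2]
        linarith)
    refine ⟨a, lt_of_le_of_ne ha.1 ?_, hE⟩
    rintro rfl
    simp at hE
    linarith
  unfold rootA
  rw [dif_pos h]
  exact h.choose_spec

lemma root_diff {a a' b b' X X' : ℝ} (h : 4 * a ^ 3 + 3 * a * b ^ 2 = X)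
    (h' : 4 * a' ^ 3 + 3 * a' * b' ^ 2 = X') :
    (a' - a) * (4 * (a' ^ 2 + a * a' + a ^ 2) + 3 * b' ^ 2)
      = (X' - X) - 3 * a * (b' ^ 2 - b ^ 2) := by
  rw [← h, ← h']; ring

lemma root_unique {a a' b X : ℝ} (ha : 0 < a) (ha' : 0 < a') (h : 4 * a ^ 3 + 3 * a * b ^ 2 = X)
    (h' : 4 * a' ^ 3 + 3 * a' * b ^ 2 = X) : a' = a := by
  have := root_diff h h'
  have hp : 0 < 4 * (a' ^ 2 + a * a' + a ^ 2) + 3 * b ^ 2 := by positivity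
  have h0 : (a' - a) * (4 * (a' ^ 2 + a * a' + a ^ 2) + 3 * b ^ 2) = 0 := by rw [this]; ring
  rcases mul_eq_zero.1 h0 with h1 | h1
  · linarith
  · linarith

lemma rootA_eq {a b X : ℝ} (ha : 0 < a) (h : 4 * a ^ 3 + 3 * a * b ^ 2 = X) : rootA X b = a := by
  have hX : 0 < X := by rw [← h]; positivity
  have := rootA_spec (b := b) hX
  exact root_unique ha this.1 h this.2

lemma root_bound {a a' b b' X X' : ℝ} (ha : 0 < a) (ha' : 0 < a')
    (h : 4 * a ^ 3 + 3 * a * b ^ 2 = X) (h' : 4 * a' ^ 3 + 3 * a' * b' ^ 2 = X') :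
    |a' - a| ≤ (|X' - X| + 3 * a * |b' ^ 2 - b ^ 2|) / (4 * a ^ 2) := by
  have := root_diff h h'
  rw [le_div_iff₀ (by positivity)]
  calc |a' - a| * (4 * a ^ 2) ≤ |a' - a| * (4 * (a' ^ 2 + a * a' + a ^ 2) + 3 * b' ^ 2) := by
        apply mul_le_mul_of_nonneg_left _ (abs_nonneg _)
        have : 0 < a * a' := by positivity
        nlinarith [sq_nonneg a', sq_nonneg b']
    _ = |(X' - X) - 3 * a * (b' ^ 2 - b ^ 2)| := by
        rw [← this, abs_mul]
        congr 1
        rw [abs_of_pos]; positivity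
    _ ≤ |X' - X| + |3 * a * (b' ^ 2 - b ^ 2)| := abs_sub _ _
    _ = _ := by rw [abs_mul, abs_of_pos (by positivity : (0:ℝ) < 3 * a)]

lemma rootA_cont {α : Type*} [TopologicalSpace α] {X b : α → ℝ} {t : α} (hX : ContinuousAt X t)
    (hb : ContinuousAt b t) (hpos : 0 < X t) : ContinuousAt (fun s => rootA (X s) (b s)) t := by
  have h0 := rootA_spec (b := b t) hpos
  rw [ContinuousAt, tendsto_iff_dist_tendsto_zero]
  have hlim : Filter.Tendsto (fun s => (|X s - X t| + 3 * rootA (X t) (b t) *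
      |b s ^ 2 - b t ^ 2|) / (4 * rootA (X t) (b t) ^ 2)) (nhds t) (nhds 0) := by
    have : ContinuousAt (fun s => (|X s - X t| + 3 * rootA (X t) (b t) *
      |b s ^ 2 - b t ^ 2|) / (4 * rootA (X t) (b t) ^ 2)) t := by fun_prop
    have h := this.tendsto
    simpa using h
  apply squeeze_zero' (Filter.Eventually.of_forall fun _ => dist_nonneg) _ hlim
  have hev : ∀ᶠ s in nhds t, 0 < X s := hX.eventually (lt_mem_nhds hpos)
  filter_upwards [hev] with s hs
  have h1 := rootA_spec (b := b s) hs
  rw [Real.dist_eq]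
  exact root_bound h0.1 h1.1 h0.2 h1.2

lemma rootA_deriv {X b : ℝ → ℝ} {t X' b' : ℝ} (hX : HasDerivAt X X' t)
    (hb : HasDerivAt b b' t) (hpos : 0 < X t) :
    HasDerivAt (fun s => rootA (X s) (b s))
      ((X' - 6 * rootA (X t) (b t) * b t * b') /
        (3 * (4 * rootA (X t) (b t) ^ 2 + b t ^ 2))) t := by
  have h0 := rootA_spec (b := b t) hpos
  have hcont := rootA_cont hX.continuousAt hb.continuousAt hpos
  set A := fun s => rootA (X s) (b s) with hA
  have hAt : rootA (X t) (b t) = A t := rfl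
  rw [hAt] at h0 ⊢
  have hN : HasDerivAt (fun s => X s - 3 * A t * (b s) ^ 2) (X' - 3 * A t * (2 * b t * b')) t := by
    have h2 := hb.pow 2
    have h3 := hX.sub (h2.const_mul (3 * A t))
    exact h3.congr_deriv (by norm_num)
  have hD : ContinuousAt (fun s => 4 * (A s ^ 2 + A t * A s + A t ^ 2) + 3 * b s ^ 2) t := by
    have := hb.continuousAt
    fun_prop
  rw [hasDerivAt_iff_tendsto_slope] at hN ⊢
  have hDp : 4 * (A t ^ 2 + A t * A t + A t ^ 2) + 3 * b t ^ 2 ≠ 0 := by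
    have := h0.1; positivity
  have hlim := hN.div (hD.tendsto.mono_left nhdsWithin_le_nhds) hDp
  have e : (X' - 3 * A t * (2 * b t * b')) / (4 * (A t ^ 2 + A t * A t + A t ^ 2) + 3 * b t ^ 2)
    = (X' - 6 * A t * b t * b') / (3 * (4 * A t ^ 2 + b t ^ 2)) := by
    congr 1 <;> ring
  rw [e] at hlim
  refine hlim.congr' ?_
  have hev : ∀ᶠ s in nhds t, 0 < X s := hX.continuousAt.eventually (lt_mem_nhds hpos)
  filter_upwards [hev.filter_mono nhdsWithin_le_nhds] with s hs
  have h1 := rootA_spec (b := b s) hs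
  have hd := root_diff h0.2 h1.2
  change (A s - A t) * _ = _ at hd
  have hp : 0 < 4 * (A s ^ 2 + A t * A s + A t ^ 2) + 3 * b s ^ 2 := by
    have i1 : 0 < A s := h1.1
    have i2 := h0.1
    positivity
  simp only [Pi.div_apply]
  rw [div_eq_iff hp.ne']
  simp only [slope_def_field]
  rw [div_mul_eq_mul_div, hd]
  congr 1
  ring

/-- The planar profile. -/
def bb (Y : ℝ) : ℝ := Y ^ ((1:ℝ)/3)
def aa (X Y : ℝ) : ℝ := rootA X (bb Y)
def dd (X Y : ℝ) : ℝ := 4 * aa X Y ^ 2 + bb Y ^ 2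
def g2 (X Y : ℝ) : ℝ := aa X Y / dd X Y
def kk (X Y : ℝ) : ℝ := 1 / (3 * dd X Y ^ 2)

lemma bb_nonneg {Y : ℝ} (hY : 0 ≤ Y) : 0 ≤ bb Y := Real.rpow_nonneg hY _

lemma bb_cube {Y : ℝ} (hY : 0 ≤ Y) : bb Y ^ 3 = Y := by
  unfold bb
  rw [← Real.rpow_natCast, ← Real.rpow_mul hY]
  norm_num

lemma bb_of_cube {b : ℝ} (hb : 0 ≤ b) : bb (b ^ 3) = b := by
  have h1 := bb_cube (pow_nonneg hb 3)
  exact pow_left_injective_of (bb_nonneg (by positivity)) hb h1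
where
  pow_left_injective_of {x y : ℝ} (hx : 0 ≤ x) (hy : 0 ≤ y) (h : x ^ 3 = y ^ 3) : x = y :=
    (pow_left_inj₀ hx hy (by norm_num)).1 h

lemma bb_cont : Continuous bb := Real.continuous_rpow_const (by norm_num)

lemma aa_pos {X Y : ℝ} (hX : 0 < X) : 0 < aa X Y := (rootA_spec hX).1
lemma aa_eq {X Y : ℝ} (hX : 0 < X) : 4 * aa X Y ^ 3 + 3 * aa X Y * bb Y ^ 2 = X :=
  (rootA_spec hX).2
lemma dd_pos {X Y : ℝ} (hX : 0 < X) : 0 < dd X Y := by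
  have := aa_pos (Y := Y) hX
  unfold dd; positivity
lemma g2_pos {X Y : ℝ} (hX : 0 < X) : 0 < g2 X Y := div_pos (aa_pos hX) (dd_pos hX)

/-- Evaluate on parametrised points. -/
lemma g2_param {a b : ℝ} (ha : 0 < a) (hb : 0 ≤ b) :
    g2 (4 * a ^ 3 + 3 * a * b ^ 2) (b ^ 3) = a / (4 * a ^ 2 + b ^ 2) := by
  have h1 : aa (4 * a ^ 3 + 3 * a * b ^ 2) (b ^ 3) = a := by
    unfold aa
    rw [bb_of_cube hb]
    exact rootA_eq ha rfl
  unfold g2 dd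
  rw [h1, bb_of_cube hb]

lemma RR_eq {X Y : ℝ} (hX : 0 < X) (hY : 0 ≤ Y) :
    X ^ 2 + Y ^ 2 = (aa X Y ^ 2 + bb Y ^ 2) * dd X Y ^ 2 := by
  have h1 := aa_eq (Y := Y) hX
  have h2 := bb_cube hY
  unfold dd
  calc X ^ 2 + Y ^ 2 = (4 * aa X Y ^ 3 + 3 * aa X Y * bb Y ^ 2) ^ 2 + (bb Y ^ 3) ^ 2 := by
        rw [h1, h2]
    _ = _ := by ring

lemma dd_lower {X Y : ℝ} (hX : 0 < X) (hY : 0 ≤ Y) : X ^ 2 + Y ^ 2 ≤ dd X Y ^ 3 := by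
  rw [RR_eq hX hY, pow_succ' (dd X Y) 2]
  apply mul_le_mul_of_nonneg_right _ (by positivity)
  unfold dd
  nlinarith [sq_nonneg (aa X Y)]

lemma dd_upper {X Y : ℝ} (hX : 0 < X) (hY : 0 ≤ Y) : dd X Y ^ 3 ≤ 4 * (X ^ 2 + Y ^ 2) := by
  rw [RR_eq hX hY, pow_succ' (dd X Y) 2, ← mul_assoc]
  apply mul_le_mul_of_nonneg_right _ (by positivity)
  unfold dd
  nlinarith [sq_nonneg (bb Y)]

lemma g2_mul {X Y : ℝ} (hX : 0 < X) : g2 X Y * dd X Y ^ 2 = aa X Y * dd X Y := by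
  have := dd_pos (Y := Y) hX
  unfold g2
  field_simp

lemma g2_upper {X Y : ℝ} (hX : 0 < X) (hY : 0 ≤ Y) :
    g2 X Y ^ 3 * (X ^ 2 + Y ^ 2) ^ 2 ≤ X ^ 3 := by
  have h1 : g2 X Y * dd X Y ^ 2 ≤ X := by
    rw [g2_mul hX]
    have := aa_eq (Y := Y) hX
    have h2 := aa_pos (Y := Y) hX
    unfold dd
    nlinarith [mul_nonneg h2.le (sq_nonneg (bb Y))]
  have h0 := g2_pos (Y := Y) hX
  have hd := dd_pos (Y := Y) hX
  calc g2 X Y ^ 3 * (X ^ 2 + Y ^ 2) ^ 2 ≤ g2 X Y ^ 3 * (dd X Y ^ 3) ^ 2 := by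
        gcongr
        exact dd_lower hX hY
    _ = (g2 X Y * dd X Y ^ 2) ^ 3 := by ring
    _ ≤ X ^ 3 := by gcongr

lemma g2_lower {X Y : ℝ} (hX : 0 < X) (hY : 0 ≤ Y) :
    X ^ 3 ≤ 27 * 16 * (g2 X Y ^ 3 * (X ^ 2 + Y ^ 2) ^ 2) := by
  have h1 : X ≤ 3 * (g2 X Y * dd X Y ^ 2) := by
    rw [g2_mul hX]
    have := aa_eq (Y := Y) hX
    have h2 := aa_pos (Y := Y) hX
    unfold dd
    nlinarith [pow_pos h2 3]
  have h0 := g2_pos (Y := Y) hX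
  have hd := dd_pos (Y := Y) hX
  calc X ^ 3 ≤ (3 * (g2 X Y * dd X Y ^ 2)) ^ 3 := by gcongr
    _ = 27 * (g2 X Y ^ 3 * (dd X Y ^ 3) ^ 2) := by ring
    _ ≤ 27 * (g2 X Y ^ 3 * (4 * (X ^ 2 + Y ^ 2)) ^ 2) := by
        gcongr
        exact dd_upper hX hY
    _ = _ := by ring

lemma g2_cont {α : Type*} [TopologicalSpace α] {X Y : α → ℝ} {t : α} (hX : ContinuousAt X t)
    (hY : ContinuousAt Y t) (hpos : 0 < X t) : ContinuousAt (fun s => g2 (X s) (Y s)) t := by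
  have hb : ContinuousAt (fun s => bb (Y s)) t := bb_cont.continuousAt.comp hY
  have ha : ContinuousAt (fun s => aa (X s) (Y s)) t := rootA_cont hX hb hpos
  have hd : ContinuousAt (fun s => dd (X s) (Y s)) t := by
    unfold dd; fun_prop
  exact ha.div hd (dd_pos hpos).ne'

lemma quot_aux (a b x b' : ℝ) (hne : 4 * a ^ 2 + b ^ 2 ≠ 0) :
    ((x - 6 * a * b * b') / (3 * (4 * a ^ 2 + b ^ 2)) * (4 * a ^ 2 + b ^ 2) -
      a * (4 * (2 * a * ((x - 6 * a * b * b') / (3 * (4 * a ^ 2 + b ^ 2)))) + 2 * b * b')) /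
      (4 * a ^ 2 + b ^ 2) ^ 2 =
    ((b ^ 2 - 4 * a ^ 2) * x - 4 * a * b * (3 * b ^ 2 * b')) / (3 * (4 * a ^ 2 + b ^ 2) ^ 3) := by
  obtain ⟨d, hd⟩ : ∃ d, d = 4 * a ^ 2 + b ^ 2 := ⟨_, rfl⟩
  rw [← hd] at hne ⊢
  have hb : b ^ 2 = d - 4 * a ^ 2 := by rw [hd]; ring
  rw [hb]
  field_simp
  ring

lemma g2_deriv {X Y : ℝ → ℝ} {t X' b' : ℝ} (hX : HasDerivAt X X' t)
    (hb : HasDerivAt (fun s => bb (Y s)) b' t) (hpos : 0 < X t) :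
    HasDerivAt (fun s => g2 (X s) (Y s))
      (((bb (Y t) ^ 2 - 4 * aa (X t) (Y t) ^ 2) * X' -
        4 * aa (X t) (Y t) * bb (Y t) * (3 * bb (Y t) ^ 2 * b')) / (3 * dd (X t) (Y t) ^ 3)) t := by
  have ha : HasDerivAt (fun s => aa (X s) (Y s)) _ t := rootA_deriv hX hb hpos
  have hd := ((ha.pow 2).const_mul 4).add (hb.pow 2)
  have hdp := dd_pos (Y := Y t) hpos
  have := ha.div hd (by change dd (X t) (Y t) ≠ 0; exact hdp.ne')
  refine HasDerivAt.congr_deriv this ?_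
  have h1 : ∀ s, dd (X s) (Y s) = 4 * aa (X s) (Y s) ^ 2 + bb (Y s) ^ 2 := fun s => rfl
  have hdp' := h1 t ▸ hdp
  rw [show rootA (X t) (bb (Y t)) = aa (X t) (Y t) from rfl]
  simp only [Pi.add_apply, Pi.pow_apply]
  rw [h1]
  generalize aa (X t) (Y t) = a at *
  generalize bb (Y t) = b at *
  have hne : 4 * a ^ 2 + b ^ 2 ≠ 0 := hdp'.ne'
  push_cast
  rw [pow_one, pow_one]
  exact quot_aux a b X' b' hne

lemma slope_le {a b d x y : ℝ} (hd : d = 4 * a ^ 2 + b ^ 2) (hdp : 0 < d) {L ρ : ℝ}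
    (hρ : 0 ≤ ρ) (hk : 1 / (3 * d ^ 2) ≤ L) (hxy : x ^ 2 + y ^ 2 ≤ ρ ^ 2) :
    |((b ^ 2 - 4 * a ^ 2) * x - 4 * a * b * y) / (3 * d ^ 3)| ≤ L * ρ := by
  have h1 : |(b ^ 2 - 4 * a ^ 2) * x - 4 * a * b * y| ≤ d * ρ := by
    apply abs_le_of_sq_le_sq _ (by positivity)
    have : ((b ^ 2 - 4 * a ^ 2) * x - 4 * a * b * y) ^ 2 ≤ d ^ 2 * (x ^ 2 + y ^ 2) := by
      have e : d ^ 2 * (x ^ 2 + y ^ 2) - ((b ^ 2 - 4 * a ^ 2) * x - 4 * a * b * y) ^ 2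
        = ((b ^ 2 - 4 * a ^ 2) * y + 4 * a * b * x) ^ 2 := by rw [hd]; ring
      nlinarith [sq_nonneg ((b ^ 2 - 4 * a ^ 2) * y + 4 * a * b * x)]
    calc _ ≤ _ := this
      _ ≤ d ^ 2 * ρ ^ 2 := by gcongr
      _ = (d * ρ) ^ 2 := by ring
  rw [abs_div, abs_of_pos (by positivity : 0 < 3 * d ^ 3)]
  calc _ ≤ d * ρ / (3 * d ^ 3) := by gcongr
    _ = 1 / (3 * d ^ 2) * ρ := by field_simp
    _ ≤ L * ρ := by gcongr

/-- Planar Lipschitz estimate along a segment. -/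
lemma g2_seg {X0 Y0 X1 Y1 L ρ : ℝ} (hX0 : 0 < X0) (hX1 : 0 < X1) (hY0 : 0 ≤ Y0) (hY1 : 0 ≤ Y1)
    (hρ : 0 ≤ ρ) (hd : (X1 - X0) ^ 2 + (Y1 - Y0) ^ 2 ≤ ρ ^ 2)
    (hk : ∀ t ∈ Icc (0:ℝ) 1, kk (X0 + t * (X1 - X0)) (Y0 + t * (Y1 - Y0)) ≤ L) :
    |g2 X1 Y1 - g2 X0 Y0| ≤ L * ρ := by
  set X : ℝ → ℝ := fun t => X0 + t * (X1 - X0) with hXd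
  set Y : ℝ → ℝ := fun t => Y0 + t * (Y1 - Y0) with hYd
  have hXpos : ∀ t ∈ Icc (0:ℝ) 1, 0 < X t := by
    intro t ht
    have : X t = (1 - t) * X0 + t * X1 := by simp only [hXd]; ring
    rw [this]
    rcases eq_or_lt_of_le ht.1 with h | h
    · rw [← h]; linarith
    · have := mul_nonneg (sub_nonneg.2 ht.2) hX0.le
      have := mul_pos h hX1
      linarith
  have hXder : ∀ t, HasDerivAt X (X1 - X0) t := fun t => by
    exact (((hasDerivAt_id t).mul_const (X1 - X0)).const_add X0).congr_deriv (by simp)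
  have hYder : ∀ t, HasDerivAt Y (Y1 - Y0) t := fun t => by
    exact (((hasDerivAt_id t).mul_const (Y1 - Y0)).const_add Y0).congr_deriv (by simp)
  -- derivative of the cube root
  have hbder : ∀ t ∈ Ioo (0:ℝ) 1, ∃ b', HasDerivAt (fun s => bb (Y s)) b' t ∧
      3 * bb (Y t) ^ 2 * b' = Y1 - Y0 := by
    intro t ht
    by_cases hz : Y0 = 0 ∧ Y1 = 0
    · refine ⟨0, ?_, ?_⟩
      · have : (fun s => bb (Y s)) = fun _ => bb 0 := by
          funext s; simp [hYd, hz.1, hz.2]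
        rw [this]; exact hasDerivAt_const _ _
      · rw [hz.1, hz.2]; simp
    · have hYpos : 0 < Y t := by
        have e : Y t = (1 - t) * Y0 + t * Y1 := by simp only [hYd]; ring
        rw [e]
        have i1 := mul_nonneg (sub_nonneg.2 ht.2.le) hY0
        have i2 := mul_nonneg ht.1.le hY1
        rcases lt_or_eq_of_le hY0 with h | h
        · have := mul_pos (sub_pos.2 ht.2) h
          linarith
        · rcases lt_or_eq_of_le hY1 with h' | h'
          · have := mul_pos ht.1 h'
            linarith
          · exact absurd ⟨h.symm, h'.symm⟩ hz
      have hd1 : HasDerivAt (fun s => bb (Y s)) _ t :=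
        (hYder t).rpow_const (p := (1:ℝ)/3) (Or.inl hYpos.ne')
      refine ⟨_, hd1, ?_⟩
      have hcube : HasDerivAt (fun s => bb (Y s) ^ 3) _ t := hd1.pow 3
      have hev : (fun s => bb (Y s) ^ 3) =ᶠ[nhds t] Y := by
        have : ∀ᶠ s in nhds t, 0 < Y s := (hYder t).continuousAt.eventually (lt_mem_nhds hYpos)
        filter_upwards [this] with s hs
        exact bb_cube hs.le
      have := (hcube.congr_of_eventuallyEq hev.symm).unique (hYder t)
      refine Eq.trans ?_ this
      push_cast
      ring
  choose! b' hb' hb'' using hbder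
  have hcont : ContinuousOn (fun s => g2 (X s) (Y s)) (Icc 0 1) := fun t ht =>
    (g2_cont (hXder t).continuousAt (hYder t).continuousAt (hXpos t ht)).continuousWithinAt
  obtain ⟨c, hc, hce⟩ := exists_hasDerivAt_eq_slope (fun s => g2 (X s) (Y s)) _
    (zero_lt_one) hcont (fun t ht => g2_deriv (hXder t) (hb' t ht) (hXpos t (Ioo_subset_Icc_self ht)))
  have e0 : X 0 = X0 ∧ Y 0 = Y0 ∧ X 1 = X1 ∧ Y 1 = Y1 := by simp [hXd, hYd]
  simp only [e0.1, e0.2.1, e0.2.2.1, e0.2.2.2, sub_zero, div_one] at hce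
  rw [← hce, hb'' c hc]
  exact slope_le rfl (dd_pos (hXpos c (Ioo_subset_Icc_self hc))) hρ
    (hk c (Ioo_subset_Icc_self hc)) hd

/-- Streamlines of the profile. -/
def arcX (d σ : ℝ) : ℝ := d ^ 3 / 2 * (3 * σ - 2 * σ ^ 3)
def arcY (d σ : ℝ) : ℝ := (d * √(1 - σ ^ 2)) ^ 3

lemma arc_g2 {d σ : ℝ} (hd : 0 < d) (h0 : 0 < σ) (h1 : σ ≤ 1) :
    g2 (arcX d σ) (arcY d σ) = σ / (2 * d) := by
  have hs : √(1 - σ ^ 2) ^ 2 = 1 - σ ^ 2 := Real.sq_sqrt (by nlinarith)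
  have h := g2_param (a := d * σ / 2) (b := d * √(1 - σ ^ 2)) (by positivity) (by positivity)
  have e1 : 4 * (d * σ / 2) ^ 3 + 3 * (d * σ / 2) * (d * √(1 - σ ^ 2)) ^ 2 = arcX d σ := by
    rw [mul_pow d (√(1 - σ ^ 2)), hs]; unfold arcX; ring
  have e2 : 4 * (d * σ / 2) ^ 2 + (d * √(1 - σ ^ 2)) ^ 2 = d ^ 2 := by
    rw [mul_pow d (√(1 - σ ^ 2)), hs]; ring
  rw [e1, e2] at h
  rw [arcY, h]
  field_simp

lemma arcX_pos {d σ : ℝ} (hd : 0 < d) (h0 : 0 < σ) (h1 : σ ≤ 1) : 0 < arcX d σ := by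
  unfold arcX
  have : 0 < 3 * σ - 2 * σ ^ 3 := by
    have : σ ^ 3 ≤ σ := by nlinarith [mul_pos h0 h0, mul_nonneg h0.le (mul_nonneg (sub_nonneg.2 h1) (by linarith : (0:ℝ) ≤ 1 + σ))]
    linarith
  positivity

lemma arcY_nonneg {d σ : ℝ} (hd : 0 < d) : 0 ≤ arcY d σ := by
  unfold arcY; positivity

lemma arc_dist {d s t : ℝ} (hd : 0 < d) (hs0 : 0 ≤ s) (hs1 : s ≤ 1) (ht0 : 0 ≤ t) (ht1 : t ≤ 1) :
    (arcX d s - arcX d t) ^ 2 + (arcY d s - arcY d t) ^ 2 ≤ (3 / 2 * d ^ 3 * (s - t)) ^ 2 := by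
  have hc : √(1 - s ^ 2) ^ 2 = 1 - s ^ 2 := Real.sq_sqrt (by nlinarith)
  have he : √(1 - t ^ 2) ^ 2 = 1 - t ^ 2 := Real.sq_sqrt (by nlinarith)
  have hc0 := Real.sqrt_nonneg (1 - s ^ 2)
  have he0 := Real.sqrt_nonneg (1 - t ^ 2)
  unfold arcX arcY
  generalize √(1 - s ^ 2) = c at *
  generalize √(1 - t ^ 2) = e at *
  have key : 9 / 4 * (s - t) ^ 2 - ((3 * s - 2 * s ^ 3 - (3 * t - 2 * t ^ 3)) ^ 2 / 4 +
      (c ^ 3 - e ^ 3) ^ 2) = (1 - c * e - s * t) ^ 2 * (1 + 2 * (c * e) - s * t) := by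
    have hc6 : c ^ 6 = (1 - s ^ 2) ^ 3 := by rw [← hc]; ring
    have he6 : e ^ 6 = (1 - t ^ 2) ^ 3 := by rw [← he]; ring
    have hce : c ^ 2 * e ^ 2 = (1 - s ^ 2) * (1 - t ^ 2) := by rw [hc, he]
    have l1 : (c ^ 3 - e ^ 3) ^ 2 = c ^ 6 + e ^ 6 - 2 * (c * e) * (c ^ 2 * e ^ 2) := by ring
    have l2 : (1 - c * e - s * t) ^ 2 * (1 + 2 * (c * e) - s * t) =
      (1 - s * t) ^ 3 - 3 * (1 - s * t) * (c ^ 2 * e ^ 2) + 2 * (c * e) * (c ^ 2 * e ^ 2) := by ring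
    rw [l1, l2, hc6, he6, hce]
    ring
  have hpos : 0 ≤ (1 - c * e - s * t) ^ 2 * (1 + 2 * (c * e) - s * t) := by
    apply mul_nonneg (sq_nonneg _)
    have : s * t ≤ 1 := by nlinarith
    have := mul_nonneg hc0 he0
    linarith
  have hd6 : 0 ≤ d ^ 6 := by positivity
  have e1 : (3 / 2 * d ^ 3 * (s - t)) ^ 2 - ((d ^ 3 / 2 * (3 * s - 2 * s ^ 3) - d ^ 3 / 2 * (3 * t - 2 * t ^ 3)) ^ 2 +
      ((d * c) ^ 3 - (d * e) ^ 3) ^ 2) = d ^ 6 * ((1 - c * e - s * t) ^ 2 * (1 + 2 * (c * e) - s * t)) := by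
    rw [← key]; ring
  have := mul_nonneg hd6 hpos
  linarith

lemma arc_start {X Y : ℝ} (hX : 0 < X) (hY : 0 ≤ Y) : ∃ d σ : ℝ, 0 < d ∧ 0 < σ ∧ σ ≤ 1 ∧
    arcX d σ = X ∧ arcY d σ = Y ∧ kk X Y = 1 / (3 * d ^ 4) := by
  have ha := aa_pos (Y := Y) hX
  have hb := bb_nonneg hY
  have hD := dd_pos (Y := Y) hX
  have hDe : dd X Y = 4 * aa X Y ^ 2 + bb Y ^ 2 := rfl
  have hXe := aa_eq (Y := Y) hX
  have hYe := bb_cube hY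
  have hk : kk X Y = 1 / (3 * dd X Y ^ 2) := rfl
  generalize aa X Y = a at *
  generalize bb Y = b at *
  generalize dd X Y = D at *
  obtain ⟨d, hd, hdD⟩ : ∃ d : ℝ, 0 < d ∧ d ^ 2 = D := ⟨√D, by positivity, Real.sq_sqrt hD.le⟩
  have hsq : 1 - (2 * a / d) ^ 2 = (b / d) ^ 2 := by
    field_simp
    rw [hdD, hDe]; ring
  have hle : 2 * a / d ≤ 1 := by
    rw [div_le_one hd]
    apply le_of_sq_le_sq' _ hd.le
    nlinarith [sq_nonneg b]
  refine ⟨d, 2 * a / d, hd, by positivity, hle, ?_, ?_, ?_⟩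
  · unfold arcX
    have : d ^ 3 / 2 * (3 * (2 * a / d) - 2 * (2 * a / d) ^ 3) = 3 * a * d ^ 2 - 8 * a ^ 3 := by
      field_simp; ring
    rw [this, hdD, hDe, ← hXe]; ring
  · unfold arcY
    rw [hsq, Real.sqrt_sq (by positivity), mul_div_cancel₀ _ hd.ne', hYe]
  · rw [hk, ← hdD]; ring
where
  le_of_sq_le_sq' {x y : ℝ} (h : x ^ 2 ≤ y ^ 2) (hy : 0 ≤ y) : x ≤ y := by
    exact le_trans (le_abs_self x) (abs_le_of_sq_le_sq h hy)

lemma axis_ineq {d X : ℝ} (hd : 0 < d) (hX : 0 < X) (hX1 : X ≤ d ^ 3 / 2) :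
    1 / (3 * d ^ 4) * (d ^ 3 / 2 - X) ≤ g2 X 0 - 1 / (2 * d) := by
  have ha := aa_pos (Y := 0) hX
  have hXe := aa_eq (Y := 0) hX
  have hb : bb 0 = 0 := by
    have := bb_cube le_rfl
    exact pow_eq_zero_iff (by norm_num) |>.1 this
  have hg : g2 X 0 = aa X 0 / (4 * aa X 0 ^ 2 + bb 0 ^ 2) := rfl
  rw [hg, hb]
  rw [hb] at hXe
  generalize aa X 0 = a at *
  have hXa : X = 4 * a ^ 3 := by rw [← hXe]; ring
  have had : 2 * a ≤ d := by
    by_contra! h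
    have : d ^ 3 < (2 * a) ^ 3 := by gcongr
    nlinarith
  have e : a / (4 * a ^ 2 + 0 ^ 2) - 1 / (2 * d) - 1 / (3 * d ^ 4) * (d ^ 3 / 2 - X)
      = (d - 2 * a) * (3 * d ^ 3 - 2 * a * (d ^ 2 + 2 * a * d + 4 * a ^ 2)) / (12 * a * d ^ 4) := by
    rw [hXa]; field_simp; ring
  have : 0 ≤ (d - 2 * a) * (3 * d ^ 3 - 2 * a * (d ^ 2 + 2 * a * d + 4 * a ^ 2)) / (12 * a * d ^ 4) := by
    apply div_nonneg _ (by positivity)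
    apply mul_nonneg (by linarith)
    have i1 : d ^ 2 + 2 * a * d + 4 * a ^ 2 ≤ 3 * d ^ 2 := by nlinarith
    have i2 : 2 * a * (d ^ 2 + 2 * a * d + 4 * a ^ 2) ≤ d * (3 * d ^ 2) := by gcongr
    nlinarith
  linarith

/-- Coordinates relative to the pole `(1+η) p`. -/
def cX {n : ℕ} (p : Euc n) (η : ℝ) (x : Euc n) : ℝ := 1 + η - inner ℝ p x
def cY {n : ℕ} (p : Euc n) (x : Euc n) : ℝ := ‖x - (inner ℝ p x : ℝ) • p‖
def pt {n : ℕ} (p y : Euc n) (η X Y : ℝ) : Euc n := (1 + η - X) • p + Y • y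
def GG {n : ℕ} (p : Euc n) (η : ℝ) (x : Euc n) : ℝ := g2 (cX p η x) (cY p x)

lemma cY_nonneg {n : ℕ} (p x : Euc n) : 0 ≤ cY p x := norm_nonneg _

lemma cX_pos {n : ℕ} {p : Euc n} (hp : ‖p‖ = 1) {η : ℝ} {x : Euc n}
    (hx : x ∈ closedBall (0 : Euc n) 1) : η ≤ cX p η x := by
  have h := real_inner_le_norm p x
  rw [mem_closedBall_zero_iff] at hx
  unfold cX
  rw [hp] at h
  linarith

lemma cX_cont {n : ℕ} (p : Euc n) (η : ℝ) : Continuous (cX p η) := by unfold cX; fun_prop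
lemma cY_cont {n : ℕ} (p : Euc n) : Continuous (cY p) := by unfold cY; fun_prop

lemma perp_norm {n : ℕ} {p : Euc n} (hp : ‖p‖ = 1) (v : Euc n) :
    ‖v‖ ^ 2 = (inner ℝ p v : ℝ) ^ 2 + ‖v - (inner ℝ p v : ℝ) • p‖ ^ 2 := by
  rw [norm_sub_sq_real, inner_smul_right, norm_smul, hp, real_inner_comm, Real.norm_eq_abs,
    mul_one, sq_abs]
  ring

lemma coord_dist {n : ℕ} {p : Euc n} (hp : ‖p‖ = 1) (η : ℝ) (x y : Euc n) :
    (cX p η x - cX p η y) ^ 2 + (cY p x - cY p y) ^ 2 ≤ dist x y ^ 2 := by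
  rw [dist_eq_norm, perp_norm hp (x - y)]
  have h1 : (cX p η x - cX p η y) ^ 2 = (inner ℝ p (x - y) : ℝ) ^ 2 := by
    unfold cX; rw [inner_sub_right]; ring
  have h2 : (cY p x - cY p y) ^ 2 ≤ ‖x - y - (inner ℝ p (x - y) : ℝ) • p‖ ^ 2 := by
    rw [sq_le_sq, abs_of_nonneg (norm_nonneg _)]
    have := abs_norm_sub_norm_le (x - (inner ℝ p x : ℝ) • p) (y - (inner ℝ p y : ℝ) • p)
    unfold cY
    refine this.trans (le_of_eq ?_)
    congr 1
    rw [inner_sub_right, sub_smul]; abel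
  linarith

lemma coord_pole {n : ℕ} {p : Euc n} (hp : ‖p‖ = 1) (η : ℝ) (x : Euc n) :
    cX p η x ^ 2 + cY p x ^ 2 = ‖x - p‖ ^ 2 + 2 * η * (1 - inner ℝ p x) + η ^ 2 := by
  have h1 := perp_norm hp x
  have h2 := norm_sub_sq_real x p
  rw [hp, real_inner_comm] at h2
  unfold cX cY
  rw [h2]
  linarith

lemma cX_pt {n : ℕ} {p y : Euc n} (hp : ‖p‖ = 1) (hpy : inner ℝ p y = 0) (η X Y : ℝ) :
    cX p η (pt p y η X Y) = X := by
  unfold cX pt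
  rw [inner_add_right, inner_smul_right, inner_smul_right, hpy, real_inner_self_eq_norm_sq, hp]
  ring

lemma cY_pt {n : ℕ} {p y : Euc n} (hp : ‖p‖ = 1) (hy : ‖y‖ = 1) (hpy : inner ℝ p y = 0)
    (η X : ℝ) {Y : ℝ} (hY : 0 ≤ Y) : cY p (pt p y η X Y) = Y := by
  have h := cX_pt hp hpy η X Y
  have : inner ℝ p (pt p y η X Y) = 1 + η - X := by unfold cX at h; linarith
  unfold cY
  rw [this, pt, add_sub_cancel_left, norm_smul, hy, Real.norm_eq_abs, abs_of_nonneg hY, mul_one]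

lemma GG_pt {n : ℕ} {p y : Euc n} (hp : ‖p‖ = 1) (hy : ‖y‖ = 1) (hpy : inner ℝ p y = 0)
    (η X : ℝ) {Y : ℝ} (hY : 0 ≤ Y) : GG p η (pt p y η X Y) = g2 X Y := by
  unfold GG
  rw [cX_pt hp hpy, cY_pt hp hy hpy η X hY]

lemma dist_pt {n : ℕ} {p y : Euc n} (hp : ‖p‖ = 1) (hy : ‖y‖ = 1) (hpy : inner ℝ p y = 0)
    (η X Y X' Y' : ℝ) :
    dist (pt p y η X Y) (pt p y η X' Y') ^ 2 = (X - X') ^ 2 + (Y - Y') ^ 2 := by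
  have e : pt p y η X Y - pt p y η X' Y' = (X' - X) • p + (Y - Y') • y := by
    unfold pt; module
  rw [dist_eq_norm, e, norm_add_sq_real, inner_smul_left, inner_smul_right, hpy, norm_smul,
    norm_smul, hp, hy]
  simp only [Real.norm_eq_abs, mul_one, sq_abs]
  simp
  ring

lemma exists_perp {n : ℕ} (hn : 2 ≤ n) {p : Euc n} (hp : ‖p‖ = 1) (η : ℝ) (x : Euc n) :
    ∃ y : Euc n, ‖y‖ = 1 ∧ inner ℝ p y = 0 ∧ x = pt p y η (cX p η x) (cY p x) := by
  have hpt : ∀ y : Euc n, pt p y η (cX p η x) (cY p x) = (inner ℝ p x : ℝ) • p + cY p x • y := by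
    intro y
    unfold pt cX
    congr 2
    ring
  by_cases h : cY p x = 0
  · obtain ⟨m, rfl⟩ : ∃ m, n = m + 2 := ⟨n - 2, by omega⟩
    have hfin : Fact (Module.finrank ℝ (Euc (m + 2)) = (m + 1) + 1) := ⟨by simp⟩
    have hp0 : p ≠ 0 := by rintro rfl; simp at hp
    have hr := Submodule.finrank_orthogonal_span_singleton (𝕜 := ℝ) (n := m + 1) hp0
    have hnt : Nontrivial ((Submodule.span ℝ {p})ᗮ : Submodule ℝ (Euc (m + 2))) :=
      Module.nontrivial_of_finrank_pos (R := ℝ) (by rw [hr]; omega)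
    obtain ⟨⟨v, hv⟩, hv0⟩ := exists_ne (0 : ((Submodule.span ℝ {p})ᗮ : Submodule ℝ (Euc (m + 2))))
    have hv0' : v ≠ 0 := fun h => hv0 (Subtype.ext h)
    have hin : inner ℝ p v = 0 := Submodule.mem_orthogonal_singleton_iff_inner_right.1 hv
    refine ⟨‖v‖⁻¹ • v, ?_, ?_, ?_⟩
    · rw [norm_smul, norm_inv, norm_norm, inv_mul_cancel₀ (norm_ne_zero_iff.2 hv0')]
    · rw [inner_smul_right, hin, mul_zero]
    · rw [hpt, h, zero_smul, add_zero]
      exact sub_eq_zero.1 (norm_eq_zero.1 h)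
  · refine ⟨(cY p x)⁻¹ • (x - (inner ℝ p x : ℝ) • p), ?_, ?_, ?_⟩
    · rw [norm_smul, norm_inv]
      unfold cY at *
      rw [norm_norm, inv_mul_cancel₀ h]
    · rw [inner_smul_right, inner_sub_right, inner_smul_right, real_inner_self_eq_norm_sq, hp]
      ring
    · rw [hpt, smul_smul, mul_inv_cancel₀ h, one_smul]
      abel

lemma arc_cont (d : ℝ) : Continuous (arcX d) ∧ Continuous (arcY d) := by
  unfold arcX arcY
  constructor <;> fun_prop

lemma pt_cont {n : ℕ} (p y : Euc n) (η : ℝ) {X Y : ℝ → ℝ} (hX : Continuous X)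
    (hY : Continuous Y) : Continuous (fun t => pt p y η (X t) (Y t)) := by
  unfold pt; fun_prop

/-- chord bound on the arcs -/
lemma arc_chord {n : ℕ} {p y : Euc n} (hp : ‖p‖ = 1) (hy : ‖y‖ = 1) (hpy : inner ℝ p y = 0)
    (η : ℝ) {d s t : ℝ} (hd : 0 < d) (hs0 : 0 ≤ s) (hs1 : s ≤ 1) (ht0 : 0 ≤ t) (ht1 : t ≤ 1) :
    1 / (3 * d ^ 4) * dist (pt p y η (arcX d s) (arcY d s)) (pt p y η (arcX d t) (arcY d t)) ≤
      |s - t| / (2 * d) := by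
  have h1 := arc_dist hd hs0 hs1 ht0 ht1
  rw [← dist_pt hp hy hpy η] at h1
  have h2 := abs_le_abs_of_sq h1
  rw [abs_of_nonneg dist_nonneg, abs_mul, abs_of_pos (by positivity : 0 < 3 / 2 * d ^ 3)] at h2
  calc _ ≤ 1 / (3 * d ^ 4) * (3 / 2 * d ^ 3 * |s - t|) := by gcongr
    _ = _ := by field_simp
where
  abs_le_abs_of_sq {x y : ℝ} (h : x ^ 2 ≤ y ^ 2) : |x| ≤ |y| := sq_le_sq.1 h

lemma flow_down {n : ℕ} (hn : 2 ≤ n) {p : Euc n} (hp : ‖p‖ = 1) {η : ℝ} (hη : 0 < η)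
    {V : Set (Euc n)} (hV : IsOpen V) (hVb : V ⊆ ball 0 1) {x : Euc n} (hx : x ∈ V) :
    ∃ z ∈ frontier V, kk (cX p η x) (cY p x) * dist z x ≤ GG p η x - GG p η z := by
  obtain ⟨y, hy, hpy, hxe⟩ := exists_perp hn hp η x
  have hXp : 0 < cX p η x :=
    hη.trans_le (cX_pos hp (ball_subset_closedBall (hVb hx)))
  obtain ⟨d, σ, hd, hσ0, hσ1, hX, hY, hk⟩ := arc_start hXp (cY_nonneg p x)
  rw [hk]
  rw [← hX, ← hY] at hxe
  have hc := arc_cont d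
  obtain ⟨t, ht, hz⟩ := exit_path hV
    (fun t => pt p y η (arcX d ((1 - t) * σ)) (arcY d ((1 - t) * σ)))
    (pt_cont p y η (hc.1.comp (by fun_prop)) (hc.2.comp (by fun_prop))).continuousOn
    (by simpa using hxe ▸ hx) (by
      intro hcon
      have := cX_pos (η := η) hp (ball_subset_closedBall (hVb hcon))
      rw [cX_pt hp hpy] at this
      simp [arcX] at this
      linarith)
  refine ⟨_, hz, ?_⟩
  have hτ0 : 0 ≤ (1 - t) * σ := mul_nonneg (by linarith [ht.2]) hσ0.le
  have hτσ : (1 - t) * σ ≤ σ := by nlinarith [ht.1]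
  have hzc : η ≤ cX p η _ := cX_pos hp (closure_sub_cb hVb (frontier_subset_closure hz))
  generalize (1 - t) * σ = τ at *
  rw [cX_pt hp hpy] at hzc
  have hτpos : 0 < τ := by
    rcases lt_or_eq_of_le hτ0 with h | h
    · exact h
    · rw [← h] at hzc; simp [arcX] at hzc; linarith
  have h1 := arc_chord hp hy hpy η hd hτ0 (hτσ.trans hσ1) hσ0.le hσ1
  rw [← hxe] at h1
  have hGx : GG p η x = σ / (2 * d) := by
    rw [← arc_g2 hd hσ0 hσ1, hX, hY]; rfl
  rw [GG_pt hp hy hpy η _ (arcY_nonneg hd), arc_g2 hd hτpos (hτσ.trans hσ1), hGx]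
  rw [abs_of_nonpos (by linarith)] at h1
  refine h1.trans (le_of_eq ?_)
  ring

lemma flow_up {n : ℕ} (hn : 2 ≤ n) {p : Euc n} (hp : ‖p‖ = 1) {η : ℝ} (hη : 0 < η)
    {V : Set (Euc n)} (hV : IsOpen V) (hVb : V ⊆ ball 0 1) {x : Euc n} (hx : x ∈ V) :
    ∃ z ∈ frontier V, kk (cX p η x) (cY p x) * dist z x ≤ GG p η z - GG p η x := by
  obtain ⟨y, hy, hpy, hxe⟩ := exists_perp hn hp η x
  have hXp : 0 < cX p η x :=
    hη.trans_le (cX_pos hp (ball_subset_closedBall (hVb hx)))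
  obtain ⟨d, σ, hd, hσ0, hσ1, hX, hY, hk⟩ := arc_start hXp (cY_nonneg p x)
  rw [hk]
  rw [← hX, ← hY] at hxe
  have hc := arc_cont d
  have hGx : GG p η x = σ / (2 * d) := by
    rw [← arc_g2 hd hσ0 hσ1, hX, hY]; rfl
  have harc : ∀ τ, σ ≤ τ → τ ≤ 1 →
      1 / (3 * d ^ 4) * dist (pt p y η (arcX d τ) (arcY d τ)) x ≤ τ / (2 * d) - σ / (2 * d) := by
    intro τ h1 h2
    have h3 := arc_chord hp hy hpy η hd (hσ0.le.trans h1) h2 hσ0.le hσ1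
    rw [← hxe, abs_of_nonneg (by linarith)] at h3
    refine h3.trans (le_of_eq ?_)
    ring
  set x1 := pt p y η (arcX d 1) (arcY d 1) with hx1
  by_cases hx1V : x1 ∈ V
  · have eX : arcX d 1 = d ^ 3 / 2 := by unfold arcX; ring
    have eY : arcY d 1 = 0 := by simp [arcY]
    obtain ⟨t, ht, hz⟩ := exit_path hV (fun t => pt p y η ((1 - t) * (d ^ 3 / 2)) 0)
      (pt_cont p y η (by fun_prop) (by fun_prop)).continuousOn
      (by simpa [hx1, eX, eY] using hx1V) (by
        intro hcon
        have := cX_pos (η := η) hp (ball_subset_closedBall (hVb hcon))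
        rw [cX_pt hp hpy] at this
        simp at this
        linarith)
    refine ⟨_, hz, ?_⟩
    have hzc : η ≤ cX p η _ := cX_pos hp (closure_sub_cb hVb (frontier_subset_closure hz))
    have hle : (1 - t) * (d ^ 3 / 2) ≤ d ^ 3 / 2 := by
      have : 0 < d ^ 3 / 2 := by positivity
      nlinarith [ht.1]
    generalize (1 - t) * (d ^ 3 / 2) = X at *
    rw [cX_pt hp hpy] at hzc
    have h1 := axis_ineq hd (hη.trans_le hzc) hle
    have h2 := harc 1 hσ1 le_rfl
    rw [GG_pt hp hy hpy η _ le_rfl, hGx]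
    have h3 : dist (pt p y η X 0) x1 = d ^ 3 / 2 - X := by
      have := dist_pt hp hy hpy η X 0 (arcX d 1) (arcY d 1)
      rw [← hx1, eX, eY] at this
      have e : (X - d ^ 3 / 2) ^ 2 + (0 - 0) ^ 2 = (d ^ 3 / 2 - X) ^ 2 := by ring
      rw [e] at this
      exact (pow_left_inj₀ dist_nonneg (by linarith) (by norm_num)).1 this
    have h4 := dist_triangle (pt p y η X 0) x1 x
    rw [h3] at h4
    have h5 : 1 / (3 * d ^ 4) * dist (pt p y η X 0) x ≤
      1 / (3 * d ^ 4) * (d ^ 3 / 2 - X + dist x1 x) := by gcongr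
    rw [mul_add] at h5
    linarith
  · obtain ⟨t, ht, hz⟩ := exit_path hV
      (fun t => pt p y η (arcX d (σ + t * (1 - σ))) (arcY d (σ + t * (1 - σ))))
      (pt_cont p y η (hc.1.comp (by fun_prop)) (hc.2.comp (by fun_prop))).continuousOn
      (by simpa using hxe ▸ hx) (by simpa [hx1] using hx1V)
    refine ⟨_, hz, ?_⟩
    have h1 : σ ≤ σ + t * (1 - σ) := by nlinarith [ht.1]
    have h2 : σ + t * (1 - σ) ≤ 1 := by nlinarith [ht.2]
    generalize σ + t * (1 - σ) = τ at *
    rw [GG_pt hp hy hpy η _ (arcY_nonneg hd), arc_g2 hd (hσ0.trans_le h1) h2, hGx]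
    exact harc τ h1 h2

lemma kk_le {n : ℕ} (hn : 2 ≤ n) {p : Euc n} (hp : ‖p‖ = 1) {η : ℝ} (hη : 0 < η)
    {V : Set (Euc n)} (hV : IsOpen V) (hVb : V ⊆ ball 0 1) {L : NNReal}
    (hL : LipschitzOnWith L (GG p η) (frontier V)) {x : Euc n} (hx : x ∈ V) :
    kk (cX p η x) (cY p x) ≤ L := by
  obtain ⟨z, hz, h1⟩ := flow_down hn hp hη hV hVb hx
  obtain ⟨w, hw, h2⟩ := flow_up hn hp hη hV hVb hx
  have hXp : 0 < cX p η x :=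
    hη.trans_le (cX_pos hp (ball_subset_closedBall (hVb hx)))
  have hkp : 0 < kk (cX p η x) (cY p x) := by
    have := dd_pos (Y := cY p x) hXp
    unfold kk; positivity
  have hne : w ≠ x := by
    rintro rfl
    rw [hV.frontier_eq] at hw
    exact hw.2 hx
  have hwx : 0 < dist w x := dist_pos.2 hne
  have h3 := hL.dist_le_mul w hw z hz
  rw [Real.dist_eq] at h3
  have h4 := le_abs_self (GG p η w - GG p η z)
  have h5 := dist_triangle w x z
  rw [dist_comm x z] at h5
  generalize kk (cX p η x) (cY p x) = k at *
  have h6 : k * (dist w x + dist z x) ≤ L * (dist w x + dist z x) := by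
    have : (L:ℝ) * dist w z ≤ L * (dist w x + dist z x) := by gcongr
    linarith
  exact le_of_mul_le_mul_right h6 (by positivity)

/-- Local to global Lipschitz estimate on segments. -/
lemma seg_lip {h : ℝ → ℝ} {C : ℝ} (hC : 0 ≤ C)
    (hloc : ∀ t ∈ Icc (0:ℝ) 1, ∀ᶠ s in nhds t, |h s - h t| ≤ C * |s - t|) : h 1 - h 0 ≤ C := by
  have hcont : ContinuousOn h (Icc 0 1) := by
    intro t ht
    apply ContinuousAt.continuousWithinAt
    rw [ContinuousAt, tendsto_iff_dist_tendsto_zero]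
    have hlim : Filter.Tendsto (fun s => C * |s - t|) (nhds t) (nhds 0) := by
      have : ContinuousAt (fun s => C * |s - t|) t := by fun_prop
      simpa using this.tendsto
    exact squeeze_zero' (Filter.Eventually.of_forall fun _ => dist_nonneg)
      (by simpa [Real.dist_eq] using hloc t ht) hlim
  apply le_of_forall_pos_le_add
  intro ε hε
  have := image_le_of_liminf_slope_right_lt_deriv_boundary (f := h) (f' := fun _ => C)
    (B := fun t => h 0 + (C + ε) * t) (B' := fun _ => C + ε) hcont (by
      intro t ht r hr
      apply Filter.Eventually.frequently
      filter_upwards [(hloc t (Ico_subset_Icc_self ht)).filter_mono nhdsWithin_le_nhds,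
        self_mem_nhdsWithin] with s hs hst
      have hst' : t < s := hst
      rw [slope_def_field, div_lt_iff₀ (by linarith)]
      rw [abs_of_pos (by linarith : 0 < s - t)] at hs
      have := le_abs_self (h s - h t)
      nlinarith) (by simp) (fun t => by
        exact (((hasDerivAt_id t).const_mul (C + ε)).const_add (h 0)).congr_deriv (by simp))
      (fun t _ _ => by linarith) (show (1:ℝ) ∈ Icc (0:ℝ) 1 by simp)
  simp at this
  linarith

lemma GG_seg {n : ℕ} (hn : 2 ≤ n) {p : Euc n} (hp : ‖p‖ = 1) {η L : ℝ} (hL : 0 ≤ L)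
    {U : Set (Euc n)} (hU : IsOpen U) (hpos : ∀ x ∈ U, 0 < cX p η x)
    (hk : ∀ x ∈ U, kk (cX p η x) (cY p x) ≤ L) {x y : Euc n}
    (hxy : ∀ t ∈ Icc (0:ℝ) 1, AffineMap.lineMap x y t ∈ U) :
    GG p η y - GG p η x ≤ L * dist x y := by
  have hloc : ∀ z ∈ U, ∀ᶠ w in nhds z, |GG p η w - GG p η z| ≤ L * dist w z := by
    intro z hz
    obtain ⟨ρ, hρ, hball⟩ := Metric.isOpen_iff.1 hU z hz
    filter_upwards [ball_mem_nhds z hρ] with w hw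
    obtain ⟨v, hv, hpv, hze⟩ := exists_perp hn hp η z
    have hcd := coord_dist hp η w z
    apply g2_seg (hpos z hz) (hpos w (hball hw)) (cY_nonneg _ _) (cY_nonneg _ _) dist_nonneg hcd
    intro t ht
    set X := cX p η z + t * (cX p η w - cX p η z)
    set Y := cY p z + t * (cY p w - cY p z) with hY
    have hY0 : 0 ≤ Y := by
      have e : Y = (1 - t) * cY p z + t * cY p w := by rw [hY]; ring
      rw [e]
      exact add_nonneg (mul_nonneg (by linarith [ht.2]) (cY_nonneg _ _))
        (mul_nonneg ht.1 (cY_nonneg _ _))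
    have hmem : pt p v η X Y ∈ U := by
      apply hball
      rw [mem_ball] at hw ⊢
      have h1 := dist_pt hp hv hpv η X Y (cX p η z) (cY p z)
      rw [← hze] at h1
      have h2 : dist (pt p v η X Y) z ^ 2 ≤ dist w z ^ 2 := by
        rw [h1]
        have e : (X - cX p η z) ^ 2 + (Y - cY p z) ^ 2 =
          t ^ 2 * ((cX p η w - cX p η z) ^ 2 + (cY p w - cY p z) ^ 2) := by ring
        rw [e]
        have ht2 : t ^ 2 ≤ 1 := by nlinarith [ht.1, ht.2]
        nlinarith [sq_nonneg (cX p η w - cX p η z), sq_nonneg (cY p w - cY p z)]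
      have h3 := abs_le_of_sq_le_sq h2 dist_nonneg
      rw [abs_of_nonneg dist_nonneg] at h3
      linarith
    have := hk _ hmem
    rwa [cX_pt hp hpv, cY_pt hp hv hpv η X hY0] at this
  have := seg_lip (h := fun t => GG p η (AffineMap.lineMap x y t)) (C := L * dist x y)
    (by positivity) (by
      intro t ht
      have hc : ContinuousAt (fun s : ℝ => (AffineMap.lineMap x y s : Euc n)) t :=
        AffineMap.lineMap_continuous.continuousAt
      filter_upwards [hc.eventually (hloc _ (hxy t ht))] with s hs
      rw [dist_lineMap_lineMap, Real.dist_eq] at hs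
      linarith)
  simpa using this

lemma kk_bound {X Y η : ℝ} (hη : 0 < η) (hX : η ≤ X) (hY : 0 ≤ Y) : ∃ _ : True,
    kk X Y ≤ 1 / (3 * min 1 (η ^ 2) ^ 2) := by
  refine ⟨trivial, ?_⟩
  have hXp := hη.trans_le hX
  have hd := dd_pos (Y := Y) hXp
  have h1 := dd_lower hXp hY
  have h2 : min 1 (η ^ 2) ≤ dd X Y := by
    by_contra! h
    have h3 : dd X Y < 1 := h.trans_le (min_le_left _ _)
    have h4 : dd X Y < η ^ 2 := h.trans_le (min_le_right _ _)
    have h5 : dd X Y ^ 3 ≤ dd X Y := by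
      calc dd X Y ^ 3 ≤ dd X Y ^ 1 := pow_le_pow_of_le_one hd.le h3.le (by norm_num)
        _ = _ := pow_one _
    have h6 : η ^ 2 ≤ X ^ 2 := by gcongr
    nlinarith [sq_nonneg Y]
  have h3 : 0 < min 1 (η ^ 2) := by positivity
  unfold kk
  gcongr

lemma GG_lip {n : ℕ} (hn : 2 ≤ n) {p : Euc n} (hp : ‖p‖ = 1) {η : ℝ} (hη : 0 < η) :
    ∃ K : NNReal, LipschitzOnWith K (GG p η) (closedBall (0 : Euc n) 1) := by
  have hK : 0 ≤ 1 / (3 * min 1 ((η / 2) ^ 2) ^ 2) := by positivity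
  refine ⟨Real.toNNReal (1 / (3 * min 1 ((η / 2) ^ 2) ^ 2)), ?_⟩
  have key : ∀ x ∈ closedBall (0 : Euc n) 1, ∀ y ∈ closedBall (0 : Euc n) 1,
      GG p η y - GG p η x ≤ 1 / (3 * min 1 ((η / 2) ^ 2) ^ 2) * dist x y := by
    intro x hx y hy
    apply GG_seg hn hp hK (U := {x | η / 2 < cX p η x})
      (isOpen_lt continuous_const (cX_cont p η)) (fun x hx => (half_pos hη).trans hx)
    · intro x hx
      obtain ⟨-, h⟩ := kk_bound (half_pos hη) (le_of_lt hx) (cY_nonneg p x)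
      exact h
    · intro t ht
      have hm : AffineMap.lineMap x y t ∈ closedBall (0 : Euc n) 1 :=
        (convex_closedBall (0 : Euc n) 1).lineMap_mem hx hy ht
      have := cX_pos (η := η) hp hm
      change η / 2 < _
      linarith
  rw [lipschitzOnWith_iff_dist_le_mul]
  intro x hx y hy
  rw [Real.coe_toNNReal _ hK, Real.dist_eq, abs_le]
  have h1 := key x hx y hy
  have h2 := key y hy x hx
  rw [dist_comm y x] at h2
  constructor
  · linarith
  · linarith

lemma GG_AM {n : ℕ} (hn : 2 ≤ n) {p : Euc n} (hp : ‖p‖ = 1) {η : ℝ} (hη : 0 < η) :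
    AMb (GG p η) := by
  intro V hV hVb L hL
  have hpos : ∀ x ∈ V, 0 < cX p η x := fun x hx =>
    hη.trans_le (cX_pos hp (ball_subset_closedBall (hVb hx)))
  have hk : ∀ x ∈ V, kk (cX p η x) (cY p x) ≤ L := fun x hx => kk_le hn hp hη hV hVb hL hx
  have hLc : LipschitzOnWith L (GG p η) (frontier V) := hL
  have hcont : ContinuousOn (GG p η) (closedBall 0 1) := by
    obtain ⟨K, hK⟩ := GG_lip hn hp hη
    exact hK.continuousOn
  -- from a point of `V` straight to the first exit point
  have hexit : ∀ x ∈ V, ∀ y : Euc n, (∃ t ∈ Icc (0:ℝ) 1, AffineMap.lineMap x y t ∉ V) →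
      ∃ t ∈ Icc (0:ℝ) 1, AffineMap.lineMap x y t ∈ frontier V ∧
        |GG p η (AffineMap.lineMap x y t) - GG p η x| ≤ L * dist x (AffineMap.lineMap x y t) := by
    intro x hx y hy
    set S := {t : ℝ | t ∈ Icc (0:ℝ) 1 ∧ AffineMap.lineMap x y t ∉ V} with hS
    have hSc : IsCompact S := by
      have : S = Icc (0:ℝ) 1 ∩ (fun t : ℝ => (AffineMap.lineMap x y t : Euc n)) ⁻¹' Vᶜ := rfl
      rw [this]
      exact isCompact_Icc.inter_right (hV.isClosed_compl.preimage AffineMap.lineMap_continuous)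
    obtain ⟨τ, hτ, hmin⟩ := hSc.exists_isLeast (by obtain ⟨t, ht, h⟩ := hy; exact ⟨t, ht, h⟩)
    have hbefore : ∀ s, 0 ≤ s → s < τ → AffineMap.lineMap x y s ∈ V := by
      intro s h0 hs
      by_contra h
      have : τ ≤ s := hmin ⟨⟨h0, hs.le.trans hτ.1.2⟩, h⟩
      linarith
    have hτ0 : 0 < τ := by
      rcases lt_or_eq_of_le hτ.1.1 with h | h
      · exact h
      · exact absurd (by rw [← h]; simpa using hx) hτ.2
    have hclos : AffineMap.lineMap x y τ ∈ closure V := by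
      have hcl : τ ∈ closure (Ico 0 τ) := by
        rw [closure_Ico hτ0.ne]; exact ⟨hτ0.le, le_rfl⟩
      have hc : Continuous (fun s : ℝ => (AffineMap.lineMap x y s : Euc n)) :=
        AffineMap.lineMap_continuous
      exact map_mem_closure hc hcl (fun s hs => hbefore s hs.1 hs.2)
    refine ⟨τ, hτ.1, by rw [hV.frontier_eq]; exact ⟨hclos, hτ.2⟩, ?_⟩
    -- pass to the limit
    have hin : ∀ s ∈ Ico 0 τ, |GG p η (AffineMap.lineMap x y s) - GG p η x|
        ≤ L * dist x (AffineMap.lineMap x y s) := by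
      intro s hs
      have hseg : ∀ t ∈ Icc (0:ℝ) 1,
          (AffineMap.lineMap x (AffineMap.lineMap x y s : Euc n) t : Euc n) ∈ V := by
        intro t ht
        have e : (AffineMap.lineMap x (AffineMap.lineMap x y s : Euc n) t : Euc n)
            = AffineMap.lineMap x y (t * s) := by
          simp [AffineMap.lineMap_apply, smul_smul]
        rw [e]
        exact hbefore _ (mul_nonneg ht.1 hs.1) (by nlinarith [ht.2, hs.1, hs.2])
      have hseg' : ∀ t ∈ Icc (0:ℝ) 1,
          (AffineMap.lineMap (AffineMap.lineMap x y s : Euc n) x t : Euc n) ∈ V := by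
        intro t ht
        have := hseg (1 - t) ⟨by linarith [ht.2], by linarith [ht.1]⟩
        rwa [AffineMap.lineMap_apply_one_sub] at this
      have h1 := GG_seg hn hp L.2 hV hpos hk hseg
      have h2 := GG_seg hn hp L.2 hV hpos hk hseg'
      rw [dist_comm _ x] at h2
      rw [abs_le]
      constructor
      · change -((L:ℝ) * _) ≤ _
        have h2' : GG p η x - GG p η (AffineMap.lineMap x y s)
          ≤ (L:ℝ) * dist x (AffineMap.lineMap x y s) := h2
        linarith
      · exact h1
    have hcl : τ ∈ closure (Ico 0 τ) := by
      rw [closure_Ico hτ0.ne]; exact ⟨hτ0.le, le_rfl⟩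
    have hc : Continuous (fun s : ℝ => (AffineMap.lineMap x y s : Euc n)) :=
      AffineMap.lineMap_continuous
    have hcG : ContinuousWithinAt (fun s : ℝ => GG p η (AffineMap.lineMap x y s)) (Ico 0 τ) τ := by
      have h1 := hcont _ (closure_sub_cb hVb hclos)
      refine ContinuousWithinAt.comp (t := closedBall (0 : Euc n) 1) h1 hc.continuousWithinAt ?_
      intro s hs
      exact ball_subset_closedBall (hVb (hbefore s hs.1 hs.2))
    refine ContinuousWithinAt.closure_le hcl ?_ ?_ hin
    · exact (hcG.sub continuousWithinAt_const).abs
    · exact (continuous_const.mul (continuous_const.dist hc)).continuousWithinAt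
  rw [lipschitzOnWith_iff_dist_le_mul]
  intro x hx y hy
  by_cases hall : ∀ t ∈ Icc (0:ℝ) 1, (AffineMap.lineMap x y t : Euc n) ∈ V
  · have hall' : ∀ t ∈ Icc (0:ℝ) 1, (AffineMap.lineMap y x t : Euc n) ∈ V := by
      intro t ht
      have := hall (1 - t) ⟨by linarith [ht.2], by linarith [ht.1]⟩
      rwa [AffineMap.lineMap_apply_one_sub] at this
    have h1 := GG_seg hn hp L.2 hV hpos hk hall
    have h2 := GG_seg hn hp L.2 hV hpos hk hall'
    rw [dist_comm y x] at h2
    rw [Real.dist_eq, abs_le]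
    constructor
    · have h1' : GG p η y - GG p η x ≤ (L:ℝ) * dist x y := h1
      linarith
    · exact h2
  · push Not at hall
    have hall' := hall
    obtain ⟨t, ht, hfr, hb⟩ := hexit x hx y hall
    set z : Euc n := AffineMap.lineMap x y t with hz
    -- from y towards z
    have hzV : z ∉ V := by
      rw [hV.frontier_eq] at hfr; exact hfr.2
    obtain ⟨s, hs, hfr2, hb2⟩ := hexit y hy z ⟨1, by simp, by simpa using hzV⟩
    set w : Euc n := AffineMap.lineMap y z s with hw
    have hzw := hL.dist_le_mul z hfr w hfr2
    have d1 : dist x y = dist x z + dist z y := by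
      rw [hz, dist_left_lineMap, dist_lineMap_right, Real.norm_eq_abs, Real.norm_eq_abs,
        abs_of_nonneg ht.1, abs_of_nonneg (by linarith [ht.2])]
      ring
    have d2 : dist y z = dist y w + dist w z := by
      rw [hw, dist_left_lineMap, dist_lineMap_right, Real.norm_eq_abs, Real.norm_eq_abs,
        abs_of_nonneg hs.1, abs_of_nonneg (by linarith [hs.2])]
      ring
    rw [dist_comm z y, d2, dist_comm w z] at d1
    rw [d1, mul_add, mul_add]
    have t1 := dist_triangle (GG p η x) (GG p η z) (GG p η y)
    have t2 := dist_triangle (GG p η z) (GG p η w) (GG p η y)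
    rw [← Real.dist_eq] at hb hb2
    rw [dist_comm] at hb
    linarith

/-- The admissible class in the definition of `omegaInf`. -/
def Adm (n : ℕ) (A : Set (Euc n)) (u : Euc n → ℝ) : Prop :=
    (∀ x ∈ closedBall (0 : Euc n) 1, 0 ≤ u x) ∧
    (∃ K : NNReal, LipschitzOnWith K u (closedBall (0 : Euc n) 1)) ∧
    (∀ V : Set (Euc n), IsOpen V → V ⊆ ball (0 : Euc n) 1 →
      lipOn u V = lipOn u (frontier V)) ∧
    (∀ x ∈ A, 1 ≤ u x)

lemma inner_sphere {n : ℕ} {p y : Euc n} (hp : ‖p‖ = 1) (hy : ‖y‖ = 1) :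
    1 - inner ℝ p y = ‖y - p‖ ^ 2 / 2 := by
  have h2 := norm_sub_sq_real y p
  rw [hp, hy, real_inner_comm] at h2
  linarith

lemma GG_pos {n : ℕ} {p : Euc n} (hp : ‖p‖ = 1) {η : ℝ} (hη : 0 < η) {x : Euc n}
    (hx : x ∈ closedBall (0 : Euc n) 1) : 0 < GG p η x :=
  g2_pos (hη.trans_le (cX_pos hp hx))

lemma GG_upper {n : ℕ} {p : Euc n} (hp : ‖p‖ = 1) {η : ℝ} (hη : 0 < η) {x : Euc n}
    (hx : x ∈ closedBall (0 : Euc n) 1) :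
    GG p η x ^ 3 * (cX p η x ^ 2 + cY p x ^ 2) ^ 2 ≤ cX p η x ^ 3 :=
  g2_upper (hη.trans_le (cX_pos hp hx)) (cY_nonneg p x)

lemma GG_lower {n : ℕ} {p : Euc n} (hp : ‖p‖ = 1) {η : ℝ} (hη : 0 < η) {x : Euc n}
    (hx : x ∈ closedBall (0 : Euc n) 1) :
    cX p η x ^ 3 ≤ 27 * 16 * (GG p η x ^ 3 * (cX p η x ^ 2 + cY p x ^ 2) ^ 2) :=
  g2_lower (hη.trans_le (cX_pos hp hx)) (cY_nonneg p x)

lemma le_of_cube {x y : ℝ} (hy : 0 ≤ y) (h : x ^ 3 ≤ y ^ 3) : x ≤ y := by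
  by_contra! hc
  have : y ^ 3 < x ^ 3 := by gcongr
  linarith

lemma upper_adm {n : ℕ} (hn : 2 ≤ n) {p : Euc n} (hp : ‖p‖ = 1) {δ T : ℝ} (hδ : 0 < δ)
    (hδ1 : δ ≤ 1) (hT : 0 < T) (hTδ : T ^ 3 = δ) :
    Adm n (sphere (0 : Euc n) 1 ∩ closedBall p δ) (fun x => 20 * T * GG p δ x + 0) ∧
      20 * T * GG p δ 0 + 0 ≤ 20 * T := by
  obtain ⟨K, hK⟩ := GG_lip hn hp hδ
  have hlip := lip_affine (20 * T) 0 hK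
  refine ⟨⟨?_, ⟨_, hlip⟩, ?_, ?_⟩, ?_⟩
  · intro x hx
    have := GG_pos hp hδ hx
    positivity
  · exact lipOn_of_AMb hlip.continuousOn ((GG_AM hn hp hδ).affine (20 * T) 0 (by positivity))
  · rintro y ⟨hy, hyp⟩
    have hyc : y ∈ closedBall (0 : Euc n) 1 := sphere_subset_closedBall hy
    have hy1 : ‖y‖ = 1 := by simpa using hy
    have h1 := GG_lower hp hδ hyc
    have h2 := GG_pos hp hδ hyc
    have h3 := cX_pos (η := δ) hp hyc
    rw [coord_pole hp, inner_sphere hp hy1] at h1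
    rw [mem_closedBall, dist_eq_norm] at hyp
    have hr := norm_nonneg (y - p)
    have hR : ‖y - p‖ ^ 2 + 2 * δ * (‖y - p‖ ^ 2 / 2) + δ ^ 2 ≤ 4 * δ ^ 2 := by
      have : ‖y - p‖ ^ 2 ≤ δ ^ 2 := by gcongr
      nlinarith [sq_nonneg δ, sq_nonneg ‖y - p‖]
    have h4 : δ ^ 3 ≤ cX p δ y ^ 3 := by gcongr
    have h5 : GG p δ y ^ 3 * (‖y - p‖ ^ 2 + 2 * δ * (‖y - p‖ ^ 2 / 2) + δ ^ 2) ^ 2 ≤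
        GG p δ y ^ 3 * (4 * δ ^ 2) ^ 2 := by gcongr
    have h6 : δ ^ 3 * 1 ≤ δ ^ 3 * (6912 * (δ * GG p δ y ^ 3)) := by nlinarith
    have h7 := le_of_mul_le_mul_left h6 (by positivity)
    have h8 : (20 * T * GG p δ y) ^ 3 = 8000 * (δ * GG p δ y ^ 3) := by rw [← hTδ]; ring
    simp only [add_zero]
    apply le_of_cube (by positivity)
    rw [h8]
    nlinarith
  · have h0 : (0 : Euc n) ∈ closedBall (0 : Euc n) 1 := by simp
    have h1 := GG_upper hp hδ h0
    have h2 := GG_pos hp hδ h0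
    rw [coord_pole hp] at h1
    simp only [cX, zero_sub, norm_neg, hp, inner_zero_right, sub_zero] at h1
    have h3 : GG p δ 0 ≤ 1 := by
      apply le_of_cube (by norm_num)
      have e : (1 + δ) ^ 3 * (GG p δ 0 ^ 3 * (1 + δ)) ≤ (1 + δ) ^ 3 * 1 := by nlinarith
      have := le_of_mul_le_mul_left e (by positivity)
      have : 0 < GG p δ 0 ^ 3 := by positivity
      nlinarith
    nlinarith

/-- Harnack chain towards the pole. -/
lemma harnack {n : ℕ} {p : Euc n} (hp : ‖p‖ = 1) {u : Euc n → ℝ} (hu : Continuous u)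
    (hA : AMb u) (h0 : ∀ x ∈ closedBall (0 : Euc n) 1, 0 ≤ u x) (k : ℕ) :
    (1 / 2) ^ k * u ((1 - (2 / 3 : ℝ) ^ k) • p) ≤ u 0 := by
  induction k with
  | zero => simp
  | succ k ih =>
    refine le_trans ?_ ih
    set s : ℝ := (2 / 3) ^ k with hs
    have hs0 : 0 < s := by positivity
    have hs1 : s ≤ 1 := pow_le_one₀ (by norm_num) (by norm_num)
    rw [pow_succ (2 / 3 : ℝ), ← hs, pow_succ, mul_assoc]
    have hnx : ‖(1 - s * (2 / 3)) • p‖ = 1 - s * (2 / 3) := by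
      rw [norm_smul, hp, mul_one, Real.norm_eq_abs, abs_of_nonneg (by linarith)]
    have hd : dist ((1 - s) • p) ((1 - s * (2 / 3)) • p) = s / 3 := by
      rw [dist_eq_norm, ← sub_smul, norm_smul, hp, mul_one, Real.norm_eq_abs, abs_sub_comm,
        abs_of_nonneg (by linarith)]
      ring
    have hb : ball ((1 - s * (2 / 3)) • p) (s * (2 / 3)) ⊆ ball (0 : Euc n) 1 := by
      apply ball_subset_ball'
      rw [dist_zero_right, hnx]; linarith
    have hcb : closedBall ((1 - s * (2 / 3)) • p) (s * (2 / 3)) ⊆ closedBall (0 : Euc n) 1 := by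
      apply closedBall_subset_closedBall'
      rw [dist_zero_right, hnx]; linarith
    have := ccb_ball hu hA (m := 0) (by positivity : 0 < s * (2 / 3)) hb
      (fun y hy => h0 y (hcb hy)) (y := (1 - s) • p) (by
        rw [mem_closedBall, hd]; linarith)
    rw [hd] at this
    have e : (u ((1 - s * (2 / 3)) • p) - 0) / (s * (2 / 3)) * (s / 3) =
      1 / 2 * u ((1 - s * (2 / 3)) • p) := by field_simp; ring
    rw [e] at this
    gcongr
    linarith

lemma step_one {n : ℕ} {p : Euc n} (hp : ‖p‖ = 1) {δ : ℝ} (hδ : 0 < δ)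
    {u : Euc n → ℝ} (hu : Continuous u)
    (hA : AMb u) (h0 : ∀ x ∈ closedBall (0 : Euc n) 1, 0 ≤ u x)
    (h1 : ∀ x ∈ sphere (0 : Euc n) 1 ∩ closedBall p δ, 1 ≤ u x) {x : Euc n}
    (hx : x ∈ closedBall (0 : Euc n) 1) (hxp : dist x p ≤ δ / 2) : 1 / 2 ≤ u x := by
  by_cases hxs : x ∈ sphere (0 : Euc n) 1
  · have := h1 x ⟨hxs, by rw [mem_closedBall]; linarith⟩
    linarith
  have hxb : x ∈ ball (0 : Euc n) 1 := by
    rw [mem_ball]; rw [mem_closedBall] at hx; rw [mem_sphere] at hxs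
    exact lt_of_le_of_ne hx hxs
  have hVo : IsOpen (ball (0 : Euc n) 1 ∩ ball p δ) := isOpen_ball.inter isOpen_ball
  have := ccb hu hA (V := ball (0 : Euc n) 1 ∩ ball p δ) hVo inter_subset_left (z := p)
    (by rintro ⟨h, -⟩; rw [mem_ball, dist_zero_right, hp] at h; linarith) (c := 1) (L := 1 / δ)
    (by positivity) (by
      intro y hy
      have hyc := frontier_subset_closure hy
      have hy1 : y ∈ closedBall (0 : Euc n) 1 := closure_sub_cb inter_subset_left hyc
      have hy2 : y ∈ closedBall p δ :=
        closure_minimal (inter_subset_right.trans ball_subset_closedBall) isClosed_closedBall hyc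
      rw [hVo.frontier_eq] at hy
      by_cases hd : dist y p = δ
      · rw [hd, one_div, inv_mul_cancel₀ hδ.ne', sub_self]
        exact h0 y hy1
      · have hys : y ∈ sphere (0 : Euc n) 1 := by
          by_contra hns
          apply hy.2
          constructor
          · rw [mem_ball]; rw [mem_closedBall] at hy1; rw [mem_sphere] at hns
            exact lt_of_le_of_ne hy1 hns
          · rw [mem_ball]; rw [mem_closedBall] at hy2
            exact lt_of_le_of_ne hy2 hd
        have := h1 y ⟨hys, hy2⟩
        have : 0 ≤ 1 / δ * dist y p := by positivity
        linarith) x ⟨hxb, by rw [mem_ball]; linarith⟩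
  have h3 : 1 / δ * dist x p ≤ 1 / δ * (δ / 2) := by gcongr
  have h4 : 1 / δ * (δ / 2) = 1 / 2 := by field_simp
  linarith

set_option maxHeartbeats 2000000 in
lemma lower_adm {n : ℕ} (hn : 2 ≤ n) {p : Euc n} (hp : ‖p‖ = 1) {δ T : ℝ} (hδ : 0 < δ)
    (hδ1 : δ ≤ 1) (hT : 0 < T) (hTδ : T ^ 3 = δ) {v : Euc n → ℝ}
    (hv : Adm n (sphere (0 : Euc n) 1 ∩ closedBall p δ) v) :
    (1 / 2) ^ 21 / 4 * T ≤ v 0 := by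
  obtain ⟨hv0, ⟨K, hK⟩, hvA, hv1⟩ := hv
  obtain ⟨u, hu, huv⟩ := hK.extend_real
  have hA : AMb u := (AMb_of_lipOn hvA).congr huv
  have h0 : ∀ x ∈ closedBall (0 : Euc n) 1, 0 ≤ u x := fun x hx => huv hx ▸ hv0 x hx
  have h1 : ∀ x ∈ sphere (0 : Euc n) 1 ∩ closedBall p δ, 1 ≤ u x := fun x hx =>
    huv (sphere_subset_closedBall hx.1) ▸ hv1 x hx
  rw [huv (by simp : (0 : Euc n) ∈ closedBall (0 : Euc n) 1)]
  clear hv0 hK hvA hv1 huv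
  have hstep : ∀ x ∈ closedBall (0 : Euc n) 1, dist x p ≤ δ / 2 → 1 / 2 ≤ u x :=
    fun x hx h => step_one hp hδ hu.continuous hA h0 h1 hx h
  have hT1 : T ≤ 1 := le_of_cube (by norm_num) (by rw [hTδ]; linarith)
  set s : ℝ := (2 / 3) ^ 21 with hs
  have hs0 : 0 < s := by positivity
  have hs1 : s ≤ 1 / 3888 := by rw [hs]; norm_num
  have hH := harnack hp hu.continuous hA h0 21
  rw [← hs] at hH
  suffices hz : 1 / 4 * T ≤ u ((1 - s) • p) by
    calc (1 / 2 : ℝ) ^ 21 / 4 * T = (1 / 2) ^ 21 * (1 / 4 * T) := by ring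
      _ ≤ (1 / 2) ^ 21 * u ((1 - s) • p) := by gcongr
      _ ≤ _ := hH
  clear hH
  clear_value s
  have hnz : ‖(1 - s) • p‖ = 1 - s := by
    rw [norm_smul, hp, mul_one, Real.norm_eq_abs, abs_of_nonneg (by linarith)]
  have hzp' : ‖(1 - s) • p - p‖ = s := by
    have e : (1 - s) • p - p = (-s) • p := by module
    rw [e, norm_smul, hp, mul_one, norm_neg, Real.norm_eq_abs, abs_of_nonneg hs0.le]
  have hzp : dist ((1 - s) • p) p = s := by rw [dist_eq_norm, hzp']
  have hzc : (1 - s) • p ∈ closedBall (0 : Euc n) 1 := by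
    rw [mem_closedBall_zero_iff, hnz]; linarith
  by_cases hsδ : s ≤ δ / 2
  · have := hstep _ hzc (by rw [hzp]; exact hsδ)
    linarith
  push Not at hsδ
  -- comparison with the singular profile
  set η := δ ^ 2 / 32 with hηd
  have hη : 0 < η := by positivity
  obtain ⟨K', hK'⟩ := GG_lip hn hp hη
  obtain ⟨G, hG, hGe⟩ := hK'.extend_real
  have hGA : AMb G := (GG_AM hn hp hη).congr hGe
  set κ := T / 4 with hκ
  have hκ0 : 0 < κ := by positivity
  have hF : LipschitzWith (‖κ‖₊ * K') (fun x => κ * G x + -κ) := by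
    rw [← lipschitzOnWith_univ] at hG ⊢
    exact lip_affine κ (-κ) hG
  have hcomp := comparison p hp (F := fun x => κ * G x + -κ) (w := fun x => - u x)
    (hF.weaken (le_max_left _ K)) (hu.neg.weaken (le_max_right _ K))
    (hGA.affine κ (-κ) hκ0.ne') hA.neg (Ω := ball (0 : Euc n) 1 \ closedBall p (δ / 2))
    (isOpen_ball.sdiff isClosed_closedBall) sdiff_subset (by
      intro y hy
      have hyc := frontier_subset_closure hy
      have hy1 : y ∈ closedBall (0 : Euc n) 1 := closure_sub_cb sdiff_subset hyc
      have hy2 : δ / 2 ≤ dist y p := by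
        have hcl : IsClosed {x : Euc n | δ / 2 ≤ dist x p} :=
          isClosed_le continuous_const (continuous_id.dist continuous_const)
        have hsub : ball (0 : Euc n) 1 \ closedBall p (δ / 2) ⊆ {x : Euc n | δ / 2 ≤ dist x p} := by
          intro x hx
          have := hx.2
          rw [mem_closedBall, not_le] at this
          exact this.le
        exact closure_minimal hsub hcl hyc
      rw [(isOpen_ball.sdiff isClosed_closedBall : IsOpen
        (ball (0 : Euc n) 1 \ closedBall p (δ / 2))).frontier_eq] at hy
      have hGp := GG_pos hp hη hy1
      have hGu := GG_upper hp hη hy1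
      have hXp := hη.trans_le (cX_pos (η := η) hp hy1)
      rw [← hGe hy1]
      by_cases hd : dist y p = δ / 2
      · have huy := hstep y hy1 hd.le
        have hle : T * GG p η y ≤ 2 := by
          apply le_of_cube (by norm_num)
          have hR := coord_pole hp η y
          have hin : 0 ≤ 1 - inner ℝ p y := by
            have := cX_pos (η := η) hp hy1
            unfold cX at this; linarith
          rw [← dist_eq_norm, hd] at hR
          have hRl : (δ / 2) ^ 2 ≤ cX p η y ^ 2 + cY p y ^ 2 := by
            rw [hR]; nlinarith [mul_nonneg hη.le hin, sq_nonneg η]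
          have hGub : GG p η y ^ 3 * (δ / 2) ≤ 1 := by
            obtain ⟨R, hR0, hRR⟩ : ∃ R : ℝ, 0 < R ∧ R ^ 2 = cX p η y ^ 2 + cY p y ^ 2 :=
              ⟨√(cX p η y ^ 2 + cY p y ^ 2), by positivity, Real.sq_sqrt (by positivity)⟩
            rw [← hRR] at hRl hGu
            have i1 : δ / 2 ≤ R := by
              exact le_trans (le_abs_self _) (abs_le_of_sq_le_sq hRl hR0.le)
            have i2 : cX p η y ≤ R :=
              le_trans (le_abs_self _) (abs_le_of_sq_le_sq
                (by rw [hRR]; nlinarith [sq_nonneg (cY p y)]) hR0.le)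
            have i3 : cX p η y ^ 3 ≤ R ^ 3 := by gcongr
            have i4 : R ^ 3 * (GG p η y ^ 3 * R) ≤ R ^ 3 * 1 := by nlinarith
            have i5 := le_of_mul_le_mul_left i4 (by positivity)
            have i6 : GG p η y ^ 3 * (δ / 2) ≤ GG p η y ^ 3 * R := by gcongr
            linarith
          have e : (T * GG p η y) ^ 3 = GG p η y ^ 3 * δ := by rw [mul_pow, hTδ]; ring
          rw [e]; linarith
        rw [hκ]
        linarith
      · have hys : ‖y‖ = 1 := by
          by_contra hns
          apply hy.2
          constructor
          · rw [mem_ball_zero_iff]; rw [mem_closedBall_zero_iff] at hy1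
            exact lt_of_le_of_ne hy1 hns
          · rw [mem_closedBall, not_le]
            exact lt_of_le_of_ne hy2 (Ne.symm hd)
        have hle : GG p η y ≤ 1 := by
          apply le_of_cube (by norm_num)
          have hR := coord_pole hp η y
          have hin := inner_sphere hp hys
          have hXe : cX p η y = η + ‖y - p‖ ^ 2 / 2 := by rw [← hin]; unfold cX; ring
          rw [hin] at hR
          rw [dist_eq_norm] at hy2
          have hr2 : ‖y - p‖ ≤ 2 := by
            have := norm_sub_le y p
            rw [hys, hp] at this; linarith
          generalize ‖y - p‖ = r at *
          have hr0 : 0 < r := by linarith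
          have hηr : η ≤ r ^ 2 / 8 := by
            rw [hηd]; nlinarith
          have hRl : r ^ 2 ≤ cX p η y ^ 2 + cY p y ^ 2 := by
            rw [hR]; nlinarith [mul_nonneg hη.le (sq_nonneg r), sq_nonneg η]
          have j1 : GG p η y ^ 3 * (r ^ 2) ^ 2 ≤
            GG p η y ^ 3 * (cX p η y ^ 2 + cY p y ^ 2) ^ 2 := by gcongr
          have j2 : cX p η y ^ 3 ≤ (5 * r ^ 2 / 8) ^ 3 := by
            have : cX p η y ≤ 5 * r ^ 2 / 8 := by rw [hXe]; linarith
            gcongr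
          have j3 : (5 * r ^ 2 / 8) ^ 3 = r ^ 4 * (125 / 512 * r ^ 2) := by ring
          have j4 : 125 / 512 * r ^ 2 ≤ 1 := by nlinarith
          have j5 : r ^ 4 * (125 / 512 * r ^ 2) ≤ r ^ 4 * 1 := by gcongr
          have j6 : r ^ 4 * GG p η y ^ 3 ≤ r ^ 4 * 1 := by nlinarith
          have := le_of_mul_le_mul_left j6 (by positivity)
          linarith
        have := h0 y hy1
        nlinarith)
    ((1 - s) • p) ⟨by rw [mem_ball_zero_iff, hnz]; linarith, by
      rw [mem_closedBall, hzp]; linarith⟩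
  beta_reduce at hcomp
  rw [← hGe hzc] at hcomp
  have hG2 : 2 ≤ GG p η ((1 - s) • p) := by
    have hl := GG_lower hp hη hzc
    have hGp := GG_pos hp hη hzc
    apply le_of_cube hGp.le
    have hin : inner ℝ p ((1 - s) • p) = 1 - s := by
      rw [inner_smul_right, real_inner_self_eq_norm_sq, hp]; ring
    rw [coord_pole hp, hzp', hin] at hl
    have hXe : cX p η ((1 - s) • p) = s + η := by unfold cX; rw [hin]; ring
    rw [hXe] at hl
    have hη8 : η ≤ s / 8 := by rw [hηd]; nlinarith
    generalize GG p η ((1 - s) • p) = g at *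
    have k1 : (s + η) ^ 3 * 1 ≤ (s + η) ^ 3 * (432 * (g ^ 3 * (s + η))) := by nlinarith
    have k2 := le_of_mul_le_mul_left k1 (by positivity)
    have hg3 : 0 < g ^ 3 := by positivity
    have k3 : g ^ 3 * (s + η) ≤ g ^ 3 * (1 / 3456) := by
      gcongr; linarith
    linarith
  nlinarith

/-- Dimension-independent constants `c, C > 0` such that the `∞`-harmonic measure (from
the center of the unit ball of `ℝⁿ`, `n ≥ 2`) of any spherical cap of radius `δ ∈ (0,1]`
is between `c δ^{1/3}` and `C δ^{1/3}`. -/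
theorem stmt7 :
    ∃ c : ℝ, 0 < c ∧ ∃ C : ℝ, 0 < C ∧
      ∀ n : ℕ, 2 ≤ n → ∀ p : Euc n, ‖p‖ = 1 → ∀ δ : ℝ, 0 < δ → δ ≤ 1 →
        c * δ ^ ((1 : ℝ) / 3) ≤
            omegaInf n (sphere (0 : Euc n) 1 ∩ closedBall p δ) ∧
          omegaInf n (sphere (0 : Euc n) 1 ∩ closedBall p δ) ≤
            C * δ ^ ((1 : ℝ) / 3) := by
  refine ⟨(1 / 2) ^ 21 / 4, by positivity, 20, by norm_num, ?_⟩
  intro n hn p hp δ hδ hδ1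
  have hT : 0 < δ ^ ((1 : ℝ) / 3) := Real.rpow_pos_of_pos hδ _
  have hTδ : (δ ^ ((1 : ℝ) / 3)) ^ 3 = δ := by
    rw [← Real.rpow_natCast, ← Real.rpow_mul hδ.le]
    norm_num
  generalize δ ^ ((1 : ℝ) / 3) = T at *
  obtain ⟨⟨a1, a2, a3, a4⟩, hub⟩ := upper_adm hn hp hδ hδ1 hT hTδ
  unfold omegaInf
  constructor
  · apply le_csInf
    · exact ⟨_, _, a1, a2, a3, a4, rfl⟩
    · rintro t ⟨v, b1, b2, b3, b4, rfl⟩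
      exact lower_adm hn hp hδ hδ1 hT hTδ ⟨b1, b2, b3, b4⟩
  · refine le_trans (csInf_le ?_ ⟨_, a1, a2, a3, a4, rfl⟩) hub
    refine ⟨0, ?_⟩
    rintro t ⟨v, b1, b2, b3, b4, rfl⟩
    exact b1 0 (by simp)

end
end

section
/- There exists a constant C > 0 with the following property: for every n ≥ 2 and every α ∈ (0,1/2) there is δ₀ > 0 such that for every δ ∈ (0,δ₀) and every α-porous subset S of the unit sphere Y = ∂X ⊆ ℝⁿ, the closed δ-neighborhood S_δ := {y ∈ Y : dist(y,S) ≤ δ} satisfies ω_∞(S_δ) ≤ δ^{α^C}, where ω_∞ denotes the ∞-harmonic measure from the center 0 of the unit ball. -/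
open Metric Set

noncomputable section

/-- `S` is `α`-porous in `Z`: for every radius `r ∈ (0, diam Z)`, every ball of radius `r`
in `Z` contains a ball of radius `α r` (in `Z`) disjoint from `S`. -/
def IsPorousIn {X : Type*} [MetricSpace X] (α : ℝ) (S Z : Set X) : Prop :=
  ∀ r : ℝ, 0 < r → r < diam Z → ∀ z ∈ Z, ∃ z' ∈ Z,
    (ball z' (α * r) ∩ Z ⊆ ball z r) ∧ (ball z' (α * r) ∩ S = ∅)


section Perron
variable {E : Type*} [NormedAddCommGroup E] [NormedSpace ℝ E]

/-- Comparison with cones (of nonnegative slope) from above. -/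
def CCA (U : Set E) (u : E → ℝ) : Prop :=
  ∀ W : Set E, IsOpen W → W ⊆ U → ∀ z : E, z ∉ W → ∀ a b : ℝ, 0 ≤ b →
    (∀ x ∈ frontier W, u x ≤ a + b * dist x z) → ∀ x ∈ W, u x ≤ a + b * dist x z

lemma exists_frontier_between {W : Set E} (hW : IsOpen W) {x z : E} (hx : x ∈ W)
    (hz : z ∉ W) : ∃ y ∈ frontier W, dist x y + dist y z = dist x z := by
  have hc : IsPreconnected (segment ℝ x z) := (convex_segment x z).isPreconnected
  obtain ⟨y, hy, hyf⟩ : ∃ y ∈ segment ℝ x z, y ∈ frontier W := by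
    by_contra hcon
    push Not at hcon
    have hcov : ∀ y ∈ segment ℝ x z, y ∈ closure W → y ∈ W := by
      intro y hy hyc
      by_contra hyW
      exact hcon y hy (by rw [hW.frontier_eq]; exact ⟨hyc, hyW⟩)
    obtain ⟨y, hy, hy1, hy2⟩ := hc W (closure W)ᶜ hW isClosed_closure.isOpen_compl
      (fun y hy => by
        by_cases h : y ∈ closure W
        · exact Or.inl (hcov y hy h)
        · exact Or.inr h)
      ⟨x, left_mem_segment ℝ x z, hx⟩
      ⟨z, right_mem_segment ℝ x z, fun h => hz (hcov z (right_mem_segment ℝ x z) h)⟩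
    exact hy2 (subset_closure hy1)
  exact ⟨y, hyf, dist_add_dist_of_mem_segment hy⟩

lemma cone_le_cone {W : Set E} (hW : IsOpen W) {z z' : E} (hz : z ∉ W) (hz' : z' ∉ W)
    {c L a b : ℝ} (hL : 0 ≤ L) (hb : 0 ≤ b)
    (h : ∀ x ∈ frontier W, c - L * dist x z ≤ a + b * dist x z') :
    ∀ x ∈ W, c - L * dist x z ≤ a + b * dist x z' := by
  intro x hx
  rcases le_total b L with hbL | hbL
  · obtain ⟨y, hy, hd⟩ := exists_frontier_between hW hx hz
    have h1 := h y hy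
    have h2 : dist y z' ≤ dist x y + dist x z' := by
      rw [dist_comm x y]; exact dist_triangle y x z'
    have h3 := mul_le_mul_of_nonneg_left h2 hb
    have h4 := mul_le_mul_of_nonneg_right hbL (dist_nonneg (x := x) (y := y))
    rw [← hd]; linarith
  · obtain ⟨y, hy, hd⟩ := exists_frontier_between hW hx hz'
    have h1 := h y hy
    have h2 : dist y z ≤ dist x y + dist x z := by
      rw [dist_comm x y]; exact dist_triangle y x z
    have h3 := mul_le_mul_of_nonneg_left h2 hL
    have h4 := mul_le_mul_of_nonneg_right hbL (dist_nonneg (x := x) (y := y))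
    rw [← hd]; linarith

/-- The Perron class. -/
def PerronClass (U : Set E) (f : E → ℝ) (L : ℝ) : Set (E → ℝ) :=
  {v | CCA U v ∧ (∀ x ∉ U, v x = f x) ∧ ∀ x, ∀ z ∉ U, f z - L * dist x z ≤ v x}

lemma frontier_not_mem {U : Set E} (hU : IsOpen U) {x : E} (hx : x ∈ frontier U) : x ∉ U := by
  rw [hU.frontier_eq] at hx; exact hx.2

lemma frontier_diff_singleton {V : Set E} (hV : IsOpen V) {x y : E}
    (hx : x ∈ frontier (V \ {y})) : x = y ∨ x ∈ frontier V := by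
  have ho : IsOpen (V \ {y}) := hV.sdiff isClosed_singleton
  rw [ho.frontier_eq] at hx
  rw [hV.frontier_eq]
  by_cases h : x = y
  · exact Or.inl h
  · right
    exact ⟨closure_mono sdiff_subset hx.1, fun hv => hx.2 ⟨hv, h⟩⟩

lemma PerronClass.lip {U : Set E} (hU : IsOpen U) {f : E → ℝ} {L : ℝ} (hL : 0 ≤ L)
    (hf : ∀ x y, f x ≤ f y + L * dist x y) {v : E → ℝ} (hv : v ∈ PerronClass U f L) (x y : E) :
    v x ≤ v y + L * dist x y := by
  obtain ⟨h1, h2, h3⟩ := hv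
  by_cases hx : x ∈ U
  · by_cases hxy : x = y
    · simp [hxy]
    refine h1 (U \ {y}) (hU.sdiff isClosed_singleton) sdiff_subset y (by simp) (v y) L hL ?_ x
      ⟨hx, hxy⟩
    intro w hw
    rcases frontier_diff_singleton hU hw with h | h
    · simp [h]
    · have hwU := frontier_not_mem hU h
      rw [h2 w hwU]
      have := h3 y w hwU
      rw [dist_comm] at this
      linarith
  · rw [h2 x hx]
    have := h3 y x hx
    rw [dist_comm] at this
    linarith

lemma exists_perron {U : Set E} (hU : IsOpen U) {z₀ : E} (hz₀ : z₀ ∉ U) {f : E → ℝ} {L : ℝ}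
    (hL : 0 ≤ L) (hf : ∀ x y, f x ≤ f y + L * dist x y) :
    ∃ u : E → ℝ, CCA U u ∧ CCA U (fun x => - u x) ∧ (∀ x ∉ U, u x = f x) ∧
      ∀ x y, u x ≤ u y + L * dist x y := by
  -- the lower McShane extension
  haveI : Nonempty {z : E // z ∉ U} := ⟨⟨z₀, hz₀⟩⟩
  have hbd : ∀ x, BddAbove (range fun z : {z : E // z ∉ U} => f z - L * dist x (z : E)) := by
    intro x
    refine ⟨f x, ?_⟩
    rintro _ ⟨z, rfl⟩
    have := hf z x
    rw [dist_comm] at this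
    simp only; linarith
  have hlow : (fun x => ⨆ z : {z : E // z ∉ U}, f z - L * dist x (z : E)) ∈ PerronClass U f L := by
    refine ⟨?_, ?_, ?_⟩
    · intro W hW hWU z hz a b hb h x hx
      refine ciSup_le fun w => ?_
      refine cone_le_cone hW (fun hw => w.2 (hWU hw)) hz hL hb ?_ x hx
      intro y hy
      exact (le_ciSup (hbd y) w).trans (h y hy)
    · intro x hx
      apply le_antisymm
      · refine ciSup_le fun w => ?_
        have := hf w x
        rw [dist_comm] at this
        linarith
      · have := le_ciSup (hbd x) ⟨x, hx⟩
        simpa using this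
    · intro x z hz
      exact le_ciSup (hbd x) ⟨z, hz⟩
  set F := PerronClass U f L with hF
  haveI : Nonempty F := ⟨⟨_, hlow⟩⟩
  have hbF : ∀ x, BddAbove (range fun v : F => v.1 x) := by
    intro x
    refine ⟨f z₀ + L * dist x z₀, ?_⟩
    rintro _ ⟨v, rfl⟩
    have := PerronClass.lip hU hL hf v.2 x z₀
    rwa [v.2.2.1 z₀ hz₀] at this
  set u : E → ℝ := fun x => ⨆ v : F, v.1 x with hu
  have hle : ∀ v ∈ F, ∀ x, v x ≤ u x := fun v hv x => le_ciSup (hbF x) ⟨v, hv⟩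
  have huF : u ∈ F := by
    refine ⟨?_, ?_, ?_⟩
    · intro W hW hWU z hz a b hb h x hx
      refine ciSup_le fun v => ?_
      exact v.2.1 W hW hWU z hz a b hb (fun y hy => (hle v.1 v.2 y).trans (h y hy)) x hx
    · intro x hx
      apply le_antisymm
      · exact ciSup_le fun v => (v.2.2.1 x hx).le
      · exact (hlow.2.1 x hx).symm.le.trans (hle _ hlow x)
    · intro x z hz
      exact (hlow.2.2 x z hz).trans (hle _ hlow x)
  have hulip := PerronClass.lip hU hL hf huF
  refine ⟨u, huF.1, ?_, huF.2.1, hulip⟩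
  have hucont : Continuous u := by
    have : LipschitzWith ⟨L, hL⟩ u := LipschitzWith.of_le_add_mul _ hulip
    exact this.continuous
  intro W hW hWU z hz a b hb h x hx
  by_contra hcon
  push Not at hcon
  -- the bump
  set C : E → ℝ := fun y => -a - b * dist y z with hC
  have hCc : Continuous C := by fun_prop
  set W' : Set E := W ∩ {y | u y < C y} with hW'
  have hW'o : IsOpen W' := hW.inter (isOpen_lt hucont hCc)
  have hxW' : x ∈ W' := ⟨hx, by simp only [hC, mem_setOf_eq]; linarith⟩
  have hfr : ∀ y ∈ frontier W', u y = C y := by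
    intro y hy
    rw [hW'o.frontier_eq] at hy
    have hle1 : u y ≤ C y := by
      have : closure W' ⊆ {y | u y ≤ C y} :=
        closure_minimal (fun y hy => (show u y < C y from hy.2).le) (isClosed_le hucont hCc)
      exact this hy.1
    by_cases hyW : y ∈ W
    · by_contra hne
      exact hy.2 ⟨hyW, lt_of_le_of_ne hle1 hne⟩
    · have : y ∈ frontier W := by
        rw [hW.frontier_eq]; exact ⟨closure_mono inter_subset_left hy.1, hyW⟩
      have := h y this
      apply le_antisymm hle1
      simp only [hC]; linarith
  classical
  set û : E → ℝ := fun y => if y ∈ W' then C y else u y with hû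
  have hule : ∀ y, u y ≤ û y := by
    intro y
    by_cases hy : y ∈ W'
    · simp only [hû, hy, if_true]; exact hy.2.le
    · simp [hû, hy]
  have hûF : û ∈ F := by
    refine ⟨?_, ?_, ?_⟩
    · intro V hV hVU z' hz' a' b' hb' h' y hy
      have huV : ∀ y ∈ V, u y ≤ a' + b' * dist y z' :=
        huF.1 V hV hVU z' hz' a' b' hb' fun y hy => (hule y).trans (h' y hy)
      by_cases hyW : y ∈ W'
      · simp only [hû, hyW, if_true]
        have hVo : IsOpen (V ∩ W') := hV.inter hW'o
        refine cone_le_cone hVo (fun hw => hz hw.2.1) (fun hw => hz' hw.1) hb hb' ?_ y ⟨hy, hyW⟩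
        intro w hw
        rw [hVo.frontier_eq] at hw
        change C w ≤ _
        have hwcl : w ∈ closure W' := closure_mono inter_subset_right hw.1
        by_cases hwV : w ∈ V
        · have hwW : w ∉ W' := fun hh => hw.2 ⟨hwV, hh⟩
          have : w ∈ frontier W' := by rw [hW'o.frontier_eq]; exact ⟨hwcl, hwW⟩
          rw [← hfr w this]; exact huV w hwV
        · have hwf : w ∈ frontier V := by
            rw [hV.frontier_eq]; exact ⟨closure_mono inter_subset_left hw.1, hwV⟩
          have h1 := h' w hwf
          by_cases hwW : w ∈ W'
          · simpa only [hû, hwW, if_true] using h1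
          · have : w ∈ frontier W' := by rw [hW'o.frontier_eq]; exact ⟨hwcl, hwW⟩
            rw [← hfr w this]; exact (hule w).trans h1
      · simp only [hû, hyW, if_false]
        exact huV y hy
    · intro y hy
      have : y ∉ W' := fun hh => hy (hWU hh.1)
      simp only [hû, this, if_false]
      exact huF.2.1 y hy
    · intro y w hw
      exact (huF.2.2 y w hw).trans (hule y)
  have h1 := hle û hûF x
  have h2 : û x = C x := by simp only [hû, hxW', if_true]
  have h3 : u x < C x := hxW'.2
  linarith

lemma lipOn_le_iff_s8 {X : Type*} [MetricSpace X] {u : X → ℝ} {S : Set X} {ℓ : ℝ} (hℓ : 0 ≤ ℓ) :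
    lipOn u S ≤ ENNReal.ofReal ℓ ↔ ∀ x ∈ S, ∀ y ∈ S, u x ≤ u y + ℓ * dist x y := by
  unfold lipOn
  simp only [iSup_le_iff]
  constructor
  · intro h x hx y hy
    by_cases hxy : x = y
    · simp [hxy]
    have h1 := h x hx y hy hxy
    rw [ENNReal.ofReal_le_ofReal_iff hℓ, div_le_iff₀ (dist_pos.2 hxy)] at h1
    have := le_abs_self (u x - u y)
    linarith
  · intro h x hx y hy hxy
    rw [ENNReal.ofReal_le_ofReal_iff hℓ, div_le_iff₀ (dist_pos.2 hxy), abs_le]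
    have h1 := h x hx y hy
    have h2 := h y hy x hx
    rw [dist_comm] at h2
    constructor <;> linarith

lemma am_of_cca {U : Set E} {u : E → ℝ} (hc : Continuous u) (h1 : CCA U u)
    (h2 : CCA U (fun x => - u x)) {V : Set E} (hV : IsOpen V) (hVU : V ⊆ U) :
    lipOn u V = lipOn u (frontier V) := by
  apply le_antisymm
  · by_cases htop : lipOn u (frontier V) = ⊤
    · rw [htop]; exact le_top
    set ℓ := (lipOn u (frontier V)).toReal with hℓ
    have hℓ0 : 0 ≤ ℓ := ENNReal.toReal_nonneg
    have heq : lipOn u (frontier V) = ENNReal.ofReal ℓ := (ENNReal.ofReal_toReal htop).symm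
    have hfr := (lipOn_le_iff_s8 hℓ0).1 heq.le
    rw [heq, lipOn_le_iff_s8 hℓ0]
    intro x hx y hy
    by_cases hxy : x = y
    · simp [hxy]
    refine h1 (V \ {y}) (hV.sdiff isClosed_singleton) (sdiff_subset.trans hVU) y (by simp) (u y) ℓ
      hℓ0 ?_ x ⟨hx, hxy⟩
    intro w hw
    rcases frontier_diff_singleton hV hw with h | h
    · simp [h]
    · have := h2 V hV hVU w (frontier_not_mem hV h) (- u w) ℓ hℓ0 (by
        intro q hq
        have := hfr w h q hq
        rw [dist_comm] at this
        linarith) y hy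
      rw [dist_comm] at this
      linarith
  · by_cases htop : lipOn u V = ⊤
    · rw [htop]; exact le_top
    set ℓ := (lipOn u V).toReal with hℓ
    have hℓ0 : 0 ≤ ℓ := ENNReal.toReal_nonneg
    have heq : lipOn u V = ENNReal.ofReal ℓ := (ENNReal.ofReal_toReal htop).symm
    have hfr := (lipOn_le_iff_s8 hℓ0).1 heq.le
    rw [heq, lipOn_le_iff_s8 hℓ0]
    have hcl : ∀ x ∈ closure V, ∀ y ∈ closure V, u x ≤ u y + ℓ * dist x y := by
      intro x hx y hy
      have hmem : (x, y) ∈ closure (V ×ˢ V) := by rw [closure_prod_eq]; exact ⟨hx, hy⟩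
      have hsub : closure (V ×ˢ V) ⊆ {p : E × E | u p.1 ≤ u p.2 + ℓ * dist p.1 p.2} :=
        closure_minimal (fun p hp => hfr p.1 hp.1 p.2 hp.2)
          (isClosed_le (by fun_prop) (by fun_prop))
      exact hsub hmem
    exact fun x hx y hy => hcl x (frontier_subset_closure hx) y (frontier_subset_closure hy)

end Perron

section Estimate
variable {E : Type*} [NormedAddCommGroup E] [NormedSpace ℝ E]

lemma ball_est {S : Set E} {u : E → ℝ} {r M s : ℝ} (hc : CCA (ball (0 : E) 1) u)
    (hu0 : ∀ x ∈ closedBall (0 : E) 1, 0 ≤ u x)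
    (hz : ∀ x ∈ sphere (0 : E) 1, r ≤ infDist x S → u x = 0)
    (hM : ∀ x ∈ closedBall (0 : E) 1, r ≤ infDist x S → u x ≤ M)
    {y x : E} (hy : y ∈ closedBall (0 : E) 1) (hx : x ∈ closedBall (0 : E) 1) (hs : 0 < s)
    (hys : s + r ≤ infDist y S) (hxy : dist x y ≤ s) :
    (M - u y) * (1 - dist x y / s) ≤ M - u x := by
  have hD : ∀ w, dist w y ≤ s → r ≤ infDist w S := by
    intro w hw
    have := infDist_le_infDist_add_dist (s := S) (x := y) (y := w)
    rw [dist_comm] at this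
    linarith
  have hyM : u y ≤ M := hM y hy (by linarith)
  have hy0 := hu0 y hy
  have hb : 0 ≤ (M - u y) / s := div_nonneg (by linarith) hs.le
  set W : Set E := (ball y s ∩ ball (0 : E) 1) \ {y} with hW
  have hWo : IsOpen W := (isOpen_ball.inter isOpen_ball).sdiff isClosed_singleton
  have key : ∀ w ∈ closedBall (0 : E) 1, dist w y ≤ s → w ∉ W →
      u w ≤ u y + (M - u y) / s * dist w y := by
    intro w hw1 hws hwW
    have hpos := mul_nonneg hb (dist_nonneg (x := w) (y := y))
    by_cases h1 : w = y
    · simp [h1]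
    by_cases h2 : dist w y = s
    · rw [h2, div_mul_cancel₀ _ hs.ne']
      have := hM w hw1 (hD w hws)
      linarith
    have h3 : w ∈ sphere (0 : E) 1 := by
      by_contra h3
      apply hwW
      refine ⟨⟨mem_ball.2 (lt_of_le_of_ne hws h2), mem_ball.2 (lt_of_le_of_ne hw1 h3)⟩, h1⟩
    rw [hz w h3 (hD w hws)]
    linarith
  have main : u x ≤ u y + (M - u y) / s * dist x y := by
    by_cases hxW : x ∈ W
    · refine hc W hWo (fun w hw => hw.1.2) y (fun h => h.2 rfl) (u y) _ hb ?_ x hxW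
      intro w hw
      rw [hWo.frontier_eq] at hw
      refine key w ?_ ?_ hw.2
      · have : closure W ⊆ closedBall (0 : E) 1 :=
          closure_minimal (fun w hw => ball_subset_closedBall hw.1.2) isClosed_closedBall
        exact this hw.1
      · have : closure W ⊆ closedBall y s :=
          closure_minimal (fun w hw => ball_subset_closedBall hw.1.1) isClosed_closedBall
        exact this hw.1
    · exact key x hx hxy hxW
  have : (M - u y) * (1 - dist x y / s) = M - (u y + (M - u y) / s * dist x y) := by
    field_simp; ring
  linarith

lemma depth_le_infDist {S : Set E} (hS : S ⊆ sphere (0 : E) 1) (hne : S.Nonempty) (y : E) :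
    1 - ‖y‖ ≤ infDist y S := by
  rw [le_infDist hne]
  intro s hs
  have h1 : ‖s‖ = 1 := by simpa using hS hs
  have h2 := norm_sub_norm_le s y
  rw [← dist_eq_norm, dist_comm] at h2
  linarith

/-- The chain of balls along the segment. -/
lemma chain_est {S : Set E} {u : E → ℝ} {r M t τ₀ : ℝ} (hc : CCA (ball (0 : E) 1) u)
    (hS : S ⊆ sphere (0 : E) 1) (hne : S.Nonempty)
    (hu0 : ∀ x ∈ closedBall (0 : E) 1, 0 ≤ u x)
    (hz : ∀ x ∈ sphere (0 : E) 1, r ≤ infDist x S → u x = 0)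
    (hM : ∀ x ∈ closedBall (0 : E) 1, r ≤ infDist x S → u x ≤ M)
    (hM0 : 0 ≤ M) (ht : 0 < t) (hτ₀ : 0 < τ₀) (hr : r ≤ τ₀ * t / 2)
    {x z : E} (hx : ‖x‖ = 1 - t) (hzn : ‖z‖ = 1) (hxz : dist x z ≤ 2 * t)
    (h0 : M / 2 ≤ M - u (z + τ₀ • (x - z))) (k : ℕ) :
    ∀ τ : ℝ, τ₀ ≤ τ → τ ≤ 1 → τ ≤ (9 / 8) ^ k * τ₀ →
      M / 2 * (1 / 2) ^ k ≤ M - u (z + τ • (x - z)) := by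
  have hdep : ∀ τ : ℝ, 0 ≤ τ → τ ≤ 1 → ‖z + τ • (x - z)‖ ≤ 1 - τ * t := by
    intro τ h1 h2
    have : z + τ • (x - z) = (1 - τ) • z + τ • x := by
      rw [smul_sub, sub_smul, one_smul]; abel
    rw [this]
    refine (norm_add_le _ _).trans ?_
    rw [norm_smul, norm_smul, hx, hzn, Real.norm_of_nonneg h1,
      Real.norm_of_nonneg (by linarith : (0:ℝ) ≤ 1 - τ)]
    linarith
  have hcb : ∀ τ : ℝ, 0 ≤ τ → τ ≤ 1 → z + τ • (x - z) ∈ closedBall (0 : E) 1 := by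
    intro τ h1 h2
    rw [mem_closedBall_zero_iff]
    have := hdep τ h1 h2
    have := mul_nonneg h1 ht.le
    linarith
  induction k with
  | zero =>
    intro τ h1 h2 h3
    have : τ = τ₀ := le_antisymm (by simpa using h3) h1
    subst this
    simpa using h0
  | succ k ih =>
    intro τ h1 h2 h3
    set σ := max τ₀ (τ * (8 / 9)) with hσ
    have hσ0 : τ₀ ≤ σ := le_max_left _ _
    have hσ1 : σ ≤ τ := max_le h1 (by linarith)
    have hσ2 : τ * (8 / 9) ≤ σ := le_max_right _ _
    have hσ3 : σ ≤ (9 / 8) ^ k * τ₀ := by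
      apply max_le
      · have : (1 : ℝ) ≤ (9 / 8) ^ k := one_le_pow₀ (by norm_num)
        nlinarith
      · rw [pow_succ] at h3; linarith
    have hi := ih σ hσ0 (hσ1.trans h2) hσ3
    have hσp : 0 < σ := by linarith
    have hσt : 0 < σ * t := mul_pos hσp ht
    have hd : dist (z + τ • (x - z)) (z + σ • (x - z)) ≤ σ * t / 4 := by
      rw [dist_eq_norm, add_sub_add_left_eq_sub, ← sub_smul, norm_smul, ← dist_eq_norm x z,
        Real.norm_of_nonneg (by linarith : (0:ℝ) ≤ τ - σ)]
      calc (τ - σ) * dist x z ≤ (σ / 8) * (2 * t) :=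
            mul_le_mul (by linarith) hxz dist_nonneg (by linarith)
        _ = σ * t / 4 := by ring
    have hb := ball_est hc hu0 hz hM (hcb σ hσp.le (hσ1.trans h2)) (hcb τ (by linarith) h2)
      (s := σ * t / 2) (by linarith) (by
        have h4 := depth_le_infDist hS hne (z + σ • (x - z))
        have h5 := hdep σ hσp.le (hσ1.trans h2)
        have h6 := mul_le_mul_of_nonneg_right hσ0 ht.le
        linarith) (by linarith)
    refine le_trans ?_ hb
    have h7 : 1 / 2 ≤ 1 - dist (z + τ • (x - z)) (z + σ • (x - z)) / (σ * t / 2) := by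
      have : dist (z + τ • (x - z)) (z + σ • (x - z)) / (σ * t / 2) ≤ 1 / 2 := by
        rw [div_le_iff₀ (by linarith)]; linarith
      linarith
    have h8 : 0 ≤ M / 2 * (1 / 2) ^ k := by positivity
    calc M / 2 * (1 / 2) ^ (k + 1) = (M / 2 * (1 / 2) ^ k) * (1 / 2) := by ring
      _ ≤ _ := mul_le_mul hi h7 (by norm_num) (h8.trans hi)

lemma diam_sphere_gt {x : E} (hx : ‖x‖ = 1) : 1 < diam (sphere (0 : E) 1) := by
  have h : dist x (-x) ≤ diam (sphere (0 : E) 1) :=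
    dist_le_diam_of_mem isBounded_sphere (by simpa using hx) (by simpa using hx)
  have : dist x (-x) = 2 := by
    rw [dist_eq_norm, sub_neg_eq_add, ← two_smul ℝ x, norm_smul, hx]; norm_num
  linarith

lemma exists_steps {α : ℝ} (h0 : 0 < α) (h1 : α < 1 / 2) :
    ∃ k : ℕ, 1 ≤ (9 / 8 : ℝ) ^ k * (α / 8) ∧ α ^ 31 ≤ 1 / 2 * (1 / 2) ^ k := by
  obtain ⟨m, hm1, hm2⟩ := exists_nat_pow_near (x := 1 / α) (y := 2)
    (by rw [le_div_iff₀ h0]; linarith) (by norm_num)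
  refine ⟨6 * (m + 4), ?_, ?_⟩
  · have h2 : (2 : ℝ) ^ (m + 4) ≤ (9 / 8) ^ (6 * (m + 4)) := by
      rw [pow_mul]
      exact pow_le_pow_left₀ (by norm_num) (by norm_num) _
    rw [div_lt_iff₀ h0] at hm2
    have h3 : (2 : ℝ) ^ (m + 4) = 8 * 2 ^ (m + 1) := by ring
    have h4 := mul_le_mul_of_nonneg_right h2 (by positivity : 0 ≤ α / 8)
    rw [h3] at h4
    linarith
  · have h2 : α ≤ (1 / 2) ^ m := by
      rw [le_div_iff₀ h0] at hm1
      rw [one_div, inv_pow, le_inv_comm₀ h0 (by positivity), ← one_div, le_div_iff₀ h0]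
      exact hm1
    calc α ^ 31 = α ^ 25 * α ^ 6 := by ring
      _ ≤ (1 / 2) ^ 25 * ((1 / 2) ^ m) ^ 6 := by gcongr
      _ = 1 / 2 * (1 / 2) ^ (6 * (m + 4)) := by
        rw [← pow_mul]; ring

lemma step_est {S : Set E} {u : E → ℝ} {r M α : ℝ} (hc : CCA (ball (0 : E) 1) u)
    (hS : S ⊆ sphere (0 : E) 1) (hne : S.Nonempty)
    (hpor : IsPorousIn α S (sphere (0 : E) 1)) (hα0 : 0 < α) (hα1 : α < 1 / 2)
    (hu0 : ∀ x ∈ closedBall (0 : E) 1, 0 ≤ u x)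
    (hz : ∀ x ∈ sphere (0 : E) 1, r ≤ infDist x S → u x = 0)
    (hM : ∀ x ∈ closedBall (0 : E) 1, r ≤ infDist x S → u x ≤ M)
    (hM0 : 0 ≤ M) (hr : 0 < r) {x : E} (hx : x ∈ closedBall (0 : E) 1)
    (hxr : 64 / α * r ≤ infDist x S) : u x ≤ (1 - α ^ 31) * M := by
  have hx1 : ‖x‖ ≤ 1 := by simpa using hx
  obtain ⟨s₀, hs₀⟩ := hne
  have hs₀n : ‖s₀‖ = 1 := by simpa using hS hs₀
  set d := infDist x S with hd
  have hKr : 64 * r ≤ α * d := by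
    have := mul_le_mul_of_nonneg_left hxr hα0.le
    rwa [← mul_assoc, mul_div_cancel₀ _ hα0.ne'] at this
  have hdpos : 0 < d := by
    by_contra h
    have := mul_nonneg hα0.le (by linarith : 0 ≤ -d)
    linarith
  have hdr : 128 * r ≤ d := by nlinarith
  obtain ⟨z, hzn, hxz⟩ : ∃ z : E, ‖z‖ = 1 ∧ dist x z = 1 - ‖x‖ := by
    by_cases h : x = 0
    · exact ⟨s₀, hs₀n, by simp [h, hs₀n]⟩
    · have hxp : 0 < ‖x‖ := norm_pos_iff.2 h
      refine ⟨‖x‖⁻¹ • x, ?_, ?_⟩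
      · rw [norm_smul, norm_inv, norm_norm, inv_mul_cancel₀ hxp.ne']
      · have : x - ‖x‖⁻¹ • x = (1 - ‖x‖⁻¹) • x := by rw [sub_smul, one_smul]
        rw [dist_eq_norm, this, norm_smul, Real.norm_of_nonpos]
        · field_simp; ring
        · have := (one_le_inv₀ hxp).2 hx1
          linarith
  set t := 1 - ‖x‖ with ht
  have ht0 : 0 ≤ t := by linarith
  have hzs : z ∈ sphere (0 : E) 1 := by simpa using hzn
  have hzcb : z ∈ closedBall (0 : E) 1 := sphere_subset_closedBall hzs
  have hαp : α ^ 31 ≤ 1 / 2 := by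
    calc α ^ 31 ≤ (1 / 2) ^ 31 := by gcongr
      _ ≤ 1 / 2 := by norm_num
  rcases le_or_gt t (d / 4) with hcase | hcase
  · have h1 : d ≤ infDist z S + t := by
      rw [← hxz]; exact infDist_le_infDist_add_dist
    have hb := ball_est hc hu0 hz hM hzcb hx (s := d / 2) (by linarith) (by linarith)
      (by linarith)
    rw [hz z hzs (by linarith), hxz] at hb
    have h2 : t / (d / 2) ≤ 1 / 2 := by rw [div_le_iff₀ (by linarith)]; linarith
    have h3 : M * (1 / 2) ≤ (M - 0) * (1 - t / (d / 2)) := by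
      rw [sub_zero]; exact mul_le_mul_of_nonneg_left (by linarith) hM0
    nlinarith
  · have htp : 0 < t := by linarith
    have hrt : 16 * r ≤ α * t := by nlinarith
    have hαt : 0 < α * t := mul_pos hα0 htp
    obtain ⟨z', hz's, hz'1, hz'2⟩ := hpor t htp
      (lt_of_le_of_lt (by linarith [norm_nonneg x]) (diam_sphere_gt hzn)) z hzs
    have hz'n : ‖z'‖ = 1 := by simpa using hz's
    have hzz' : dist z' z < t := hz'1 ⟨mem_ball_self hαt, hz's⟩
    have hxz' : dist x z' ≤ 2 * t := by
      have := dist_triangle x z z'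
      rw [dist_comm z z'] at this
      linarith
    have hinf : α * t ≤ infDist z' S := by
      rw [le_infDist ⟨s₀, hs₀⟩]
      intro s hs
      by_contra hcon
      have : s ∈ ball z' (α * t) ∩ S := ⟨by rw [mem_ball']; linarith, hs⟩
      rw [hz'2] at this
      exact this
    have huz' : u z' = 0 := hz z' hz's (by linarith)
    have hnx : ‖x‖ = 1 - t := by rw [ht]; ring
    have hp : ‖z' + (α / 8) • (x - z')‖ ≤ 1 := by
      have : z' + (α / 8) • (x - z') = (1 - α / 8) • z' + (α / 8) • x := by
        rw [smul_sub, sub_smul, one_smul]; abel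
      rw [this]
      refine (norm_add_le _ _).trans ?_
      rw [norm_smul, norm_smul, hz'n, Real.norm_of_nonneg (by linarith : (0:ℝ) ≤ α / 8),
        Real.norm_of_nonneg (by linarith : (0:ℝ) ≤ 1 - α / 8)]
      nlinarith
    have hpd : dist (z' + (α / 8) • (x - z')) z' ≤ α * t / 4 := by
      rw [dist_eq_norm, add_sub_cancel_left, norm_smul, ← dist_eq_norm,
        Real.norm_of_nonneg (by linarith : (0:ℝ) ≤ α / 8)]
      nlinarith
    have h0 : M / 2 ≤ M - u (z' + (α / 8) • (x - z')) := by
      have hb := ball_est hc hu0 hz hM (sphere_subset_closedBall hz's)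
        (x := z' + (α / 8) • (x - z')) (by simpa using hp) (s := α * t / 2) (by linarith)
        (by linarith) (by linarith)
      rw [huz', sub_zero] at hb
      have h2 : dist (z' + (α / 8) • (x - z')) z' / (α * t / 2) ≤ 1 / 2 := by
        rw [div_le_iff₀ (by linarith)]; linarith
      have h3 := mul_le_mul_of_nonneg_left h2 hM0
      linarith
    obtain ⟨k, hk1, hk2⟩ := exists_steps hα0 hα1
    have := chain_est hc hS ⟨s₀, hs₀⟩ hu0 hz hM hM0 htp (by linarith : 0 < α / 8)
      (by linarith) hnx hz'n hxz' h0 k 1 (by linarith) le_rfl hk1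
    rw [one_smul, add_sub_cancel] at this
    have h4 := mul_le_mul_of_nonneg_left hk2 hM0
    linarith

lemma numeric {α δ c : ℝ} (hα0 : 0 < α) (hα1 : α < 1 / 2) (hδ : 0 < δ) (hδ1 : δ < α / 128)
    (hc : ∀ j : ℕ, 2 * δ * (64 / α) ^ j ≤ 1 → c ≤ (1 - α ^ 31) ^ j) :
    c ≤ δ ^ (α ^ (40 : ℝ)) := by
  set K := 64 / α with hK
  have hK1 : 128 ≤ K := by rw [hK, le_div_iff₀ hα0]; linarith
  obtain ⟨j, hj1, hj2⟩ := exists_nat_pow_near (x := 1 / (2 * δ)) (y := K)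
    (by rw [le_div_iff₀ (by linarith)]; linarith) (by linarith)
  rw [le_div_iff₀ (by linarith)] at hj1
  rw [div_lt_iff₀ (by linarith)] at hj2
  refine (hc j (by linarith)).trans ?_
  have hj : 1 ≤ j := by
    by_contra h
    have : j = 0 := by omega
    subst this
    rw [zero_add, pow_one, hK, div_mul_eq_mul_div, lt_div_iff₀ hα0] at hj2
    linarith
  have hα40 : α ^ (40 : ℝ) = α ^ 40 := by
    rw [← Real.rpow_natCast]; norm_num
  rw [hα40, Real.rpow_def_of_pos hδ]
  have hαp : α ^ 31 ≤ 1 / 2 := by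
    calc α ^ 31 ≤ (1 / 2) ^ 31 := by gcongr
      _ ≤ 1 / 2 := by norm_num
  calc (1 - α ^ 31) ^ j ≤ (Real.exp (-(α ^ 31))) ^ j :=
        pow_le_pow_left₀ (by linarith) (Real.one_sub_le_exp_neg _) _
    _ = Real.exp (-(α ^ 31) * j) := by rw [← Real.exp_nat_mul]; ring_nf
    _ ≤ _ := by
      apply Real.exp_le_exp.2
      have hKp : 0 < K := by linarith
      have h1 : 1 / δ ≤ K ^ (3 * j) := by
        rw [div_le_iff₀ hδ]
        have h2 : K ^ (j + 2) ≤ K ^ (3 * j) := pow_le_pow_right₀ (by linarith) (by omega)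
        have h3 : 2 * K ^ (j + 1) ≤ K ^ (j + 2) := by
          rw [pow_succ K (j + 1), mul_comm]
          exact mul_le_mul_of_nonneg_left (by linarith) (by positivity)
        have h4 := mul_le_mul_of_nonneg_right (h3.trans h2) hδ.le
        linarith
      have h2 := Real.log_le_log (by positivity) h1
      rw [one_div, Real.log_inv, Real.log_pow] at h2
      have h3 : Real.log K ≤ K := (Real.log_le_sub_one_of_pos hKp).trans (by linarith)
      have h4 : - Real.log δ ≤ 3 * j * K := by
        refine h2.trans ?_
        push_cast
        exact mul_le_mul_of_nonneg_left h3 (by positivity)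
      have h5 := mul_le_mul_of_nonneg_left h4 (by positivity : 0 ≤ α ^ 40)
      have h6 : α ^ 40 * (3 * j * K) = α ^ 31 * j * (192 * α ^ 8) := by
        rw [hK]; field_simp; ring
      have h7 : 192 * α ^ 8 ≤ 1 := by
        have : α ^ 8 ≤ (1 / 2) ^ 8 := by gcongr
        norm_num at this
        linarith
      have h8 := mul_le_mul_of_nonneg_left h7 (by positivity : 0 ≤ α ^ 31 * j)
      rw [h6] at h5
      linarith

end Estimate

lemma omegaInf_le {n : ℕ} {A : Set (Euc n)} {u : Euc n → ℝ}
    (h1 : ∀ x ∈ closedBall (0 : Euc n) 1, 0 ≤ u x)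
    (h2 : ∃ K : NNReal, LipschitzOnWith K u (closedBall (0 : Euc n) 1))
    (h3 : ∀ V : Set (Euc n), IsOpen V → V ⊆ ball (0 : Euc n) 1 →
      lipOn u V = lipOn u (frontier V))
    (h4 : ∀ x ∈ A, 1 ≤ u x) : omegaInf n A ≤ u 0 := by
  refine csInf_le ⟨0, ?_⟩ ⟨u, h1, h2, h3, h4, rfl⟩
  rintro t ⟨v, hv, -, -, -, rfl⟩
  exact hv 0 (by simp)

lemma main_est {n : ℕ} {α δ : ℝ} {S : Set (Euc n)} (hα0 : 0 < α) (hα1 : α < 1 / 2)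
    (hδ : 0 < δ) (hδ1 : δ < α / 128) (hS : S ⊆ sphere (0 : Euc n) 1)
    (hne : S.Nonempty) (hpor : IsPorousIn α S (sphere (0 : Euc n) 1)) :
    omegaInf n {y : Euc n | y ∈ sphere (0 : Euc n) 1 ∧ ∃ s ∈ S, dist y s ≤ δ} ≤
      δ ^ (α ^ (40 : ℝ)) := by
  set f : Euc n → ℝ := fun x => max 0 (min 1 (2 - infDist x S / δ)) with hf
  have hL : 0 ≤ δ⁻¹ := (inv_pos.2 hδ).le
  have hflip : ∀ x y, f x ≤ f y + δ⁻¹ * dist x y := by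
    intro x y
    have h1 : infDist y S ≤ infDist x S + dist y x := infDist_le_infDist_add_dist
    have h2 := mul_le_mul_of_nonneg_left h1 hL
    have h3 := mul_nonneg hL (dist_nonneg (x := x) (y := y))
    rw [dist_comm y x, mul_add] at h2
    simp only [hf, div_eq_inv_mul]
    rw [max_add, min_add]
    apply max_le_max (by linarith)
    apply min_le_min <;> linarith
  have hf0 : ∀ x, 0 ≤ f x := fun x => le_max_left _ _
  have hf1 : ∀ x, f x ≤ 1 := fun x => max_le zero_le_one (min_le_left _ _)
  obtain ⟨s₀, hs₀⟩ := id hne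
  have hs₀U : s₀ ∉ ball (0 : Euc n) 1 := by
    have : ‖s₀‖ = 1 := by simpa using hS hs₀
    simp [this]
  obtain ⟨u, hA, hB, huf, hlip⟩ := exists_perron isOpen_ball hs₀U hL hflip
  have hLip : LipschitzWith ⟨δ⁻¹, hL⟩ u := LipschitzWith.of_le_add_mul _ hlip
  have hu0 : ∀ x, 0 ≤ u x := by
    intro x
    by_cases hx : x ∈ ball (0 : Euc n) 1
    · have := hB _ isOpen_ball subset_rfl s₀ hs₀U 0 0 le_rfl (by
        intro y hy
        have h1 := huf y (frontier_not_mem isOpen_ball hy)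
        have := hf0 y
        simp only
        linarith) x hx
      linarith
    · rw [huf x hx]; exact hf0 x
  have hu1 : ∀ x, u x ≤ 1 := by
    intro x
    by_cases hx : x ∈ ball (0 : Euc n) 1
    · have := hA _ isOpen_ball subset_rfl s₀ hs₀U 1 0 le_rfl (by
        intro y hy
        rw [huf y (frontier_not_mem isOpen_ball hy)]
        have := hf1 y
        linarith) x hx
      linarith
    · rw [huf x hx]; exact hf1 x
  have hsph : ∀ x ∈ sphere (0 : Euc n) 1, u x = f x := by
    intro x hx
    apply huf
    have : ‖x‖ = 1 := by simpa using hx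
    simp [this]
  have hz : ∀ r, 2 * δ ≤ r → ∀ x ∈ sphere (0 : Euc n) 1, r ≤ infDist x S → u x = 0 := by
    intro r hr x hx hxr
    rw [hsph x hx]
    apply max_eq_left
    refine (min_le_right _ _).trans ?_
    have : 2 ≤ infDist x S / δ := by rw [le_div_iff₀ hδ]; linarith
    linarith
  refine (omegaInf_le (u := u) (fun x _ => hu0 x) ⟨_, hLip.lipschitzOnWith⟩
    (fun V hV hVU => am_of_cca hLip.continuous hA hB hV hVU) ?_).trans ?_
  · rintro y ⟨hy, s, hs, hys⟩
    rw [hsph y hy]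
    refine le_max_of_le_right (le_min le_rfl ?_)
    have h1 := (infDist_le_dist_of_mem (x := y) hs).trans hys
    have : infDist y S / δ ≤ 1 := by rw [div_le_one hδ]; exact h1
    linarith
  · refine numeric hα0 hα1 hδ hδ1 fun j hj => ?_
    have hK1 : 1 ≤ 64 / α := by rw [le_div_iff₀ hα0]; linarith
    have hαp : α ^ 31 ≤ 1 := pow_le_one₀ hα0.le (by linarith)
    have key : ∀ j : ℕ, ∀ x ∈ closedBall (0 : Euc n) 1, 2 * δ * (64 / α) ^ j ≤ infDist x S →
        u x ≤ (1 - α ^ 31) ^ j := by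
      intro j
      induction j with
      | zero => intro x _ _; simpa using hu1 x
      | succ j ih =>
        intro x hx hxr
        rw [pow_succ']
        have hp : 1 ≤ (64 / α) ^ j := one_le_pow₀ hK1
        refine step_est hA hS hne hpor hα0 hα1 (fun x _ => hu0 x)
          (hz (2 * δ * (64 / α) ^ j) (by nlinarith)) ih (pow_nonneg (by linarith) _)
          (by positivity) hx ?_
        refine le_trans (le_of_eq ?_) hxr
        ring
    apply key j 0 (by simp)
    have := depth_le_infDist hS hne (0 : Euc n)
    rw [norm_zero] at this
    linarith

/-- There is a universal `C > 0` such that for all `n ≥ 2` and `α ∈ (0, 1/2)` there is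
`δ₀ > 0` with: for every `δ ∈ (0, δ₀)` and every `α`-porous subset `S` of the unit
sphere of `ℝⁿ`, the `∞`-harmonic measure (from the center of the ball) of the closed
`δ`-neighborhood of `S` in the sphere is at most `δ^(α^C)`. -/
theorem stmt8 :
    ∃ C : ℝ, 0 < C ∧
      ∀ n : ℕ, 2 ≤ n → ∀ α : ℝ, 0 < α → α < 1 / 2 →
        ∃ δ₀ : ℝ, 0 < δ₀ ∧
          ∀ δ : ℝ, 0 < δ → δ < δ₀ →
            ∀ S : Set (Euc n), S ⊆ sphere (0 : Euc n) 1 →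
              IsPorousIn α S (sphere (0 : Euc n) 1) →
              omegaInf n
                  {y : Euc n | y ∈ sphere (0 : Euc n) 1 ∧ ∃ s ∈ S, dist y s ≤ δ} ≤
                δ ^ (α ^ C) := by
  refine ⟨40, by norm_num, fun n _ α hα0 hα1 => ⟨α / 128, by positivity, ?_⟩⟩
  intro δ hδ hδ1 S hS hpor
  rcases S.eq_empty_or_nonempty with rfl | hne
  · have h : omegaInf n {y : Euc n | y ∈ sphere (0 : Euc n) 1 ∧
        ∃ s ∈ (∅ : Set (Euc n)), dist y s ≤ δ} ≤ (fun _ : Euc n => (0 : ℝ)) 0 := by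
      refine omegaInf_le (fun _ _ => le_rfl) ⟨0, (LipschitzWith.const 0).lipschitzOnWith⟩ ?_ ?_
      · intro V _ _
        simp [lipOn]
      · rintro x ⟨-, s, hs, -⟩
        exact absurd hs (notMem_empty s)
    exact h.trans (Real.rpow_nonneg hδ.le _)
  · exact main_est hα0 hα1 hδ hδ1 hS hne hpor

end
end

section
/- Let X be a length space, Y ⊆ X nonempty, and F : Y → ℝ continuous with 0 ≤ F ≤ 1; let S ⊆ Y be the support of F (the closure of {y ∈ Y : F(y) ≠ 0}). Suppose there exist an integer k ≥ 1 and constants ε₀ > 0, d_min > 0 and γ ∈ (0,1) such that for every x ∈ X with d(x,S) ≥ d_min there are points x = z₀, z₁, …, z_k with z_k ∈ Y, F(z_k) = 0, and d(zᵢ,S) ≥ 2·d(zᵢ,z_{i−1}) + 2ε₀ + γ·d(z₀,S) for i = 1,…,k. Then every absolutely minimal (AM) extension u : X → ℝ of F satisfies 0 ≤ u(x) ≤ (1 − 2^{−k})^{log_γ(d_min/d(x,S))} for every x ∈ X with d(x,S) > 0. -/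
open Metric Set

noncomputable section

/-- The length of a continuous path: its total variation. -/
def pathLength {X : Type*} [MetricSpace X] {x y : X} (γ : Path x y) : ENNReal :=
  eVariationOn (fun t => γ t) (Set.univ : Set unitInterval)

/-- A metric space is a length space if the distance between any two points equals the
infimum of the lengths of continuous paths joining them. -/
def IsLengthSpace (X : Type*) [MetricSpace X] : Prop :=
  ∀ x y : X, edist x y = ⨅ γ : Path x y, pathLength γ

/-- `u : X → ℝ` is an absolutely minimal (AM) extension of `F` prescribed on `Y`:
`u` is Lipschitz, `u = F` on `Y`, and `Lip_U u = Lip_{∂U} u` for every open `U ⊆ X \ Y`. -/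
def IsAMExtension {X : Type*} [MetricSpace X] (Y : Set X) (F u : X → ℝ) : Prop :=
  lipOn u Set.univ < ⊤ ∧ Set.EqOn u F Y ∧
    ∀ U : Set X, IsOpen U → U ⊆ Yᶜ → lipOn u U = lipOn u (frontier U)

theorem am_lip {X : Type*} [MetricSpace X] {Y : Set X} {F u : X → ℝ}
    (hu : IsAMExtension Y F u) : ∃ K : NNReal, LipschitzWith K u := by
  refine ⟨(lipOn u Set.univ).toNNReal, LipschitzWith.of_dist_le_mul fun x y => ?_⟩
  by_cases hxy : x = y
  · simp [hxy]
  have h1 : ENNReal.ofReal (|u x - u y| / dist x y) ≤ lipOn u Set.univ := by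
    unfold lipOn
    refine le_iSup_of_le x (le_iSup_of_le (Set.mem_univ x) (le_iSup_of_le y
      (le_iSup_of_le (Set.mem_univ y) (le_iSup_of_le hxy le_rfl))))
  have h2 := ENNReal.toReal_mono hu.1.ne h1
  have hd : 0 < dist x y := dist_pos.2 hxy
  rw [ENNReal.toReal_ofReal (by positivity), div_le_iff₀ hd] at h2
  rw [Real.dist_eq]
  exact h2

theorem am_frontier {X : Type*} [MetricSpace X] {Y : Set X} {F u : X → ℝ}
    (hu : IsAMExtension Y F u) {U : Set X} (hU : IsOpen U) (hUY : U ⊆ Yᶜ) {b : ℝ} (hb : 0 ≤ b)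
    (h : ∀ p ∈ frontier U, ∀ q ∈ frontier U, |u p - u q| ≤ b * dist p q)
    {x y : X} (hx : x ∈ U) (hy : y ∈ frontier U) : |u x - u y| ≤ b * dist x y := by
  obtain ⟨K, hK⟩ := am_lip hu
  have huc : Continuous u := hK.continuous
  have h1 : lipOn u U ≤ ENNReal.ofReal b := by
    rw [hu.2.2 U hU hUY]
    unfold lipOn
    refine iSup_le fun p => iSup_le fun hp => iSup_le fun q => iSup_le fun hq => iSup_le fun hpq => ?_
    apply ENNReal.ofReal_le_ofReal
    rw [div_le_iff₀ (dist_pos.2 hpq)]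
    exact h p hp q hq
  have h2 : ∀ y ∈ U, |u x - u y| ≤ b * dist x y := by
    intro y hy
    by_cases hxy : x = y
    · simp [hxy]
    have h3 : ENNReal.ofReal (|u x - u y| / dist x y) ≤ lipOn u U := by
      unfold lipOn
      refine le_iSup_of_le x (le_iSup_of_le hx (le_iSup_of_le y
        (le_iSup_of_le hy (le_iSup_of_le hxy le_rfl))))
    have h4 := (ENNReal.ofReal_le_ofReal_iff hb).1 (h3.trans h1)
    rwa [div_le_iff₀ (dist_pos.2 hxy)] at h4
  have hc : IsClosed {y | |u x - u y| ≤ b * dist x y} :=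
    isClosed_le (by fun_prop) (by fun_prop)
  exact closure_minimal h2 hc (frontier_subset_closure hy)

theorem path_cross {X : Type*} [MetricSpace X] (hX : IsLengthSpace X) {U : Set X} {x z : X}
    (hx : x ∈ U) (hz : z ∉ U) {δ : ℝ} (hδ : 0 < δ) :
    ∃ y ∈ frontier U, dist x y + dist y z ≤ dist x z + δ := by
  have h1 : (⨅ γ : Path x z, pathLength γ) < edist x z + ENNReal.ofReal δ := by
    rw [← hX x z]
    exact ENNReal.lt_add_right (edist_ne_top x z) (by simpa using hδ)
  obtain ⟨γ, hγ⟩ := iInf_lt_iff.1 h1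
  have hpre : IsPreconnected (Set.range γ) := isPreconnected_range γ.continuous
  have h0 : (Set.range γ ∩ frontier U).Nonempty := by
    by_contra hne
    have hd : Set.range γ ∩ frontier U = ∅ := Set.not_nonempty_iff_eq_empty.1 hne
    have := hpre (interior U) (closure U)ᶜ isOpen_interior isClosed_closure.isOpen_compl
      (by
        intro w hw
        by_contra hcon
        simp only [Set.mem_union, Set.mem_compl_iff, not_or, not_not] at hcon
        exact (Set.eq_empty_iff_forall_notMem.1 hd w) ⟨hw, hcon.2, hcon.1⟩)
      ⟨x, ⟨0, by simp⟩, by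
        by_contra hcon
        exact (Set.eq_empty_iff_forall_notMem.1 hd x) ⟨⟨0, by simp⟩, subset_closure hx, hcon⟩⟩
      ⟨z, ⟨1, by simp⟩, by
        intro hcon
        exact (Set.eq_empty_iff_forall_notMem.1 hd z)
          ⟨⟨1, by simp⟩, hcon, fun h => hz (interior_subset h)⟩⟩
    obtain ⟨w, _, hw1, hw2⟩ := this
    exact hw2 (interior_subset_closure hw1)
  obtain ⟨y, ⟨t, rfl⟩, hy⟩ := h0
  refine ⟨γ t, hy, ?_⟩
  have h2 : edist x (γ t) + edist (γ t) z ≤ pathLength γ := by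
    have ha : edist x (γ t) ≤ eVariationOn (fun t => γ t) (Set.Iic t) := by
      have := eVariationOn.edist_le (fun t => γ t) (s := Set.Iic t) (x := 0) (y := t)
        (by simp) (by simp)
      simpa using this
    have hb : edist (γ t) z ≤ eVariationOn (fun t => γ t) (Set.Ici t) := by
      have := eVariationOn.edist_le (fun t => γ t) (s := Set.Ici t) (x := t) (y := 1)
        (by simp) (by simpa using unitInterval.le_one')
      simpa using this
    refine (add_le_add ha hb).trans ?_
    refine (eVariationOn.add_le_union (fun t => γ t) (s := Set.Iic t) (t := Set.Ici t)
      (fun a ha b hb => le_trans ha hb)).trans ?_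
    exact eVariationOn.mono _ (Set.subset_univ _)
  have h3 := h2.trans hγ.le
  rw [edist_dist, edist_dist, edist_dist, ← ENNReal.ofReal_add dist_nonneg dist_nonneg,
    ← ENNReal.ofReal_add dist_nonneg hδ.le] at h3
  exact (ENNReal.ofReal_le_ofReal_iff (by positivity)).1 h3

theorem am_level {X : Type*} [MetricSpace X] (hX : IsLengthSpace X) {Y : Set X}
    (hY : Y.Nonempty) {F u : X → ℝ}
    (hu : IsAMExtension Y F u) {U : Set X} (hU : IsOpen U) (hUY : U ⊆ Yᶜ) {c : ℝ}
    (hc : ∀ p ∈ frontier U, u p = c) {x : X} (hx : x ∈ U) : u x = c := by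
  obtain ⟨y0, hy0⟩ := hY
  obtain ⟨y, hy, _⟩ := path_cross hX hx (fun h => hUY h hy0) one_pos
  have := am_frontier hu hU hUY (le_refl 0) (fun p hp q hq => by simp [hc p hp, hc q hq]) hx hy
  rw [hc y hy] at this
  have h2 : |u x - c| = 0 := le_antisymm (by simpa using this) (abs_nonneg _)
  linarith [abs_eq_zero.1 h2]

theorem am_le {X : Type*} [MetricSpace X] (hX : IsLengthSpace X) {Y : Set X}
    (hY : Y.Nonempty) {F u : X → ℝ} (hu : IsAMExtension Y F u)
    (hF : ∀ y ∈ Y, F y ≤ 1) (x : X) : u x ≤ 1 := by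
  obtain ⟨K, hK⟩ := am_lip hu
  by_contra! hx
  have hU : IsOpen {w | 1 < u w} := isOpen_lt continuous_const hK.continuous
  have := am_level hX hY hu hU (c := 1) (fun w hw hwY => by
      have := hF w hwY
      rw [← hu.2.1 hwY] at this
      exact absurd hw (not_lt.2 this))
    (fun p hp => (frontier_lt_subset_eq continuous_const hK.continuous hp).symm) (x := x) hx
  linarith

theorem am_ge {X : Type*} [MetricSpace X] (hX : IsLengthSpace X) {Y : Set X}
    (hY : Y.Nonempty) {F u : X → ℝ} (hu : IsAMExtension Y F u)
    (hF : ∀ y ∈ Y, 0 ≤ F y) (x : X) : 0 ≤ u x := by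
  obtain ⟨K, hK⟩ := am_lip hu
  by_contra! hx
  have hU : IsOpen {w | u w < 0} := isOpen_lt hK.continuous continuous_const
  have := am_level hX hY hu hU (c := 0) (fun w hw hwY => by
      have := hF w hwY
      rw [← hu.2.1 hwY] at this
      exact absurd hw (not_lt.2 this))
    (fun p hp => frontier_lt_subset_eq hK.continuous continuous_const hp) (x := x) hx
  linarith

theorem am_cone {X : Type*} [MetricSpace X] (hX : IsLengthSpace X) {Y : Set X}
    {F u : X → ℝ} (hu : IsAMExtension Y F u) {z : X} {R M : ℝ} (hR : 0 < R)
    (hM : ∀ w, dist w z ≤ R → u w ≤ M) (hY0 : ∀ w ∈ Y, dist w z ≤ R → u w ≤ u z)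
    {x : X} (hx : dist x z < R) : u x ≤ u z + (M - u z) / R * dist x z := by
  obtain ⟨K, hK⟩ := am_lip hu
  have huc := hK.continuous
  have hMz : u z ≤ M := hM z (by simpa using hR.le)
  set b := (M - u z) / R with hb
  have hb0 : 0 ≤ b := div_nonneg (by linarith) hR.le
  have hbR : b * R = M - u z := by rw [hb]; field_simp
  by_contra! hcon
  set U : Set X := {w | dist w z < R ∧ u z + b * dist w z < u w} with hUdef
  have hU : IsOpen U := by
    have h1 : IsOpen {w | dist w z < R} := isOpen_lt (by fun_prop) (by fun_prop)
    have h2 : IsOpen {w | u z + b * dist w z < u w} := isOpen_lt (by fun_prop) (by fun_prop)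
    exact h1.inter h2
  have hUY : U ⊆ Yᶜ := by
    rintro w ⟨h1, h2⟩ hwY
    have := hY0 w hwY h1.le
    have : 0 ≤ b * dist w z := by positivity
    linarith
  have hfr : ∀ p ∈ frontier U, u p = u z + b * dist p z := by
    intro p hp
    have hcl : p ∈ {w | dist w z ≤ R ∧ u z + b * dist w z ≤ u w} := by
      have h1 : IsClosed {w | dist w z ≤ R} := isClosed_le (by fun_prop) (by fun_prop)
      have h2 : IsClosed {w | u z + b * dist w z ≤ u w} :=
        isClosed_le (by fun_prop) (by fun_prop)
      have hsub : U ⊆ {w | dist w z ≤ R} ∩ {w | u z + b * dist w z ≤ u w} :=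
        fun w hw => ⟨hw.1.le, hw.2.le⟩
      exact closure_minimal hsub (h1.inter h2) (frontier_subset_closure hp)
    have hnot : p ∉ U := by
      have := hp.2
      rwa [hU.interior_eq] at this
    refine le_antisymm ?_ hcl.2
    rcases hcl.1.lt_or_eq with hlt | heq
    · by_contra! h
      exact hnot ⟨hlt, h⟩
    · rw [heq, hbR]
      linarith [hM p hcl.1]
  have hlip : ∀ p ∈ frontier U, ∀ q ∈ frontier U, |u p - u q| ≤ b * dist p q := by
    intro p hp q hq
    rw [hfr p hp, hfr q hq]
    have : u z + b * dist p z - (u z + b * dist q z) = b * (dist p z - dist q z) := by ring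
    rw [this, abs_mul, abs_of_nonneg hb0]
    exact mul_le_mul_of_nonneg_left (abs_dist_sub_le p q z) hb0
  have hxU : x ∈ U := ⟨hx, hcon⟩
  have hzU : z ∉ U := by
    rintro ⟨_, h⟩
    simp at h
  have key : ∀ δ : ℝ, 0 < δ → u x ≤ u z + b * dist x z + b * δ := by
    intro δ hδ
    obtain ⟨y, hy, hd⟩ := path_cross hX hxU hzU hδ
    have h1 := (abs_le.1 (am_frontier hu hU hUY hb0 hlip hxU hy)).2
    rw [hfr y hy] at h1
    have := mul_le_mul_of_nonneg_left hd hb0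
    linarith
  set g := u x - (u z + b * dist x z) with hg
  have hg0 : 0 < g := by linarith
  have := key (g / (2 * (b + 1))) (by positivity)
  have h5 : b * (g / (2 * (b + 1))) < g := by
    rw [mul_div_assoc', div_lt_iff₀ (by positivity)]
    nlinarith
  linarith

/-- The game-plan lemma: if `0 ≤ F ≤ 1` on `Y` with support `S`, and from every point at
distance at least `dmin` from `S` there is a `k`-step plan `z₀, …, z_k` ending at a zero
of `F` on `Y` with `d(zᵢ, S) ≥ 2 d(zᵢ, z_{i-1}) + 2ε₀ + γ d(z₀, S)`, then every AM
extension `u` of `F` satisfies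
`0 ≤ u(x) ≤ (1 - 2^{-k})^{log_γ (dmin / d(x,S))}`. -/
theorem stmt9 {X : Type*} [MetricSpace X] (hX : IsLengthSpace X)
    (Y : Set X) (hY : Y.Nonempty) (F : X → ℝ)
    (hFc : ContinuousOn F Y) (hF01 : ∀ y ∈ Y, F y ∈ Set.Icc (0 : ℝ) 1)
    (S : Set X) (hS : S = Y ∩ closure {y | y ∈ Y ∧ F y ≠ 0})
    (k : ℕ) (hk : 1 ≤ k) (ε₀ dmin γ : ℝ)
    (hε₀ : 0 < ε₀) (hdmin : 0 < dmin) (hγ : γ ∈ Set.Ioo (0 : ℝ) 1)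
    (hplan : ∀ x : X, dmin ≤ Metric.infDist x S →
      ∃ z : ℕ → X, z 0 = x ∧ z k ∈ Y ∧ F (z k) = 0 ∧
        ∀ i : ℕ, 1 ≤ i → i ≤ k →
          2 * dist (z i) (z (i - 1)) + 2 * ε₀ + γ * Metric.infDist (z 0) S ≤
            Metric.infDist (z i) S)
    (u : X → ℝ) (hu : IsAMExtension Y F u) :
    ∀ x : X, 0 < Metric.infDist x S →
      0 ≤ u x ∧
        u x ≤ (1 - (1 / 2 : ℝ) ^ k) ^ Real.logb γ (dmin / Metric.infDist x S) := by
  obtain ⟨hγ0, hγ1⟩ := hγ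
  have hu1 := am_le hX hY hu (fun y hy => (hF01 y hy).2)
  have hu0 := am_ge hX hY hu (fun y hy => (hF01 y hy).1)
  have hYz : ∀ w ∈ Y, 0 < Metric.infDist w S → u w = 0 := by
    intro w hw hpos
    by_contra hne
    rw [hu.2.1 hw] at hne
    have hwS : w ∈ S := by
      rw [hS]
      exact ⟨hw, subset_closure ⟨hw, hne⟩⟩
    rw [Metric.infDist_zero_of_mem hwS] at hpos
    exact lt_irrefl _ hpos
  set q : ℝ := 1 - (1 / 2 : ℝ) ^ k with hq
  have hhalf : (1 / 2 : ℝ) ^ k ≤ 1 / 2 := by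
    calc (1 / 2 : ℝ) ^ k ≤ (1 / 2 : ℝ) ^ 1 :=
          pow_le_pow_of_le_one (by norm_num) (by norm_num) hk
      _ = 1 / 2 := by norm_num
  have hhalf0 : 0 < (1 / 2 : ℝ) ^ k := by positivity
  have hq0 : 0 < q := by linarith
  have hq1 : q ≤ 1 := by linarith
  have step : ∀ (D M : ℝ), dmin ≤ D →
      (∀ w, γ * D ≤ Metric.infDist w S → u w ≤ M) →
      ∀ x, D ≤ Metric.infDist x S → u x ≤ q * M := by
    intro D M hD hM x hx
    obtain ⟨z, hz0, hzY, hzF, hz⟩ := hplan x (hD.trans hx)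
    have hDpos : 0 < D := hdmin.trans_le hD
    have hγD : 0 < γ * D := mul_pos hγ0 hDpos
    have one : ∀ i, 1 ≤ i → i ≤ k → u (z (i - 1)) ≤ (1 / 2) * u (z i) + (1 / 2) * M := by
      intro i hi1 hik
      have hzi := hz i hi1 hik
      set r := dist (z i) (z (i - 1)) with hr
      have hr0 : 0 ≤ r := dist_nonneg
      have hin : ∀ w, dist w (z i) ≤ 2 * r + 2 * ε₀ → γ * D ≤ Metric.infDist w S := by
        intro w hw
        have h1 : Metric.infDist (z i) S ≤ Metric.infDist w S + dist (z i) w :=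
          Metric.infDist_le_infDist_add_dist
        rw [dist_comm] at h1
        have h2 : γ * D ≤ γ * Metric.infDist (z 0) S := by
          rw [hz0]
          exact mul_le_mul_of_nonneg_left hx hγ0.le
        linarith
      have hRpos : 0 < 2 * r + 2 * ε₀ := by linarith
      have hMz : u (z i) ≤ M := hM _ (hin _ (by simpa using hRpos.le))
      have hc := am_cone hX hu (z := z i) (M := M) hRpos (fun w hw => hM w (hin w hw))
        (fun w hwY hw => by
          rw [hYz w hwY (hγD.trans_le (hin w hw))]
          exact hu0 _) (x := z (i - 1)) (by rw [dist_comm]; linarith)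
      rw [dist_comm, ← hr] at hc
      have h3 : (M - u (z i)) / (2 * r + 2 * ε₀) * r ≤ (M - u (z i)) / 2 := by
        rw [div_mul_eq_mul_div, div_le_iff₀ hRpos]
        nlinarith
      linarith
    have hind : ∀ j, j ≤ k → u x ≤ (1 / 2 : ℝ) ^ j * u (z j) + (1 - (1 / 2 : ℝ) ^ j) * M := by
      intro j
      induction j with
      | zero => intro _; simp [hz0]
      | succ j ih =>
        intro hj
        have h1 := ih (by omega)
        have h2 := one (j + 1) (by omega) hj
        simp only [Nat.add_sub_cancel] at h2
        have h3 := mul_le_mul_of_nonneg_left h2 (show (0 : ℝ) ≤ (1 / 2 : ℝ) ^ j by positivity)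
        rw [pow_succ]
        linarith
    have := hind k le_rfl
    rw [hu.2.1 hzY, hzF] at this
    linarith
  have iter : ∀ (n : ℕ) (D : ℝ), dmin ≤ D * γ ^ n →
      ∀ x, D ≤ Metric.infDist x S → u x ≤ q ^ (n + 1) := by
    intro n
    induction n with
    | zero =>
      intro D hD x hx
      have := step D 1 (by simpa using hD) (fun w _ => hu1 w) x hx
      simpa using this
    | succ n ih =>
      intro D hD x hx
      have hDpos : 0 < D := by
        by_contra! h
        have : D * γ ^ (n + 1) ≤ 0 := mul_nonpos_of_nonpos_of_nonneg h (by positivity)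
        linarith
      have h1 : dmin ≤ D := hD.trans
        (mul_le_of_le_one_right hDpos.le (pow_le_one₀ hγ0.le hγ1.le))
      have h2 := step D (q ^ (n + 1)) h1
        (ih (γ * D) (by rw [pow_succ] at hD; linarith)) x hx
      rw [pow_succ' q (n + 1)]
      exact h2
  intro x hx
  refine ⟨hu0 x, ?_⟩
  set d := Metric.infDist x S with hd
  set L := Real.logb γ (dmin / d) with hL
  have hpos : 0 < dmin / d := div_pos hdmin hx
  rcases lt_or_ge L 0 with hneg | hnn
  · exact (hu1 x).trans (Real.one_le_rpow_of_pos_of_le_one_of_nonpos hq0 hq1 hneg.le)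
  · have h1 : γ ^ L = dmin / d := Real.rpow_logb hγ0 hγ1.ne hpos
    have h2 : dmin ≤ d * γ ^ (⌊L⌋₊) := by
      have h3 : γ ^ L ≤ γ ^ ((⌊L⌋₊ : ℕ) : ℝ) :=
        Real.rpow_le_rpow_of_exponent_ge hγ0 hγ1.le (Nat.floor_le hnn)
      rw [h1, Real.rpow_natCast, div_le_iff₀ hx] at h3
      linarith
    refine (iter _ d h2 x le_rfl).trans ?_
    rw [← Real.rpow_natCast]
    apply Real.rpow_le_rpow_of_exponent_ge hq0 hq1
    push_cast
    exact (Nat.lt_floor_add_one L).le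


end
end

section
/- Let X be a length space and let F : Y → ℝ be defined on a nonempty subset Y ⊆ X. The following three conditions are equivalent: (1) F is uniformly continuous on Y and sup{(F(y)−F(y'))/max(1, d(y,y')) : y, y' ∈ Y} < ∞; (2) F extends to a uniformly continuous function on all of X; (3) there is a sequence of Lipschitz functions Fₙ : Y → ℝ with sup_Y |Fₙ − F| → 0 as n → ∞. -/
open Metric Set

noncomputable section

/-- Affine modulus property. -/
def AffMod {X : Type*} [MetricSpace X] (Y : Set X) (F : X → ℝ) : Prop :=
  ∀ ε : ℝ, 0 < ε → ∃ K : ℝ, 0 ≤ K ∧ ∀ y ∈ Y, ∀ y' ∈ Y, F y - F y' ≤ ε + K * dist y y'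

lemma length_step {X : Type*} [MetricSpace X] (hX : IsLengthSpace X) (x y : X) (a δ : ℝ)
    (ha : 0 < a) (hδ : 0 < δ) (h : dist x y < a + δ) : ∃ z, dist x z < δ ∧ dist z y < a := by
  by_cases hxy : dist x y < δ
  · exact ⟨y, hxy, by simpa using ha⟩
  push Not at hxy
  have h1 : (⨅ γ : Path x y, pathLength γ) < ENNReal.ofReal (a + δ) := by
    rw [← hX x y, edist_dist]
    exact (ENNReal.ofReal_lt_ofReal_iff (by positivity)).2 h
  obtain ⟨γ, hγ⟩ := iInf_lt_iff.1 h1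
  have key : ∀ t : unitInterval, edist x (γ t) + edist (γ t) y ≤ pathLength γ := by
    intro t
    have e1 : edist x (γ t) ≤ eVariationOn (fun t => γ t) (Set.Iic t) := by
      have := eVariationOn.edist_le (fun t => γ t) (s := Set.Iic t) (x := 0) (y := t)
        (show (0 : unitInterval) ≤ t from unitInterval.nonneg') (le_refl t)
      simpa using this
    have e2 : edist (γ t) y ≤ eVariationOn (fun t => γ t) (Set.Ici t) := by
      have := eVariationOn.edist_le (fun t => γ t) (s := Set.Ici t) (x := t) (y := 1)
        (le_refl t) (show t ≤ 1 from unitInterval.le_one')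
      simpa using this
    refine (add_le_add e1 e2).trans ((eVariationOn.add_le_union _ ?_).trans
      (eVariationOn.mono _ (Set.subset_univ _)))
    intro u hu v hv
    exact le_trans hu hv
  have hfin : pathLength γ ≠ ⊤ := ne_top_of_lt hγ
  set L := (pathLength γ).toReal with hL
  have hL1 : L < a + δ := by
    have := (ENNReal.toReal_lt_toReal hfin ENNReal.ofReal_ne_top).2 hγ
    rwa [ENNReal.toReal_ofReal (by positivity)] at this
  have key' : ∀ t : unitInterval, dist x (γ t) + dist (γ t) y ≤ L := by
    intro t
    have := ENNReal.toReal_mono hfin (key t)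
    rwa [ENNReal.toReal_add (edist_ne_top _ _) (edist_ne_top _ _), edist_dist, edist_dist,
      ENNReal.toReal_ofReal dist_nonneg, ENNReal.toReal_ofReal dist_nonneg] at this
  obtain ⟨c, hc1, hc2⟩ : ∃ c, max 0 (L - a) < c ∧ c < δ :=
    exists_between (max_lt hδ (by linarith))
  have hc0 := (max_lt_iff.1 hc1).1
  have hc3 := (max_lt_iff.1 hc1).2
  have hcont : Continuous (fun t : unitInterval => dist x (γ t)) := by fun_prop
  have hmem : c ∈ Set.Icc (dist x (γ 0)) (dist x (γ 1)) := by
    simp only [Path.source, Path.target, dist_self]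
    exact ⟨hc0.le, by linarith⟩
  obtain ⟨t, ht⟩ := mem_range_of_exists_le_of_exists_ge hcont ⟨0, hmem.1⟩ ⟨1, hmem.2⟩
  simp only at ht
  refine ⟨γ t, by linarith, ?_⟩
  have := key' t
  linarith

lemma affMod_of_uc {X : Type*} [MetricSpace X] (hX : IsLengthSpace X) (G : X → ℝ)
    (hG : UniformContinuous G) : AffMod Set.univ G := by
  intro ε hε
  obtain ⟨δ, hδ, h⟩ := Metric.uniformContinuous_iff.1 hG ε hε
  have chain : ∀ n : ℕ, ∀ x y : X, dist x y < (n + 1) * δ → G x - G y ≤ (n + 1) * ε := by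
    intro n
    induction n with
    | zero =>
      intro x y hxy
      have := h (a := x) (b := y) (by simpa using hxy)
      rw [Real.dist_eq] at this
      have := le_abs_self (G x - G y)
      simp only [Nat.cast_zero]
      linarith
    | succ n ih =>
      intro x y hxy
      push_cast at hxy ⊢
      obtain ⟨z, h1, h2⟩ := length_step hX x y ((n + 1) * δ) δ (by positivity) hδ (by linarith)
      have h3 := h h1
      rw [Real.dist_eq] at h3
      have h4 := le_abs_self (G x - G z)
      have h5 := ih z y h2
      linarith
  refine ⟨ε / δ, by positivity, fun x _ y _ => ?_⟩
  have h1 := chain ⌊dist x y / δ⌋₊ x y (by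
    have := Nat.lt_floor_add_one (dist x y / δ)
    rwa [div_lt_iff₀ hδ] at this)
  have h2 := Nat.floor_le (a := dist x y / δ) (by positivity)
  have h3 : ε / δ * dist x y = dist x y / δ * ε := by ring
  rw [h3]
  nlinarith

lemma affMod_of_one {X : Type*} [MetricSpace X] (Y : Set X) (F : X → ℝ)
    (hF : UniformContinuousOn F Y) (M : ℝ)
    (hM : ∀ y ∈ Y, ∀ y' ∈ Y, (F y - F y') / max 1 (dist y y') ≤ M) : AffMod Y F := by
  intro ε hε
  obtain ⟨δ, hδ, h⟩ := Metric.uniformContinuousOn_iff.1 hF ε hε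
  refine ⟨|M| * (1 / δ + 1), by positivity, fun y hy y' hy' => ?_⟩
  by_cases hd : dist y y' < δ
  · have h1 := h y hy y' hy' hd
    rw [Real.dist_eq] at h1
    have := le_abs_self (F y - F y')
    have : 0 ≤ |M| * (1 / δ + 1) * dist y y' := by positivity
    linarith
  · push Not at hd
    have h1 := hM y hy y' hy'
    rw [div_le_iff₀ (by positivity)] at h1
    have h2 : M * max 1 (dist y y') ≤ |M| * max 1 (dist y y') := by
      gcongr; exact le_abs_self M
    have h3 : max 1 (dist y y') ≤ (1 / δ + 1) * dist y y' := by
      have : 1 ≤ 1 / δ * dist y y' := by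
        rw [one_div_mul_eq_div, le_div_iff₀ hδ]; linarith
      have h0 : 0 ≤ dist y y' := dist_nonneg
      apply max_le <;> nlinarith
    have h4 := mul_le_mul_of_nonneg_left h3 (abs_nonneg M)
    linarith

lemma one_of_affMod {X : Type*} [MetricSpace X] (Y : Set X) (F : X → ℝ) (h : AffMod Y F) :
    UniformContinuousOn F Y ∧
        ∃ M : ℝ, ∀ y ∈ Y, ∀ y' ∈ Y, (F y - F y') / max 1 (dist y y') ≤ M := by
  constructor
  · rw [Metric.uniformContinuousOn_iff]
    intro ε hε
    obtain ⟨K, hK, hh⟩ := h (ε / 2) (by positivity)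
    refine ⟨ε / (2 * (K + 1)), by positivity, fun x hx y hy hxy => ?_⟩
    rw [lt_div_iff₀ (by positivity)] at hxy
    have h1 := hh x hx y hy
    have h2 := hh y hy x hx
    rw [dist_comm y x] at h2
    have h0 : 0 ≤ dist x y := dist_nonneg
    rw [Real.dist_eq, abs_lt]
    constructor <;> nlinarith
  · obtain ⟨K, hK, hh⟩ := h 1 one_pos
    refine ⟨1 + K, fun y hy y' hy' => ?_⟩
    rw [div_le_iff₀ (by positivity)]
    have h1 := hh y hy y' hy'
    have h2 := le_max_left 1 (dist y y')
    have h3 := le_max_right 1 (dist y y')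
    nlinarith

lemma ext_of_affMod {X : Type*} [MetricSpace X] (Y : Set X) (hY : Y.Nonempty) (F : X → ℝ)
    (h : AffMod Y F) : ∃ G : X → ℝ, UniformContinuous G ∧ Set.EqOn G F Y := by
  choose! K hK0 hK using h
  let g : X → (Y × {e : ℝ // 0 < e}) → ℝ := fun x p => F p.1 + p.2 + K p.2 * dist x p.1
  have hne : Nonempty (Y × {e : ℝ // 0 < e}) := ⟨(⟨_, hY.some_mem⟩, ⟨1, one_pos⟩)⟩
  have hbd : ∀ x, BddBelow (Set.range (g x)) := by
    intro x
    obtain ⟨y0, hy0⟩ := hY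
    refine ⟨F y0 - 1 - K 1 * dist x y0, ?_⟩
    rintro _ ⟨⟨⟨y, hy⟩, ⟨e, he⟩⟩, rfl⟩
    simp only [g]
    have h0 := hK0 1 one_pos
    have h0' := hK0 e he
    have t1 : dist y0 y ≤ dist x y0 + dist x y := by
      rw [dist_comm x y0]; exact dist_triangle _ _ _
    have d1 : 0 ≤ dist x y := dist_nonneg
    have d2 : 0 ≤ dist x y0 := dist_nonneg
    rcases le_total (K e) (K 1) with hle | hle
    · have h1 := hK e he y0 hy0 y hy
      nlinarith [mul_le_mul_of_nonneg_left t1 h0', mul_le_mul_of_nonneg_right hle d2]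
    · have h1 := hK 1 one_pos y0 hy0 y hy
      nlinarith [mul_le_mul_of_nonneg_left t1 h0, mul_le_mul_of_nonneg_right hle d1]
  have main : ∀ e, 0 < e → ∀ x x', (⨅ p, g x p) ≤ (⨅ p, g x' p) + (e + K e * dist x x') := by
    intro e he x x'
    rw [← sub_le_iff_le_add]
    refine le_ciInf ?_
    rintro ⟨⟨y, hy⟩, ⟨e', he'⟩⟩
    rw [sub_le_iff_le_add]
    have t : dist x y ≤ dist x x' + dist x' y := dist_triangle _ _ _
    have h0 := hK0 e he
    have h0' := hK0 e' he'
    have d1 : 0 ≤ dist x' y := dist_nonneg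
    have d2 : 0 ≤ dist x x' := dist_nonneg
    rcases le_total (K e) (K e') with hle | hle
    · refine (ciInf_le (hbd x) (⟨y, hy⟩, ⟨e, he⟩)).trans ?_
      simp only [g]
      nlinarith [mul_le_mul_of_nonneg_left t h0, mul_le_mul_of_nonneg_right hle d1]
    · refine (ciInf_le (hbd x) (⟨y, hy⟩, ⟨e', he'⟩)).trans ?_
      simp only [g]
      nlinarith [mul_le_mul_of_nonneg_left t h0', mul_le_mul_of_nonneg_right hle d2]
  refine ⟨fun x => ⨅ p, g x p, ?_, ?_⟩
  · have hA : AffMod Set.univ (fun x => ⨅ p, g x p) := fun e he =>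
      ⟨K e, hK0 e he, fun x _ x' _ => by linarith [main e he x x']⟩
    exact uniformContinuousOn_univ.1 (one_of_affMod _ _ hA).1
  · intro x hx
    apply le_antisymm
    · refine le_of_forall_pos_le_add fun e he => ?_
      refine (ciInf_le (hbd x) (⟨x, hx⟩, ⟨e, he⟩)).trans ?_
      simp [g]
    · refine le_ciInf ?_
      rintro ⟨⟨y, hy⟩, ⟨e, he⟩⟩
      simp only [g]
      linarith [hK e he x hx y hy]

lemma lip_of_affMod {X : Type*} [MetricSpace X] (Y : Set X) (hY : Y.Nonempty) (F : X → ℝ)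
    (h : AffMod Y F) (e : ℝ) (he : 0 < e) : ∃ G : X → ℝ,
      (∃ K : NNReal, LipschitzOnWith K G Y) ∧ ∀ x ∈ Y, |F x - G x| ≤ e := by
  obtain ⟨K, hK0, hK⟩ := h e he
  have hne : Nonempty Y := hY.to_subtype
  have hbd : ∀ x ∈ Y, BddBelow (Set.range fun p : Y => F p + K * dist x p) := by
    intro x hx
    refine ⟨F x - e, ?_⟩
    rintro _ ⟨⟨y, hy⟩, rfl⟩
    linarith [hK x hx y hy]
  refine ⟨fun x => ⨅ p : Y, (F p + K * dist x p), ⟨K.toNNReal, ?_⟩, ?_⟩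
  · refine LipschitzOnWith.of_le_add_mul _ fun x hx x' hx' => ?_
    rw [← sub_le_iff_le_add]
    refine le_ciInf fun p => ?_
    have h1 := ciInf_le (hbd x hx) p
    have h2 := mul_le_mul_of_nonneg_left (dist_triangle x x' p) hK0
    rw [Real.coe_toNNReal K hK0]
    linarith
  · intro x hx
    have h1 := ciInf_le (hbd x hx) ⟨x, hx⟩
    have h2 : F x - e ≤ ⨅ p : Y, (F p + K * dist x p) :=
      le_ciInf fun p => by linarith [hK x hx p p.2]
    simp only [dist_self, mul_zero, add_zero] at h1
    rw [abs_le]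
    constructor <;> linarith

lemma three_of_affMod {X : Type*} [MetricSpace X] (Y : Set X) (hY : Y.Nonempty) (F : X → ℝ)
    (h : AffMod Y F) : ∃ Fseq : ℕ → X → ℝ,
        (∀ m : ℕ, ∃ K : NNReal, LipschitzOnWith K (Fseq m) Y) ∧
        TendstoUniformlyOn Fseq F Filter.atTop Y := by
  choose G hG1 hG2 using fun n : ℕ =>
    lip_of_affMod Y hY F h (1 / ((n : ℝ) + 1)) (by positivity)
  refine ⟨G, hG1, ?_⟩
  rw [Metric.tendstoUniformlyOn_iff]
  intro ε hε
  have := (tendsto_one_div_add_atTop_nhds_zero_nat (𝕜 := ℝ)).eventually_lt_const hε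
  filter_upwards [this] with n hn x hx
  rw [Real.dist_eq]
  exact (hG2 n x hx).trans_lt hn

lemma affMod_of_three {X : Type*} [MetricSpace X] (Y : Set X) (F : X → ℝ)
    (Fseq : ℕ → X → ℝ) (h1 : ∀ m : ℕ, ∃ K : NNReal, LipschitzOnWith K (Fseq m) Y)
    (h2 : TendstoUniformlyOn Fseq F Filter.atTop Y) : AffMod Y F := by
  intro e he
  obtain ⟨n, hn⟩ := (Metric.tendstoUniformlyOn_iff.1 h2 (e / 2) (by positivity)).exists
  obtain ⟨K, hK⟩ := h1 n
  refine ⟨K, K.2, fun y hy y' hy' => ?_⟩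
  have a := hn y hy
  have b := hn y' hy'
  have c := hK.dist_le_mul y hy y' hy'
  rw [Real.dist_eq] at a b c
  have := (abs_lt.1 a).2
  have := (abs_lt.1 b).1
  have := (abs_le.1 c).2
  linarith

/-- For `F` defined on a nonempty subset `Y` of a length space `X`, the following are
equivalent: (1) `F` is uniformly continuous on `Y` and
`sup {(F y - F y') / max 1 (d(y,y'))} < ∞`; (2) `F` extends to a uniformly continuous
function on `X`; (3) `F` is a uniform limit on `Y` of Lipschitz functions. -/
theorem stmt10 {X : Type*} [MetricSpace X] (hX : IsLengthSpace X)
    (Y : Set X) (hY : Y.Nonempty) (F : X → ℝ) :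
    ((UniformContinuousOn F Y ∧
        ∃ M : ℝ, ∀ y ∈ Y, ∀ y' ∈ Y, (F y - F y') / max 1 (dist y y') ≤ M) ↔
      ∃ G : X → ℝ, UniformContinuous G ∧ Set.EqOn G F Y) ∧
    ((∃ G : X → ℝ, UniformContinuous G ∧ Set.EqOn G F Y) ↔
      ∃ Fseq : ℕ → X → ℝ,
        (∀ m : ℕ, ∃ K : NNReal, LipschitzOnWith K (Fseq m) Y) ∧
        TendstoUniformlyOn Fseq F Filter.atTop Y) := by
  have h21 : (∃ G : X → ℝ, UniformContinuous G ∧ Set.EqOn G F Y) → AffMod Y F := by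
    rintro ⟨G, hG, hGF⟩ e he
    obtain ⟨K, hK0, hK⟩ := affMod_of_uc hX G hG e he
    refine ⟨K, hK0, fun y hy y' hy' => ?_⟩
    rw [← hGF hy, ← hGF hy']
    exact hK y trivial y' trivial
  refine ⟨⟨?_, fun h => one_of_affMod Y F (h21 h)⟩,
    ⟨fun h => three_of_affMod Y hY F (h21 h), ?_⟩⟩
  · rintro ⟨hF, M, hM⟩
    exact ext_of_affMod Y hY F (affMod_of_one Y F hF M hM)
  · rintro ⟨Fseq, h1, h2⟩
    exact ext_of_affMod Y hY F (affMod_of_three Y F Fseq h1 h2)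

end
end
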